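/- Let μ be a finite Borel measure on ℝⁿ, m ∈ {0,…,n−1}, 0 < α ≤ 1, and let t = t(α/2), q = q(n−m, α/(2t)), K = K(n,m,α) and c > 0 be constants as in the Erdős–Füredi lemma, the cone-separation lemma, and the Grassmannian discretization. Suppose that for μ-almost every x there are arbitrarily small r > 0 and a collection ℬ of sub-balls of B(x,r) such that: (1) the balls {2tB : B ∈ ℬ} are pairwise disjoint; (2) μ(B) > c·μ(B(x,3r)) for all B ∈ ℬ; (3) for every ℬ' ⊂ ℬ with #ℬ' ≥ #ℬ/K and every V ∈ G(n,n−m), some translate of V intersects at least q balls of ℬ'. Then limsup_{r↓0} inf_{θ ∈ S^{n-1}, V ∈ G(n,n−m)} μ(X(x,r,V,α) \ H(x,θ,α)) / μ(B(x,r)) > c for μ-almost every x. -/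

import Mathlib

open MeasureTheory Metric Filter Set
open scoped RealInnerProductSpace ENNReal Classical

/-- The almost half-space `H(x,θ,α) = {y : (y-x)·θ > α|y-x|}`. -/
def almostHalfSpace {n : ℕ} (x θ : EuclideanSpace ℝ (Fin n)) (α : ℝ) :
    Set (EuclideanSpace ℝ (Fin n)) :=
  {y | α * ‖y - x‖ < ⟪y - x, θ⟫}

/-- The one-sided open cone `X⁺(x,θ,α) = {y : (y-x)·θ > (1-α²)^{1/2}|y-x|}`. -/
def oneSidedCone {n : ℕ} (x θ : EuclideanSpace ℝ (Fin n)) (α : ℝ) :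
    Set (EuclideanSpace ℝ (Fin n)) :=
  {y | Real.sqrt (1 - α ^ 2) * ‖y - x‖ < ⟪y - x, θ⟫}

/-- The two-sided cone `X(x,V,α) = {y : dist(y-x,V) < α|y-x|}`. -/
def coneX {n : ℕ} (x : EuclideanSpace ℝ (Fin n))
    (V : Submodule ℝ (EuclideanSpace ℝ (Fin n))) (α : ℝ) :
    Set (EuclideanSpace ℝ (Fin n)) :=
  {y | infDist (y - x) (V : Set (EuclideanSpace ℝ (Fin n))) < α * ‖y - x‖}

/-!
Suppose that the conclusion fails for some `c' > c`, and let `A` be the set of points whose cone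
densities stay below `c'` at all small scales. Near a density point of `A`, every ball of a suitable
collection `ℬ` contains a point of `A`, and at each scale this point has a cone which, outside some
half-space, carries little measure. As each ball of `ℬ` has more than a proportion `c` of the total
mass, such a cone outside its half-space cannot contain much more than one ball.

If `n - m ≥ 2`, then `c' = 2 * c` works. By pigeonhole over the net of cones, a proportion `1 / K`
of the balls may use the same plane `W`, and `q` of these balls meet a common translate of `W`. The
relation that `B'` lies in the cone at `B` but not in its half-space has out-degree at most one, so
at least a third of the `q` balls are pairwise unrelated. Replacing each of them by a tiny triangle
recovers `q` points, among which the Erdős–Füredi lemma finds a point that sees two others in nearly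
opposite directions. They belong to different balls, and a half-space contains at most one of them.

If `n - m = 1`, a ball between two others on a line sees one of the two outside its half-space,
which only gives the constant `c` itself. For `n = 1`, cutting the middle ball into pieces of
positive mass gains `c / 8`. For `n ≥ 2`, spheres are null sets, and comparing cone masses at many
scales shows that, if nothing is gained, the ball seen is extremal among all balls in the direction
of the line, so at most two balls can be seen in this way along each line direction. On the other
hand, average over a random line: the mass `g φ` of a double cone of half-angle `φ` is a convex
function of `φ`, the existence of the net bounds `K * g` from below, and the Caro–Wei bound for the
graph of pairs of balls aligned with the line bounds the number of balls from below. Together they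
yield a direction with so many balls whose cones contain the line that three of them, none of the
two exceptional ones, lie on a common line.
-/

section

open Real InnerProductGeometry

section Angle

variable {E : Type*} [NormedAddCommGroup E] [InnerProductSpace ℝ E]

lemma angle_lt_iff_cos_mul_lt_inner {x y : E} (hx : x ≠ 0) (hy : y ≠ 0) {φ : ℝ} (h0 : 0 ≤ φ)
    (hπ : φ ≤ π) : angle x y < φ ↔ cos φ * (‖x‖ * ‖y‖) < ⟪x, y⟫ := by
  have hxy : 0 < ‖x‖ * ‖y‖ := mul_pos (norm_pos_iff.2 hx) (norm_pos_iff.2 hy)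
  rw [← cos_angle_mul_norm_mul_norm, mul_lt_mul_iff_left₀ hxy]
  exact (strictAntiOn_cos.lt_iff_gt ⟨h0, hπ⟩ ⟨angle_nonneg x y, angle_le_pi x y⟩).symm

lemma angle_le_iff_cos_mul_le_inner {x y : E} (hx : x ≠ 0) (hy : y ≠ 0) {φ : ℝ} (h0 : 0 ≤ φ)
    (hπ : φ ≤ π) : angle x y ≤ φ ↔ cos φ * (‖x‖ * ‖y‖) ≤ ⟪x, y⟫ := by
  have hxy : 0 < ‖x‖ * ‖y‖ := mul_pos (norm_pos_iff.2 hx) (norm_pos_iff.2 hy)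
  rw [← cos_angle_mul_norm_mul_norm, mul_le_mul_iff_left₀ hxy]
  exact (strictAntiOn_cos.le_iff_ge ⟨h0, hπ⟩ ⟨angle_nonneg x y, angle_le_pi x y⟩).symm

lemma cos_mul_le_inner_of_angle_le {x y : E} {φ : ℝ} (hπ : φ ≤ π) (h : angle x y ≤ φ) :
    cos φ * (‖x‖ * ‖y‖) ≤ ⟪x, y⟫ := by
  rw [← cos_angle_mul_norm_mul_norm]
  gcongr
  exact cos_le_cos_of_nonneg_of_le_pi (angle_nonneg x y) hπ h

lemma angle_le_arcsin_of_norm_sub_le {u w : E} {s : ℝ} (hs0 : 0 ≤ s) (hs1 : s < 1) (hw : w ≠ 0)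
    (h : ‖u - w‖ ≤ s * ‖w‖) : u ≠ 0 ∧ angle u w ≤ arcsin s := by
  have hw' : 0 < ‖w‖ := norm_pos_iff.2 hw
  have hu : u ≠ 0 := by
    rintro rfl
    rw [zero_sub, norm_neg] at h
    nlinarith
  refine ⟨hu, (angle_le_iff_cos_mul_le_inner hu hw (arcsin_nonneg.2 hs0) ?_).2 ?_⟩
  · linarith [arcsin_le_pi_div_two s, pi_pos]
  have hsq : ‖u - w‖ ^ 2 ≤ s ^ 2 * ‖w‖ ^ 2 := by
    rw [← mul_pow]
    exact pow_le_pow_left₀ (norm_nonneg _) h 2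
  have hcos : √(1 - s ^ 2) ^ 2 = 1 - s ^ 2 := sq_sqrt (by nlinarith)
  rw [cos_arcsin]
  nlinarith [sq_nonneg (‖u‖ - √(1 - s ^ 2) * ‖w‖), norm_sub_sq_real u w]

lemma dist_inner_div_norm_sq_smul {u w : E} (hw : w ≠ 0) :
    dist u ((⟪u, w⟫ / ‖w‖ ^ 2) • w) = sin (angle u w) * ‖u‖ := by
  have : 0 < ‖w‖ := norm_pos_iff.2 hw
  have : 0 ≤ sin (angle u w) :=
    sin_nonneg_of_nonneg_of_le_pi (angle_nonneg u w) (angle_le_pi u w)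
  rw [dist_eq_norm, ← sq_eq_sq₀ (norm_nonneg _) (by positivity), norm_sub_sq_real, norm_smul,
    inner_smul_right, mul_pow, mul_pow, sin_sq, Real.norm_eq_abs, sq_abs,
    ← cos_angle_mul_norm_mul_norm u w]
  field_simp
  ring

lemma infDist_lt_sin_mul_norm {V : Submodule ℝ E} {u w : E} (hu : u ≠ 0) (hw : w ∈ V)
    (hw0 : w ≠ 0) {φ : ℝ} (hφ : φ ≤ π / 2) (h : angle u w < φ) :
    infDist u (V : Set E) < sin φ * ‖u‖ := by
  have : 0 < ‖u‖ := norm_pos_iff.2 hu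
  have hsin : sin (angle u w) < sin φ :=
    sin_lt_sin_of_lt_of_le_pi_div_two (by linarith [pi_pos, angle_nonneg u w]) hφ h
  calc infDist u (V : Set E) ≤ dist u ((⟪u, w⟫ / ‖w‖ ^ 2) • w) :=
        infDist_le_dist_of_mem (V.smul_mem _ hw)
    _ = sin (angle u w) * ‖u‖ := dist_inner_div_norm_sq_smul hw0
    _ < sin φ * ‖u‖ := by gcongr

/-- The balls `B = (centre, radius)` and `B'` are seen from each other under a small angle: the
direction from a point of `B` to a point of `B'` deviates by at most `β` from the direction between
the centres. -/
def AngularlySeparated (β : ℝ) (B B' : E × ℝ) : Prop :=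
  ∀ p ∈ closedBall B.1 B.2, ∀ p' ∈ closedBall B'.1 B'.2,
    p' - p ≠ 0 ∧ angle (p' - p) (B'.1 - B.1) ≤ β

lemma AngularlySeparated.symm {β : ℝ} {B B' : E × ℝ} (h : AngularlySeparated β B B') :
    AngularlySeparated β B' B := by
  intro p hp p' hp'
  obtain ⟨hne, hle⟩ := h p' hp' p hp
  refine ⟨sub_ne_zero.2 (sub_ne_zero.1 hne).symm, ?_⟩
  rwa [← neg_sub p p', ← neg_sub B'.1 B.1, angle_neg_neg]

lemma AngularlySeparated.angle_sub_le {β : ℝ} {B B' : E × ℝ} (h : AngularlySeparated β B B')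
    {p y p' z : E} (hp : p ∈ closedBall B.1 B.2) (hy : y ∈ closedBall B.1 B.2)
    (hp' : p' ∈ closedBall B'.1 B'.2) (hz : z ∈ closedBall B'.1 B'.2) :
    angle (z - y) (p' - p) ≤ 2 * β := by
  have hzy := (h y hy z hz).2
  have hpp := (h p hp p' hp').2
  rw [angle_comm] at hpp
  linarith [angle_le_angle_add_angle (z - y) (B'.1 - B.1) (p' - p)]

lemma angularlySeparated_of_disjoint {t : ℝ} (ht : 1 ≤ t) {B B' : E × ℝ} (hr : 0 < B.2)
    (hr' : 0 < B'.2)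
    (h : Disjoint (closedBall B.1 (2 * t * B.2)) (closedBall B'.1 (2 * t * B'.2))) :
    AngularlySeparated (arcsin (1 / (2 * t))) B B' := by
  intro p hp p' hp'
  rw [disjoint_closedBall_closedBall_iff (by positivity) (by positivity), dist_comm,
    dist_eq_norm] at h
  have hne : B'.1 - B.1 ≠ 0 := norm_pos_iff.1 (lt_of_le_of_lt (by positivity) h)
  refine angle_le_arcsin_of_norm_sub_le (by positivity) ?_ hne ?_
  · rw [div_lt_one (by positivity)]
    linarith
  rw [mem_closedBall, dist_eq_norm] at hp hp'
  calc ‖p' - p - (B'.1 - B.1)‖ = ‖(p' - B'.1) - (p - B.1)‖ := by congr 1; abel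
    _ ≤ B'.2 + B.2 := (norm_sub_le _ _).trans (add_le_add hp' hp)
    _ ≤ 1 / (2 * t) * ‖B'.1 - B.1‖ := by
        rw [div_mul_eq_mul_div, one_mul, le_div_iff₀ (by positivity)]
        linarith

end Angle

section Cones

variable {n : ℕ} {y z θ : EuclideanSpace ℝ (Fin n)} {α : ℝ}

lemma angle_lt_of_mem_almostHalfSpace (hθ : ‖θ‖ = 1) (hα0 : 0 < α) (hα1 : α ≤ 1)
    (h : z ∈ almostHalfSpace y θ α) : angle (z - y) θ < π / 2 - arcsin α := by
  simp only [almostHalfSpace, mem_ofPred_eq] at h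
  have hz : z - y ≠ 0 := by
    intro hz
    simp [hz] at h
  have hθ0 : θ ≠ 0 := norm_ne_zero_iff.1 (hθ ▸ one_ne_zero)
  refine (angle_lt_iff_cos_mul_lt_inner hz hθ0 (by linarith [arcsin_le_pi_div_two α])
    (by linarith [arcsin_nonneg.2 hα0.le, pi_pos])).2 ?_
  rwa [cos_pi_div_two_sub, sin_arcsin (by linarith) hα1, hθ, mul_one]

lemma mem_coneX_of_angle_lt {v : EuclideanSpace ℝ (Fin n)}
    {V : Submodule ℝ (EuclideanSpace ℝ (Fin n))} (hv : v ∈ V) (hv0 : v ≠ 0) (hzy : z - y ≠ 0)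
    (hα0 : 0 < α) (hα1 : α ≤ 1) (h : angle (z - y) v < arcsin α) : z ∈ coneX y V α := by
  have := infDist_lt_sin_mul_norm hzy hv hv0 (arcsin_le_pi_div_two α) h
  rwa [sin_arcsin (by linarith) hα1] at this

lemma angle_lt_of_mem_oneSidedCone (hθ : ‖θ‖ = 1) (hα0 : 0 < α)
    (h : z ∈ oneSidedCone y θ α) : z - y ≠ 0 ∧ angle (z - y) θ < arcsin α := by
  simp only [oneSidedCone, mem_ofPred_eq] at h
  have hz : z - y ≠ 0 := by
    intro hz
    simp [hz] at h
  have hθ0 : θ ≠ 0 := norm_ne_zero_iff.1 (hθ ▸ one_ne_zero)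
  refine ⟨hz, (angle_lt_iff_cos_mul_lt_inner hz hθ0 (arcsin_nonneg.2 hα0.le)
    (by linarith [arcsin_le_pi_div_two α, pi_pos])).2 ?_⟩
  rwa [cos_arcsin, hθ, mul_one]

end Cones

section SeparationConstant

/-- `t` is admissible as the constant `t(α/2)` of the cone-separation lemma: if the balls dilated by
`t` are disjoint and the centre `y₀` lies in the narrow cone at `x₀`, then the whole ball around
`y₀` lies in the wide cone at each point of the ball around `x₀`. -/
def ConeSeparation (α t : ℝ) : Prop :=
  ∀ (N : ℕ) (x₀ y₀ : EuclideanSpace ℝ (Fin N)) (r_x r_y : ℝ), 0 < r_x → 0 < r_y →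
    Disjoint (closedBall x₀ (t * r_x)) (closedBall y₀ (t * r_y)) →
    ∀ θ : EuclideanSpace ℝ (Fin N), ‖θ‖ = 1 → y₀ ∈ oneSidedCone x₀ θ ((α / 2) / t) →
      ∀ x ∈ closedBall x₀ r_x, closedBall y₀ r_y ⊆ oneSidedCone x θ (α / 2)

/-- The point of the Euclidean plane with polar coordinates `(ρ, φ)`. -/
noncomputable def polarPoint (ρ φ : ℝ) : EuclideanSpace ℝ (Fin 2) :=
  !₂[ρ * cos φ, ρ * sin φ]

lemma inner_polarPoint (ρ φ ρ' φ' : ℝ) :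
    ⟪polarPoint ρ φ, polarPoint ρ' φ'⟫ = ρ * ρ' * cos (φ - φ') := by
  simp only [polarPoint, PiLp.inner_apply, Fin.sum_univ_two, cos_sub]
  simp
  ring

lemma norm_polarPoint {ρ : ℝ} (hρ : 0 ≤ ρ) (φ : ℝ) : ‖polarPoint ρ φ‖ = ρ := by
  rw [norm_eq_sqrt_real_inner, inner_polarPoint, sub_self, cos_zero, mul_one, sqrt_mul_self hρ]

/-- The tangent line from the origin to the unit ball around `polarPoint T φ` makes the angle
`φ + arcsin (1 / T)` with the axis and touches the ball at distance `T * cos (arcsin (1 / T))`. -/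
lemma dist_polarPoint_tangent {T : ℝ} (hT : 1 < T) (φ : ℝ) :
    dist (polarPoint (T * cos (arcsin (1 / T))) (φ + arcsin (1 / T))) (polarPoint T φ) = 1 := by
  have hT1 : 1 / T ≤ 1 := by rw [div_le_one (by linarith)]; exact hT.le
  have hcos : 0 ≤ cos (arcsin (1 / T)) := cos_arcsin_nonneg _
  have hsin : T * sin (arcsin (1 / T)) = 1 := by
    rw [sin_arcsin (by linarith [show 0 < 1 / T by positivity]) hT1]
    field_simp
  rw [dist_eq_norm, ← sq_eq_sq₀ (norm_nonneg _) zero_le_one, norm_sub_sq_real, inner_polarPoint,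
    norm_polarPoint (by positivity), norm_polarPoint (by positivity), add_sub_cancel_left]
  linear_combination (-T ^ 2) * sin_sq_add_cos_sq (arcsin (1 / T)) +
    (T * sin (arcsin (1 / T)) + 1) * hsin

variable {α t : ℝ}

lemma add_arcsin_le_of_coneSeparation (hα0 : 0 < α) (ht1 : 1 ≤ t) (ht : ConeSeparation α t)
    {φ T : ℝ} (hφ0 : 0 ≤ φ) (hφ : φ < arcsin (α / (2 * t))) (hT : t < T) :
    φ + arcsin (1 / T) ≤ arcsin (α / 2) := by
  have hT0 : 0 < T := by linarith
  have h1T : 1 / T < 1 := by rw [div_lt_one hT0]; linarith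
  set η := arcsin (1 / T)
  have hηlt : η < π / 2 := arcsin_lt_pi_div_two.2 h1T
  have hηpos : 0 < η := arcsin_pos.2 (by positivity)
  have hcosη : 0 < cos η := cos_pos_of_mem_Ioo ⟨by linarith, hηlt⟩
  have hφlt : φ < π / 2 := hφ.trans_le (arcsin_le_pi_div_two _)
  have hrad : 0 < (T - t) / (2 * t) := div_pos (by linarith) (by linarith)
  have hdisj : Disjoint (closedBall (0 : EuclideanSpace ℝ (Fin 2)) (t * ((T - t) / (2 * t))))
      (closedBall (polarPoint T φ) (t * 1)) := by
    rw [disjoint_closedBall_closedBall_iff (by positivity) (by linarith), dist_eq_norm, zero_sub,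
      norm_neg, norm_polarPoint hT0.le, show t * ((T - t) / (2 * t)) = (T - t) / 2 by field_simp]
    linarith
  have hcone : polarPoint T φ ∈ oneSidedCone 0 (polarPoint 1 0) (α / 2 / t) := by
    simp only [oneSidedCone, mem_ofPred_eq, sub_zero, inner_polarPoint, norm_polarPoint hT0.le]
    rw [div_div, ← cos_arcsin, mul_one, mul_comm]
    gcongr
    exact cos_lt_cos_of_nonneg_of_le_pi_div_two hφ0 (arcsin_le_pi_div_two _) hφ
  have htangent : polarPoint (T * cos η) (φ + η) ∈ oneSidedCone 0 (polarPoint 1 0) (α / 2) :=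
    ht 2 0 _ _ 1 hrad one_pos hdisj _ (norm_polarPoint zero_le_one 0) hcone 0
      (mem_closedBall_self hrad.le) (mem_closedBall.2 (dist_polarPoint_tangent (by linarith) φ).le)
  simp only [oneSidedCone, mem_ofPred_eq, sub_zero, inner_polarPoint, mul_one,
    norm_polarPoint (mul_pos hT0 hcosη).le] at htangent
  rw [← cos_arcsin, mul_comm, mul_lt_mul_iff_right₀ (mul_pos hT0 hcosη)] at htangent
  exact ((strictAntiOn_cos.lt_iff_gt ⟨arcsin_nonneg.2 (by positivity), by
    linarith [arcsin_le_pi_div_two (α / 2)]⟩ ⟨by positivity, by linarith⟩).1 htangent).le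

lemma arcsin_add_arcsin_le_of_coneSeparation (hα0 : 0 < α) (ht1 : 1 ≤ t)
    (ht : ConeSeparation α t) :
    arcsin (α / (2 * t)) + arcsin (1 / t) ≤ arcsin (α / 2) := by
  have hσ : 0 < arcsin (α / (2 * t)) := arcsin_pos.2 (by positivity)
  have hlim : Tendsto (fun u : ℝ => u * arcsin (α / (2 * t)) + arcsin (1 / (t / u)))
      (nhdsWithin 1 (Iio 1)) (nhds (1 * arcsin (α / (2 * t)) + arcsin (1 / (t / 1)))) := by
    have hcont : ContinuousAt (fun u : ℝ => u * arcsin (α / (2 * t)) + arcsin (1 / (t / u))) 1 := by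
      fun_prop (disch := first | exact one_ne_zero | (rw [div_one]; linarith))
    exact hcont.tendsto.mono_left nhdsWithin_le_nhds
  rw [one_mul, div_one] at hlim
  refine le_of_tendsto hlim ?_
  filter_upwards [Ioo_mem_nhdsLT (zero_lt_one' ℝ)] with u ⟨hu0, hu1⟩
  refine add_arcsin_le_of_coneSeparation hα0 ht1 ht (by positivity) ?_ ?_
  · exact mul_lt_of_lt_one_left hσ hu1
  · rw [lt_div_iff₀ hu0]
    exact mul_lt_of_lt_one_right (by linarith) hu1

end SeparationConstant

section Arcsin

lemma self_le_arcsin {x : ℝ} (h0 : 0 ≤ x) (h1 : x ≤ 1) : x ≤ arcsin x := by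
  simpa [sin_arcsin (by linarith) h1] using sin_le (arcsin_nonneg.2 h0)

lemma arcsin_le_pi_div_six {x : ℝ} (h : x ≤ 1 / 2) : arcsin x ≤ π / 6 := by
  rw [← arcsin_sin (x := π / 6) (by linarith [pi_pos]) (by linarith [pi_pos]), sin_pi_div_six]
  exact arcsin_le_arcsin h

lemma two_mul_arcsin_le {x : ℝ} (h0 : 0 ≤ x) (h1 : x ≤ 1 / 2) :
    2 * arcsin x ≤ arcsin (2 * x) := by
  have hpos := arcsin_nonneg.2 h0
  rw [le_arcsin_iff_sin_le
    (by constructor <;> linarith [arcsin_le_pi_div_six h1, pi_pos]) (by constructor <;> linarith),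
    sin_two_mul, sin_arcsin (by linarith) (by linarith)]
  exact mul_le_of_le_one_right (by positivity) (cos_le_one _)

lemma arcsin_two_mul_le {x : ℝ} (h0 : 0 ≤ x) (h1 : x ≤ 1 / 2) :
    arcsin (2 * x) ≤ 3 * arcsin x := by
  have hpos := arcsin_nonneg.2 h0
  rw [arcsin_le_iff_le_sin (by constructor <;> linarith)
    (by constructor <;> linarith [arcsin_le_pi_div_six h1, pi_pos]), sin_three_mul,
    sin_arcsin (by linarith) (by linarith)]
  nlinarith [mul_nonneg h0 (mul_nonneg (by linarith : 0 ≤ 1 - 2 * x) (by linarith : 0 ≤ 1 + 2 * x))]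

lemma arcsin_le_pi_div_three_mul {x : ℝ} (h0 : 0 ≤ x) (h1 : x ≤ 1 / 2) :
    arcsin x ≤ π / 3 * x := by
  have hπ := pi_pos
  rw [arcsin_le_iff_le_sin (by constructor <;> linarith) (by constructor <;> nlinarith)]
  have hconc := strictConcaveOn_sin_Icc.concaveOn.2 (x := π / 6) (y := 0)
    (by constructor <;> linarith) (by constructor <;> linarith) (by linarith : 0 ≤ 2 * x)
    (by linarith : 0 ≤ 1 - 2 * x) (by ring)
  simp only [smul_eq_mul, sin_pi_div_six, sin_zero, mul_zero, add_zero] at hconc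
  rw [show π / 3 * x = 2 * x * (π / 6) by ring]
  linarith

lemma arcsin_le_mul_of_le_one_div_four {x : ℝ} (h0 : 0 < x) (h1 : x ≤ 1 / 4) :
    arcsin x ≤ 1.1 * x := by
  rw [arcsin_le_iff_le_sin (by constructor <;> linarith)
    (by constructor <;> linarith [pi_gt_three])]
  have hsin := sin_gt_sub_cube (x := 1.1 * x) (by positivity)
  nlinarith [mul_le_mul h1 h1 h0.le (by norm_num)]

variable {α t : ℝ}

lemma two_lt_of_arcsin_add_arcsin_le (hα0 : 0 < α) (hα1 : α ≤ 1) (ht1 : 1 ≤ t)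
    (h : arcsin (α / (2 * t)) + arcsin (1 / t) ≤ arcsin (α / 2)) : 2 < t := by
  have ht0 : 0 < t := by linarith
  have hσ : 0 < arcsin (α / (2 * t)) := arcsin_pos.2 (by positivity)
  have hlt : 1 / t < α / 2 :=
    (strictMonoOn_arcsin.lt_iff_lt ⟨by linarith [show 0 < 1 / t by positivity],
      (div_le_one ht0).2 ht1⟩ ⟨by linarith, by linarith⟩).1 (by linarith)
  rw [div_lt_iff₀ ht0] at hlt
  nlinarith

lemma arcsin_add_two_mul_arcsin_le (hα0 : 0 < α) (hα1 : α ≤ 1) (ht1 : 1 ≤ t)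
    (h : arcsin (α / (2 * t)) + arcsin (1 / t) ≤ arcsin (α / 2)) :
    arcsin (α / (2 * t)) + 2 * arcsin (1 / (2 * t)) ≤ arcsin (α / 2) := by
  have ht2 := two_lt_of_arcsin_add_arcsin_le hα0 hα1 ht1 h
  have hdouble := two_mul_arcsin_le (x := 1 / (2 * t)) (by positivity)
    (one_div_le_one_div_of_le two_pos (by linarith))
  rw [show 2 * (1 / (2 * t)) = 1 / t by field_simp] at hdouble
  linarith

end Arcsin

section CaroWei

variable {ι : Type*} (G : SimpleGraph ι)

/-- The number of neighbours of `v` in the finite set `S`, i.e. its degree in the subgraph of `G`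
induced on `S` when `v ∈ S`. -/
noncomputable def degreeIn (S : Finset ι) (v : ι) : ℕ :=
  (S.filter (G.Adj v)).card

variable {G}

lemma degreeIn_mono {S T : Finset ι} (h : S ⊆ T) (v : ι) : degreeIn G S v ≤ degreeIn G T v :=
  Finset.card_le_card (Finset.filter_subset_filter _ h)

lemma degreeIn_erase_of_adj {S : Finset ι} {u v : ι} (hv : v ∈ S) (h : G.Adj u v) :
    degreeIn G S u = degreeIn G (S.erase v) u + 1 := by
  rw [degreeIn, degreeIn, Finset.filter_erase, Finset.card_erase_add_one]
  exact Finset.mem_filter.2 ⟨hv, h⟩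

lemma degreeIn_erase_self (S : Finset ι) (v : ι) : degreeIn G (S.erase v) v = degreeIn G S v := by
  rw [degreeIn, degreeIn, Finset.filter_erase, Finset.erase_eq_of_notMem (by simp)]

lemma sum_degreeIn (S : Finset ι) :
    ∑ v ∈ S, degreeIn G S v = (S.offDiag.filter fun p => G.Adj p.1 p.2).card := by
  have hfilter : (S.offDiag.filter fun p => G.Adj p.1 p.2) =
      (S ×ˢ S).filter fun p => G.Adj p.1 p.2 := by
    ext p
    simp only [Finset.mem_filter, Finset.mem_offDiag, Finset.mem_product]
    exact ⟨fun h => ⟨⟨h.1.1, h.1.2.1⟩, h.2⟩, fun h => ⟨⟨h.1.1, h.1.2, h.2.ne⟩, h.2⟩⟩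
  rw [hfilter, Finset.card_filter, Finset.sum_product]
  simp only [degreeIn, Finset.card_filter]

/-- The contribution of a vertex to the Caro–Wei bound for the size of a `(k + 1)`-clique-free
set. -/
noncomputable def caroWeiWeight (G : SimpleGraph ι) (k : ℕ) (S : Finset ι) (v : ι) : ℝ :=
  min 1 (k / (degreeIn G S v + 1))

lemma caroWeiWeight_anti (k : ℕ) {S T : Finset ι} (h : S ⊆ T) (v : ι) :
    caroWeiWeight G k T v ≤ caroWeiWeight G k S v := by
  have := degreeIn_mono (G := G) h v
  unfold caroWeiWeight
  gcongr

lemma cliqueFreeOn_insert_of_degreeIn_lt {k : ℕ} {S I : Finset ι} {v : ι} (hIS : I ⊆ S)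
    (hd : degreeIn G S v < k) (hI : G.CliqueFreeOn I (k + 1)) :
    G.CliqueFreeOn ↑(insert v I) (k + 1) := by
  intro T hT hclique
  have hT' : T ⊆ insert v I := Finset.coe_subset.1 hT
  by_cases hvT : v ∈ T
  · have hsub : T.erase v ⊆ S.filter (G.Adj v) := fun u hu => by
      obtain ⟨huv, huT⟩ := Finset.mem_erase.1 hu
      have huI : u ∈ I := (Finset.mem_insert.1 (hT' huT)).resolve_left huv
      exact Finset.mem_filter.2 ⟨hIS huI, hclique.isClique hvT huT huv.symm⟩
    have hcard := Finset.card_le_card hsub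
    rw [Finset.card_erase_of_mem hvT, hclique.card_eq, Nat.add_sub_cancel] at hcard
    exact absurd hd hcard.not_gt
  · exact hI (Finset.coe_subset.2 ((Finset.subset_insert_iff_of_notMem hvT).1 hT')) hclique

/-- Erasing a vertex `v` of maximal degree `D` increases the weight of each of its `D` neighbours by
at least `k / (D (D + 1))`, which makes up for the weight `k / (D + 1)` of `v`. -/
lemma sum_caroWeiWeight_le_sum_erase {k : ℕ} (hk : 1 ≤ k) {S : Finset ι} {v : ι} (hv : v ∈ S)
    (hlow : ∀ u ∈ S, k ≤ degreeIn G S u) (hmax : ∀ u ∈ S, degreeIn G S u ≤ degreeIn G S v) :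
    ∑ u ∈ S, caroWeiWeight G k S u ≤ ∑ u ∈ S.erase v, caroWeiWeight G k (S.erase v) u := by
  set D : ℝ := (degreeIn G S v : ℝ) with hD
  have hD0 : 0 < D := Nat.cast_pos.2 (hk.trans (hlow v hv))
  have hterm : ∀ u ∈ S.erase v, caroWeiWeight G k S u +
      (if G.Adj v u then (k : ℝ) / (D * (D + 1)) else 0) ≤ caroWeiWeight G k (S.erase v) u := by
    intro u hu
    split_ifs with h
    · have huS := Finset.mem_of_mem_erase hu
      have hkd : (k : ℝ) ≤ degreeIn G S u := Nat.cast_le.2 (hlow u huS)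
      have hdD : (degreeIn G S u : ℝ) ≤ D := Nat.cast_le.2 (hmax u huS)
      have hd0 : (0 : ℝ) < degreeIn G S u := Nat.cast_pos.2 (hk.trans (hlow u huS))
      have herase : (degreeIn G (S.erase v) u : ℝ) + 1 = degreeIn G S u := by
        rw [degreeIn_erase_of_adj hv h.symm]; push_cast; ring
      rw [caroWeiWeight, caroWeiWeight, herase, min_eq_right ((div_le_one hd0).2 hkd)]
      set d : ℝ := (degreeIn G S u : ℝ)
      calc min 1 (k / (d + 1)) + k / (D * (D + 1)) ≤ k / (d + 1) + k / (d * (d + 1)) := by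
            gcongr; exact min_le_right _ _
        _ = k / d := by field_simp
    · rw [add_zero]
      exact caroWeiWeight_anti k (Finset.erase_subset _ _) u
  have hcount : ∑ u ∈ S.erase v, (if G.Adj v u then (k : ℝ) / (D * (D + 1)) else 0) =
      k / (D + 1) := by
    rw [← Finset.sum_filter, Finset.sum_const, nsmul_eq_mul, ← degreeIn, degreeIn_erase_self, ← hD]
    field_simp
  have hsum := Finset.sum_le_sum hterm
  rw [Finset.sum_add_distrib, hcount] at hsum
  rw [← Finset.add_sum_erase _ _ hv]
  linarith [show caroWeiWeight G k S v ≤ k / (D + 1) from min_le_right _ _]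

theorem exists_cliqueFreeOn_sum_caroWeiWeight_le {k : ℕ} (hk : 1 ≤ k) (S : Finset ι) :
    ∃ I ⊆ S, G.CliqueFreeOn I (k + 1) ∧ ∑ v ∈ S, caroWeiWeight G k S v ≤ I.card := by
  induction S using Finset.strongInduction with
  | H S ih =>
  rcases S.eq_empty_or_nonempty with rfl | hne
  · exact ⟨∅, Finset.Subset.refl _, by simp, by simp⟩
  by_cases hlow : ∀ v ∈ S, k ≤ degreeIn G S v
  · obtain ⟨v, hv, hmax⟩ := S.exists_max_image (degreeIn G S) hne
    obtain ⟨I, hIS, hI, hsum⟩ := ih (S.erase v) (Finset.erase_ssubset hv)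
    exact ⟨I, hIS.trans (Finset.erase_subset _ _), hI,
      (sum_caroWeiWeight_le_sum_erase hk hv hlow hmax).trans hsum⟩
  · push Not at hlow
    obtain ⟨v, hv, hd⟩ := hlow
    obtain ⟨I, hIS, hI, hsum⟩ := ih (S.erase v) (Finset.erase_ssubset hv)
    have hIS' : I ⊆ S := hIS.trans (Finset.erase_subset _ _)
    refine ⟨insert v I, Finset.insert_subset hv hIS',
      cliqueFreeOn_insert_of_degreeIn_lt hIS' hd hI, ?_⟩
    rw [Finset.card_insert_of_notMem fun h => Finset.notMem_erase v S (hIS h),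
      ← Finset.add_sum_erase _ _ hv]
    push_cast
    have hanti : ∑ u ∈ S.erase v, caroWeiWeight G k S u ≤
        ∑ u ∈ S.erase v, caroWeiWeight G k (S.erase v) u :=
      Finset.sum_le_sum fun u _ => caroWeiWeight_anti k (Finset.erase_subset _ _) u
    linarith [show caroWeiWeight G k S v ≤ 1 from min_le_left _ _]

/-- Jensen's inequality for the Caro–Wei weights, in the form of the tangent line at `x - 1`. -/
theorem exists_cliqueFreeOn_of_sum_degreeIn_le {k : ℕ} (hk : 1 ≤ k) {x : ℝ} (hx : 0 < x)
    (hkx : k * (2 * x - 1) ≤ x ^ 2) {S : Finset ι}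
    (hdeg : ∑ v ∈ S, (degreeIn G S v : ℝ) ≤ S.card * (x - 1)) :
    ∃ I ⊆ S, G.CliqueFreeOn I (k + 1) ∧ k * S.card ≤ x * I.card := by
  obtain ⟨I, hIS, hI, hsum⟩ := exists_cliqueFreeOn_sum_caroWeiWeight_le (G := G) hk S
  refine ⟨I, hIS, hI, ?_⟩
  have htangent : ∀ v ∈ S, k * (2 * x - 1 - degreeIn G S v) / x ^ 2 ≤ caroWeiWeight G k S v := by
    intro v _
    have hd : (0 : ℝ) ≤ degreeIn G S v := Nat.cast_nonneg _
    refine le_min ?_ ?_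
    · rw [div_le_one (by positivity)]
      nlinarith [mul_nonneg (Nat.cast_nonneg (α := ℝ) k) hd]
    · rw [div_le_div_iff₀ (by positivity) (by positivity)]
      nlinarith [mul_nonneg (Nat.cast_nonneg (α := ℝ) k) (sq_nonneg (degreeIn G S v + 1 - x))]
  have hle := (Finset.sum_le_sum htangent).trans hsum
  rw [← Finset.sum_div, ← Finset.mul_sum, Finset.sum_sub_distrib, Finset.sum_const, nsmul_eq_mul,
    div_le_iff₀ (by positivity)] at hle
  refine le_of_mul_le_mul_right ?_ hx
  nlinarith [Nat.cast_nonneg (α := ℝ) k]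

lemma exists_independent_of_outdegree_le_one {R : ι → ι → Prop} {S : Finset ι}
    (hR : ∀ b, ∀ u ∈ S, ∀ v ∈ S, R b u → R b v → u = v) :
    ∃ P ⊆ S, S.card ≤ 3 * P.card ∧ ∀ b ∈ P, ∀ b' ∈ P, b ≠ b' → ¬ R b b' := by
  set G : SimpleGraph ι := SimpleGraph.fromRel R with hG
  have hdeg : ∀ v ∈ S, degreeIn G S v ≤
      (S.filter fun u => R v u).card + (S.filter fun u => R u v).card := by
    intro v _
    refine (Finset.card_le_card fun u => ?_).trans (Finset.card_union_le _ _)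
    simp only [Finset.mem_filter, Finset.mem_union, hG, SimpleGraph.fromRel_adj]
    tauto
  have hout : ∀ v ∈ S, (S.filter fun u => R v u).card ≤ 1 := fun v _ =>
    Finset.card_le_one.2 fun a ha b hb => hR v a (Finset.mem_filter.1 ha).1 b
      (Finset.mem_filter.1 hb).1 (Finset.mem_filter.1 ha).2 (Finset.mem_filter.1 hb).2
  have hcomm : ∑ v ∈ S, (S.filter fun u => R u v).card =
      ∑ v ∈ S, (S.filter fun u => R v u).card := by
    simp only [Finset.card_filter]
    exact Finset.sum_comm
  have hsum : ∑ v ∈ S, degreeIn G S v ≤ S.card * 2 :=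
    calc ∑ v ∈ S, degreeIn G S v
        ≤ ∑ v ∈ S, ((S.filter fun u => R v u).card + (S.filter fun u => R u v).card) :=
          Finset.sum_le_sum hdeg
      _ = (∑ v ∈ S, (S.filter fun u => R v u).card) * 2 := by
          rw [Finset.sum_add_distrib, hcomm, mul_two]
      _ ≤ S.card * 2 := by
          gcongr
          simpa using Finset.sum_le_sum hout
  obtain ⟨P, hPS, hP, hcard⟩ := exists_cliqueFreeOn_of_sum_degreeIn_le (G := G) le_rfl
    (x := 3) (by norm_num) (by norm_num) (by norm_num; exact_mod_cast hsum)
  refine ⟨P, hPS, by rw [Nat.cast_one, one_mul] at hcard; exact_mod_cast hcard, ?_⟩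
  intro b hb b' hb' hne hbb
  exact (SimpleGraph.cliqueFreeOn_two _).1 hP hb hb' hne
    ((SimpleGraph.fromRel_adj _ _ _).2 ⟨hne, Or.inl hbb⟩)

end CaroWei

section DensityPoints

lemma exists_measure_ne_zero_of_not_ae_le_limsup {E : Type*} [MeasurableSpace E] {μ : Measure E}
    {h : E → ℝ → ℝ≥0∞} {C : ℝ≥0∞}
    (hC : ¬ ∀ᵐ x ∂μ, C ≤ limsup (h x) (nhdsWithin 0 (Ioi 0))) :
    ∃ δ > 0, μ {x | ∀ s, 0 < s → s < δ → h x s < C} ≠ 0 := by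
  by_contra! hnull
  have hunion := measure_iUnion_null fun k : ℕ => hnull (1 / ((k : ℝ) + 1)) (by positivity)
  refine hC (measure_mono_null (fun x hx => ?_) hunion)
  have hlimsup : limsup (h x) (nhdsWithin 0 (Ioi 0)) < C := lt_of_not_ge hx
  obtain ⟨ε, hε, hlt⟩ := Metric.eventually_nhds_iff.1
    (eventually_nhdsWithin_iff.1 (eventually_lt_of_limsup_lt hlimsup))
  obtain ⟨k, hk⟩ := exists_nat_one_div_lt hε
  refine mem_iUnion.2 ⟨k, fun s hs hsk => hlt ?_ hs⟩
  rw [Real.dist_eq, sub_zero, abs_of_pos hs]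
  exact hsk.trans hk

variable {E : Type*} [MetricSpace E] [SecondCountableTopology E] [MeasurableSpace E] [BorelSpace E]
  [HasBesicovitchCovering E] {μ : Measure E} [IsFiniteMeasure μ]

lemma exists_density_point {A : Set E} (hA : μ A ≠ 0) {P : E → Prop}
    (hP : ∀ᵐ x ∂μ.restrict A, P x) {κ : ℝ} (hκ : 0 < κ) :
    ∃ x, P x ∧ ∀ᶠ r in nhdsWithin (0 : ℝ) (Ioi 0), 0 < μ.real (closedBall x r) ∧
      ∀ S, MeasurableSet S → S ⊆ closedBall x r →
        κ * μ.real (closedBall x r) < μ.real S → (S ∩ A).Nonempty := by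
  have : (ae (μ.restrict A)).NeBot := ae_neBot.2 (by rwa [Ne, Measure.restrict_eq_zero])
  obtain ⟨x, hx, hPx⟩ :=
    ((Besicovitch.ae_tendsto_measure_inter_div μ A).and hP).exists
  refine ⟨x, hPx, ?_⟩
  filter_upwards [hx.eventually_const_lt (ENNReal.ofReal_lt_one.2 (by linarith : 1 - κ < 1))]
    with r hr
  have hM : μ (closedBall x r) ≠ 0 := by
    intro h0
    simp [measure_mono_null inter_subset_right h0] at hr
  refine ⟨ENNReal.toReal_pos hM (measure_ne_top _ _), fun S hS hSsub hSlarge => ?_⟩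
  by_contra hemp
  have hA_le : μ.real (A ∩ closedBall x r) ≤ μ.real (closedBall x r \ S) :=
    measureReal_mono fun z hz => ⟨hz.2, fun hzS => hemp ⟨z, hzS, hz.1⟩⟩
  rw [ENNReal.lt_div_iff_mul_lt (Or.inl hM) (Or.inl (measure_ne_top _ _))] at hr
  have hlt : (1 - κ) * μ.real (closedBall x r) < μ.real (A ∩ closedBall x r) := by
    have := ENNReal.toReal_strict_mono (measure_ne_top _ _) hr
    rw [ENNReal.toReal_mul, ENNReal.toReal_ofReal'] at this
    exact (mul_le_mul_of_nonneg_right (le_max_left _ _) measureReal_nonneg).trans_lt this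
  rw [measureReal_sdiff hSsub hS] at hA_le
  linarith

end DensityPoints

section Reduction

variable {n : ℕ}

/-- The infimum over directions and `d`-planes of the relative measure of the cone without the
almost half-space, whose upper limit as `r ↓ 0` the theorem bounds from below. -/
noncomputable def coneDensity (μ : Measure (EuclideanSpace ℝ (Fin n))) (d : ℕ) (α : ℝ)
    (x : EuclideanSpace ℝ (Fin n)) (r : ℝ) : ℝ≥0∞ :=
  ⨅ (θ : sphere (0 : EuclideanSpace ℝ (Fin n)) 1) (V : Submodule ℝ (EuclideanSpace ℝ (Fin n)))
    (_ : Module.finrank ℝ V = d),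
    μ ((closedBall x r ∩ coneX x V α) \ almostHalfSpace x θ α) / μ (closedBall x r)

/-- Some cone around a `d`-plane, without some almost half-space, has relative measure at most `c'`
in the ball of radius `s` around `y`. -/
def HasSparseCone (μ : Measure (EuclideanSpace ℝ (Fin n))) (d : ℕ) (α c' : ℝ)
    (y : EuclideanSpace ℝ (Fin n)) (s : ℝ) : Prop :=
  ∃ (θ : EuclideanSpace ℝ (Fin n)) (V : Submodule ℝ (EuclideanSpace ℝ (Fin n))),
    ‖θ‖ = 1 ∧ Module.finrank ℝ V = d ∧
      μ.real ((closedBall y s ∩ coneX y V α) \ almostHalfSpace y θ α) ≤ c' * μ.real (closedBall y s)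

/-- The translate `V + z` meets the closed ball `B = (centre, radius)`. -/
def TranslateMeets (V : Submodule ℝ (EuclideanSpace ℝ (Fin n))) (z : EuclideanSpace ℝ (Fin n))
    (B : EuclideanSpace ℝ (Fin n) × ℝ) : Prop :=
  (((fun w => w + z) '' (V : Set (EuclideanSpace ℝ (Fin n)))) ∩ closedBall B.1 B.2).Nonempty

/-- The geometric assumptions on the collection `ℬ` of sub-balls of `closedBall x r`: the balls are
angularly separated, and at least `q` balls of every subcollection of at least `#ℬ / K` balls meet a
common translate of any given `d`-plane. -/
structure IsRichFamily (d K q : ℕ) (β : ℝ) (x : EuclideanSpace ℝ (Fin n)) (r : ℝ)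
    (ℬ : Finset (EuclideanSpace ℝ (Fin n) × ℝ)) : Prop where
  radius_pos : ∀ B ∈ ℬ, 0 < B.2
  subset : ∀ B ∈ ℬ, closedBall B.1 B.2 ⊆ closedBall x r
  separated : ∀ B ∈ ℬ, ∀ B' ∈ ℬ, B ≠ B' → AngularlySeparated β B B'
  exists_translate : ∀ ℬ' ⊆ ℬ, ℬ.card ≤ K * ℬ'.card →
    ∀ V : Submodule ℝ (EuclideanSpace ℝ (Fin n)), Module.finrank ℝ V = d →
      ∃ z, q ≤ (ℬ'.filter (TranslateMeets V z)).card

/-- A scale at which the theorem, with the constant `c'`, fails on a set `A` of points that fills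
`closedBall x (3 * r)` up to the proportion `κ`. -/
structure IsSparseScale (μ : Measure (EuclideanSpace ℝ (Fin n))) (d K q : ℕ) (α β c c' κ : ℝ)
    (x : EuclideanSpace ℝ (Fin n)) (r : ℝ) (ℬ : Finset (EuclideanSpace ℝ (Fin n) × ℝ))
    (A : Set (EuclideanSpace ℝ (Fin n))) : Prop extends IsRichFamily d K q β x r ℬ where
  scale_pos : 0 < r
  measure_pos : 0 < μ.real (closedBall x (3 * r))
  lt_measure : ∀ B ∈ ℬ, c * μ.real (closedBall x (3 * r)) < μ.real (closedBall B.1 B.2)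
  inter_nonempty : ∀ S, MeasurableSet S → S ⊆ closedBall x (3 * r) →
    κ * μ.real (closedBall x (3 * r)) < μ.real S → (S ∩ A).Nonempty
  sparse : ∀ y ∈ A, ∀ s, 0 < s → s ≤ 2 * r → HasSparseCone μ d α c' y s

variable {μ : Measure (EuclideanSpace ℝ (Fin n))} {d K q : ℕ} {α β c c' κ : ℝ}

lemma IsSparseScale.ball_subset {x : EuclideanSpace ℝ (Fin n)} {r : ℝ}
    {ℬ : Finset (EuclideanSpace ℝ (Fin n) × ℝ)} {A : Set (EuclideanSpace ℝ (Fin n))}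
    (h : IsSparseScale μ d K q α β c c' κ x r ℬ A) {B : EuclideanSpace ℝ (Fin n) × ℝ} (hB : B ∈ ℬ) :
    closedBall B.1 B.2 ⊆ closedBall x (3 * r) :=
  (h.subset B hB).trans (closedBall_subset_closedBall (by linarith [h.scale_pos]))

lemma IsSparseScale.exists_mem {x : EuclideanSpace ℝ (Fin n)} {r : ℝ}
    {ℬ : Finset (EuclideanSpace ℝ (Fin n) × ℝ)} {A : Set (EuclideanSpace ℝ (Fin n))}
    (h : IsSparseScale μ d K q α β c c' κ x r ℬ A) (hκ : κ ≤ c) {B : EuclideanSpace ℝ (Fin n) × ℝ}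
    (hB : B ∈ ℬ) : ∃ y ∈ closedBall B.1 B.2, y ∈ A :=
  h.inter_nonempty _ isClosed_closedBall.measurableSet (h.ball_subset hB)
    ((mul_le_mul_of_nonneg_right hκ measureReal_nonneg).trans_lt (h.lt_measure B hB))

variable [IsFiniteMeasure μ]

lemma hasSparseCone_of_coneDensity_lt (hc' : 0 ≤ c') {y : EuclideanSpace ℝ (Fin n)} {s : ℝ}
    (h : coneDensity μ d α y s < ENNReal.ofReal c') : HasSparseCone μ d α c' y s := by
  simp only [coneDensity, iInf_lt_iff] at h
  obtain ⟨θ, V, hV, hlt⟩ := h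
  refine ⟨θ, V, norm_eq_of_mem_sphere θ, hV, ?_⟩
  by_cases hz : μ (closedBall y s) = 0
  · have hnull : μ ((closedBall y s ∩ coneX y V α) \ almostHalfSpace y θ α) = 0 :=
      measure_mono_null (sdiff_subset.trans inter_subset_left) hz
    rw [measureReal_def, hnull, ENNReal.toReal_zero]
    positivity
  · rw [ENNReal.div_lt_iff (Or.inl hz) (Or.inl (measure_ne_top _ _))] at hlt
    have := ENNReal.toReal_mono (by finiteness) hlt.le
    rwa [ENNReal.toReal_mul, ENNReal.toReal_ofReal hc'] at this

theorem ae_le_limsup_coneDensity (hc : 0 ≤ c) (hc' : 0 ≤ c') (hκ : 0 < κ)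
    (hμ : ∀ᵐ x ∂μ, ∀ R > (0 : ℝ), ∃ r : ℝ, 0 < r ∧ r < R ∧ ∃ ℬ, IsRichFamily d K q β x r ℬ ∧
      ∀ B ∈ ℬ, ENNReal.ofReal c * μ (closedBall x (3 * r)) < μ (closedBall B.1 B.2))
    (hscale : ∀ x r ℬ A, ¬ IsSparseScale μ d K q α β c c' κ x r ℬ A) :
    ∀ᵐ x ∂μ, ENNReal.ofReal c' ≤ limsup (coneDensity μ d α x) (nhdsWithin 0 (Ioi 0)) := by
  by_contra hcon
  obtain ⟨δ, hδ, hA⟩ := exists_measure_ne_zero_of_not_ae_le_limsup hcon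
  obtain ⟨x, hx, hdens⟩ := exists_density_point hA (ae_restrict_of_ae hμ) hκ
  obtain ⟨ε, hε, hdens⟩ := Metric.eventually_nhds_iff.1 (eventually_nhdsWithin_iff.1 hdens)
  obtain ⟨r, hr, hrlt, ℬ, hℬ, hmass⟩ := hx (min (ε / 3) (δ / 2)) (by positivity)
  have hr3 : dist (3 * r) 0 < ε := by
    rw [Real.dist_eq, sub_zero, abs_of_pos (by positivity)]
    linarith [hrlt.trans_le (min_le_left _ _)]
  obtain ⟨hM, hmeets⟩ := hdens hr3 (mem_Ioi.2 (by positivity))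
  refine hscale x r ℬ _ ⟨hℬ, hr, hM, fun B hB => ?_, hmeets, fun y hy s hs hs2 => ?_⟩
  · have := ENNReal.toReal_strict_mono (measure_ne_top _ _) (hmass B hB)
    rwa [ENNReal.toReal_mul, ENNReal.toReal_ofReal hc] at this
  · exact hasSparseCone_of_coneDensity_lt hc'
      (hy s hs (hs2.trans_lt (by linarith [hrlt.trans_le (min_le_right _ _)])))

end Reduction

section Clusters

variable {F : Type*} [NormedAddCommGroup F] [InnerProductSpace ℝ F]

/-- Every angle spanned at a point of `S` by two other points of `S` is less than `φ`. -/
def AllAnglesLT (φ : ℝ) (S : Finset F) : Prop :=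
  ∀ x₀ ∈ S, ∀ x₁ ∈ S, ∀ x₂ ∈ S, x₁ ≠ x₀ → x₂ ≠ x₀ → angle (x₁ - x₀) (x₂ - x₀) < φ

variable {ι : Type*}

lemma eventually_forall_angle_lt {U : ι → ι → ℝ → F} {I : Finset ι} {φ ε₀ : ℝ}
    (hU : ∀ i j, Continuous (U i j)) (hne : ∀ i ∈ I, ∀ j ∈ I, j ≠ i → U i j ε₀ ≠ 0)
    (hφ : ∀ i ∈ I, ∀ j ∈ I, ∀ k ∈ I, j ≠ i → k ≠ i → angle (U i j ε₀) (U i k ε₀) < φ) :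
    ∀ᶠ ε in nhds ε₀, ∀ i ∈ I, ∀ j ∈ I, j ≠ i →
      U i j ε ≠ 0 ∧ ∀ k ∈ I, k ≠ i → angle (U i j ε) (U i k ε) < φ := by
  simp only [eventually_all_finset, eventually_imp_distrib_left, eventually_and]
  refine fun i hi j hj hji => ⟨(hU i j).continuousAt.eventually_ne (hne i hi j hj hji),
    fun k hk hki => ?_⟩
  have hangle : ContinuousAt (fun ε => angle (U i j ε) (U i k ε)) ε₀ :=
    ContinuousAt.comp (f := fun ε => (U i j ε, U i k ε))
      (continuousAt_angle (hne i hi j hj hji) (hne i hi k hk hki))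
      ((hU i j).continuousAt.prodMk (hU i k).continuousAt)
  exact hangle.eventually_lt_const (hφ i hi j hj k hk hji hki)

/-- The direction from `x b + ε • e b k` to `x b' + ε • e b' k'`, rescaled by `ε⁻¹` when `b = b'` so
that it depends continuously on `ε` without vanishing at `ε = 0`. -/
noncomputable def clusterEdge (x : ι → F) (e : ι → Fin 3 → F) (i j : ι × Fin 3) (ε : ℝ) : F :=
  if i.1 = j.1 then e i.1 j.2 - e i.1 i.2 else (x j.1 + ε • e j.1 j.2) - (x i.1 + ε • e i.1 i.2)

lemma continuous_clusterEdge (x : ι → F) (e : ι → Fin 3 → F) (i j : ι × Fin 3) :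
    Continuous (clusterEdge x e i j) := by
  unfold clusterEdge
  split_ifs <;> fun_prop

lemma exists_pos_smul_clusterEdge (x : ι → F) (e : ι → Fin 3 → F) (i j : ι × Fin 3) {ε : ℝ}
    (hε : 0 < ε) :
    ∃ s : ℝ, 0 < s ∧
      (x j.1 + ε • e j.1 j.2) - (x i.1 + ε • e i.1 i.2) = s • clusterEdge x e i j ε := by
  unfold clusterEdge
  split_ifs with h
  · exact ⟨ε, hε, by rw [h, smul_sub, add_sub_add_left_eq_sub]⟩
  · exact ⟨1, one_pos, (one_smul ℝ _).symm⟩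

lemma exists_allAnglesLT_of_clusterEdge {P : Finset ι} {x : ι → F} {e : ι → Fin 3 → F} {φ : ℝ}
    (hne : ∀ i ∈ P ×ˢ Finset.univ, ∀ j ∈ P ×ˢ Finset.univ, j ≠ i → clusterEdge x e i j 0 ≠ 0)
    (hφ : ∀ i ∈ P ×ˢ Finset.univ, ∀ j ∈ P ×ˢ Finset.univ, ∀ k ∈ P ×ˢ Finset.univ, j ≠ i → k ≠ i →
      angle (clusterEdge x e i j 0) (clusterEdge x e i k 0) < φ) :
    ∃ S : Finset F, S.card = 3 * P.card ∧ AllAnglesLT φ S := by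
  obtain ⟨δ, hδ, hball⟩ := Metric.eventually_nhds_iff.1
    (eventually_forall_angle_lt (continuous_clusterEdge x e) hne hφ)
  have hε : 0 < δ / 2 := by positivity
  have hedge := hball (y := δ / 2) (by rw [Real.dist_eq, sub_zero, abs_of_pos hε]; linarith)
  set X : ι × Fin 3 → F := fun i => x i.1 + (δ / 2) • e i.1 i.2
  refine ⟨(P ×ˢ Finset.univ).image X, ?_, ?_⟩
  · rw [Finset.card_image_of_injOn, Finset.card_product, Finset.card_fin, mul_comm]
    intro i hi j hj hij
    by_contra hne'
    obtain ⟨s, hs, h⟩ := exists_pos_smul_clusterEdge x e i j hε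
    have h0 : s • clusterEdge x e i j (δ / 2) = 0 := h.symm.trans (sub_eq_zero.2 hij.symm)
    exact (hedge i hi j hj (Ne.symm hne')).1 ((smul_eq_zero.1 h0).resolve_left hs.ne')
  · intro x₀ h₀ x₁ h₁ x₂ h₂ h10 h20
    obtain ⟨i, hi, rfl⟩ := Finset.mem_image.1 h₀
    obtain ⟨j, hj, rfl⟩ := Finset.mem_image.1 h₁
    obtain ⟨k, hk, rfl⟩ := Finset.mem_image.1 h₂
    obtain ⟨s, hs, hij⟩ := exists_pos_smul_clusterEdge x e i j hε
    obtain ⟨s', hs', hik⟩ := exists_pos_smul_clusterEdge x e i k hε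
    rw [hij, hik, angle_smul_left_of_pos _ _ hs, angle_smul_right_of_pos _ _ hs']
    exact (hedge i hi j hj (by rintro rfl; exact h10 rfl)).2 k hk (by rintro rfl; exact h20 rfl)

/-- Replace each point `x b` by a tiny copy of the triangle `e b`. -/
lemma exists_allAnglesLT_of_triangles {P : Finset ι} {x : ι → F} {e : ι → Fin 3 → F} {φ : ℝ}
    (hx : ∀ b ∈ P, ∀ b' ∈ P, b ≠ b' → x b' - x b ≠ 0)
    (he : ∀ b ∈ P, ∀ k l, k ≠ l → e b l - e b k ≠ 0)
    (hxx : ∀ b ∈ P, ∀ b' ∈ P, ∀ b'' ∈ P, b' ≠ b → b'' ≠ b → angle (x b' - x b) (x b'' - x b) < φ)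
    (hex : ∀ b ∈ P, ∀ b' ∈ P, b' ≠ b → ∀ k l, k ≠ l → angle (e b l - e b k) (x b' - x b) < φ)
    (hee : ∀ b ∈ P, ∀ k l l', l ≠ k → l' ≠ k → angle (e b l - e b k) (e b l' - e b k) < φ) :
    ∃ S : Finset F, S.card = 3 * P.card ∧ AllAnglesLT φ S := by
  have hsnd : ∀ {i j : ι × Fin 3}, j ≠ i → i.1 = j.1 → j.2 ≠ i.2 :=
    fun hji h h' => hji (Prod.ext h.symm h')
  refine exists_allAnglesLT_of_clusterEdge (x := x) (e := e) (fun i hi j hj hji => ?_)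
    (fun i hi j hj k hk hji hki => ?_)
  · have hi := (Finset.mem_product.1 hi).1
    have hj := (Finset.mem_product.1 hj).1
    unfold clusterEdge
    split_ifs with h
    · exact he _ hi _ _ (hsnd hji h).symm
    · simpa using hx _ hi _ hj h
  · have hi := (Finset.mem_product.1 hi).1
    have hj := (Finset.mem_product.1 hj).1
    have hk := (Finset.mem_product.1 hk).1
    unfold clusterEdge
    split_ifs with h h' h'
    · exact hee _ hi _ _ _ (hsnd hji h) (hsnd hki h')
    · simpa using hex _ hi _ hk (Ne.symm h') _ _ (hsnd hji h).symm
    · rw [angle_comm]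
      simpa using hex _ hi _ hj (Ne.symm h) _ _ (hsnd hki h').symm
    · simpa using hxx _ hi _ hj _ hk (Ne.symm h) (Ne.symm h')

variable {ω ϑ : F} (hω : ‖ω‖ = 1) (hϑ : ‖ϑ‖ = 1) (hωϑ : ⟪ω, ϑ⟫ = 0)

include hω hϑ hωϑ

lemma inner_smul_add_smul (p q p' q' : ℝ) :
    ⟪p • ω + q • ϑ, p' • ω + q' • ϑ⟫ = p * p' + q * q' := by
  have hϑω : ⟪ϑ, ω⟫ = 0 := by rw [real_inner_comm, hωϑ]
  simp only [inner_add_left, inner_add_right, real_inner_smul_left, real_inner_smul_right, hωϑ, hϑω,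
    real_inner_self_eq_norm_sq, hω, hϑ]
  ring

lemma smul_add_smul_ne_zero_and_angle_le {p q L p' q' L' φ : ℝ} (hL : 0 < L)
    (hLsq : L ^ 2 = p ^ 2 + q ^ 2) (hL' : 0 < L') (hLsq' : L' ^ 2 = p' ^ 2 + q' ^ 2) (hφ0 : 0 ≤ φ)
    (hφπ : φ ≤ π) (h : cos φ * (L * L') ≤ p * p' + q * q') :
    p • ω + q • ϑ ≠ 0 ∧ angle (p • ω + q • ϑ) (p' • ω + q' • ϑ) ≤ φ := by
  have hnorm : ∀ {p q L : ℝ}, 0 < L → L ^ 2 = p ^ 2 + q ^ 2 → ‖p • ω + q • ϑ‖ = L := by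
    intro p q L hL hLsq
    rw [← sq_eq_sq₀ (norm_nonneg _) hL.le, ← real_inner_self_eq_norm_sq,
      inner_smul_add_smul hω hϑ hωϑ, hLsq, sq, sq]
  have hne : ∀ {p q L : ℝ}, 0 < L → L ^ 2 = p ^ 2 + q ^ 2 → p • ω + q • ϑ ≠ 0 :=
    fun hL hLsq => norm_pos_iff.1 ((hnorm hL hLsq).symm ▸ hL)
  refine ⟨hne hL hLsq, (angle_le_iff_cos_mul_le_inner (hne hL hLsq) (hne hL' hLsq') hφ0 hφπ).2 ?_⟩
  rwa [hnorm hL hLsq, hnorm hL' hLsq', inner_smul_add_smul hω hϑ hωϑ]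

/-- The isosceles triangle with base direction `ω` and base angles `ψ`. -/
lemma exists_flat_triangle {ψ : ℝ} (hψ0 : 0 < ψ) (hψ1 : ψ ≤ π / 3) :
    ∃ e : Fin 3 → F,
      (∀ k l, k ≠ l → e l - e k ≠ 0 ∧ angle (e l - e k) ϑ ≤ π / 2 + ψ) ∧
      ∀ k l l', l ≠ k → l' ≠ k → angle (e l - e k) (e l' - e k) ≤ π - 2 * ψ := by
  have hsin : 0 < sin ψ := sin_pos_of_pos_of_lt_pi hψ0 (by linarith [pi_pos])
  have hcos : 1 / 2 ≤ cos ψ := by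
    rw [← cos_pi_div_three]
    exact cos_le_cos_of_nonneg_of_le_pi hψ0.le (by linarith [pi_pos]) hψ1
  have hsq : sin ψ ^ 2 + cos ψ ^ 2 = 1 := sin_sq_add_cos_sq ψ
  have hcos_add : cos (π / 2 + ψ) = -sin ψ := by rw [add_comm, cos_add_pi_div_two]
  have hcos_sub : cos (π - 2 * ψ) = 1 - 2 * cos ψ ^ 2 := by
    rw [cos_pi_sub, cos_two_mul]
    ring
  generalize sin ψ = s at *
  generalize cos ψ = c at *
  have hc : 0 < c := by linarith
  let p : Fin 3 → ℝ := ![0, 2 * c, c]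
  let q : Fin 3 → ℝ := ![0, 0, s]
  let side : Fin 3 → Fin 3 → ℝ := ![![0, 2 * c, 1], ![2 * c, 0, 1], ![1, 1, 0]]
  have hside : ∀ k l, k ≠ l → 0 < side k l ∧ side k l ^ 2 = (p l - p k) ^ 2 + (q l - q k) ^ 2 := by
    intro k l hkl
    fin_cases k <;> fin_cases l <;> simp [p, q, side, hc] at hkl ⊢ <;> nlinarith
  have hsub : ∀ k l, (p l • ω + q l • ϑ) - (p k • ω + q k • ϑ) =
      (p l - p k) • ω + (q l - q k) • ϑ := fun k l => by module
  refine ⟨fun k => p k • ω + q k • ϑ, fun k l hkl => ?_, fun k l l' hl hl' => ?_⟩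
  · simp only [hsub]
    have := smul_add_smul_ne_zero_and_angle_le hω hϑ hωϑ (p' := 0) (q' := 1) (hside k l hkl).1
      (hside k l hkl).2 one_pos (by norm_num) (φ := π / 2 + ψ) (by linarith [pi_pos])
      (by linarith [pi_pos]) ?_
    · rwa [zero_smul, one_smul, zero_add] at this
    · rw [hcos_add]
      fin_cases k <;> fin_cases l <;> simp [p, q, side] at hkl ⊢ <;> nlinarith
  · simp only [hsub]
    refine (smul_add_smul_ne_zero_and_angle_le hω hϑ hωϑ (hside k l hl.symm).1 (hside k l hl.symm).2
      (hside k l' hl'.symm).1 (hside k l' hl'.symm).2 (by linarith [pi_pos]) (by linarith) ?_).2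
    rw [hcos_sub]
    fin_cases k <;> fin_cases l <;> fin_cases l' <;> simp [p, q, side] at hl hl' ⊢ <;> nlinarith

end Clusters

section ErdosFuredi

/-- `q` is an Erdős–Füredi constant for dimension `d` and aperture `s`: among any `q` points some
three span an angle close to `π`. -/
def IsErdosFurediConstant (d : ℕ) (s : ℝ) (q : ℕ) : Prop :=
  ∀ S : Finset (EuclideanSpace ℝ (Fin d)), S.card = q →
    ∃ x₀ ∈ S, ∃ x₁ ∈ S, ∃ x₂ ∈ S, ∃ θ : EuclideanSpace ℝ (Fin d), ‖θ‖ = 1 ∧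
      x₁ ∈ oneSidedCone x₀ θ s ∧ x₂ ∈ oneSidedCone x₀ (-θ) s

variable {d q : ℕ} {s : ℝ}

lemma IsErdosFurediConstant.exists_angle_gt (hq : IsErdosFurediConstant d s q) (hs : 0 < s)
    {S : Finset (EuclideanSpace ℝ (Fin d))} (hS : q ≤ S.card) :
    ∃ x₀ ∈ S, ∃ x₁ ∈ S, ∃ x₂ ∈ S, x₁ ≠ x₀ ∧ x₂ ≠ x₀ ∧
      π - 2 * arcsin s < angle (x₁ - x₀) (x₂ - x₀) := by
  obtain ⟨S', hS'S, hS'q⟩ := Finset.exists_subset_card_eq hS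
  obtain ⟨x₀, h₀, x₁, h₁, x₂, h₂, θ, hθ, hx₁, hx₂⟩ := hq S' hS'q
  obtain ⟨hne₁, hangle₁⟩ := angle_lt_of_mem_oneSidedCone hθ hs hx₁
  obtain ⟨hne₂, hangle₂⟩ := angle_lt_of_mem_oneSidedCone (norm_neg θ ▸ hθ) hs hx₂
  refine ⟨x₀, hS'S h₀, x₁, hS'S h₁, x₂, hS'S h₂, sub_ne_zero.1 hne₁, sub_ne_zero.1 hne₂, ?_⟩
  have hopposite := angle_self_neg_of_nonzero (norm_ne_zero_iff.1 (hθ ▸ one_ne_zero) : θ ≠ 0)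
  rw [angle_comm] at hangle₁
  linarith [angle_le_angle_add_angle θ (x₁ - x₀) (-θ),
    angle_le_angle_add_angle (x₁ - x₀) (x₂ - x₀) (-θ)]

lemma IsErdosFurediConstant.three_le (hq : IsErdosFurediConstant d s q) (hd : 0 < d) (hs : 0 < s) :
    3 ≤ q := by
  have : Nonempty (Fin d) := ⟨⟨0, hd⟩⟩
  have : Infinite (EuclideanSpace ℝ (Fin d)) := Module.Free.infinite ℝ _
  obtain ⟨S, hS⟩ := Infinite.exists_subset_card_eq (EuclideanSpace ℝ (Fin d)) q
  obtain ⟨x₀, h₀, x₁, h₁, x₂, h₂, hne₁, hne₂, hangle⟩ := hq.exists_angle_gt hs hS.ge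
  have hne : x₁ ≠ x₂ := by
    rintro rfl
    rw [angle_self (sub_ne_zero.2 hne₁)] at hangle
    linarith [arcsin_le_pi_div_two s]
  rw [← hS, ← Finset.card_eq_three.2 ⟨x₀, x₁, x₂, hne₁.symm, hne₂.symm, hne, rfl⟩]
  refine Finset.card_le_card ?_
  simp only [Finset.insert_subset_iff, Finset.singleton_subset_iff]
  exact ⟨h₀, h₁, h₂⟩

variable {F : Type*} [NormedAddCommGroup F] [InnerProductSpace ℝ F] [FiniteDimensional ℝ F]

lemma IsErdosFurediConstant.not_allAnglesLT (hq : IsErdosFurediConstant d s q) (hs : 0 < s)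
    (hF : Module.finrank ℝ F = d) {S : Finset F} (hS : q ≤ S.card) :
    ¬ AllAnglesLT (π - 2 * arcsin s) S := by
  intro hangles
  let Φ : F ≃ₗᵢ[ℝ] EuclideanSpace ℝ (Fin d) :=
    ((stdOrthonormalBasis ℝ F).reindex (finCongr hF)).repr
  obtain ⟨x₀, h₀, x₁, h₁, x₂, h₂, hne₁, hne₂, hgt⟩ := hq.exists_angle_gt hs
    (S := S.image Φ) (by rwa [Finset.card_image_of_injective _ Φ.injective])
  obtain ⟨y₀, hy₀, rfl⟩ := Finset.mem_image.1 h₀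
  obtain ⟨y₁, hy₁, rfl⟩ := Finset.mem_image.1 h₁
  obtain ⟨y₂, hy₂, rfl⟩ := Finset.mem_image.1 h₂
  rw [← map_sub, ← map_sub] at hgt
  have hmap := Φ.toLinearIsometry.angle_map (y₁ - y₀) (y₂ - y₀)
  have hlt := hangles y₀ hy₀ y₁ hy₁ y₂ hy₂ (ne_of_apply_ne Φ hne₁) (ne_of_apply_ne Φ hne₂)
  exact absurd (hmap ▸ hlt) (not_lt.2 hgt.le)

lemma exists_unit_orthogonal (hF : 2 ≤ Module.finrank ℝ F) (ϑ : F) :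
    ∃ ω : F, ‖ω‖ = 1 ∧ ⟪ω, ϑ⟫ = 0 := by
  have hsum := Submodule.finrank_add_finrank_orthogonal (Submodule.span ℝ {ϑ})
  have hspan : Module.finrank ℝ (Submodule.span ℝ {ϑ}) ≤ 1 :=
    (finrank_span_le_card {ϑ}).trans (by simp)
  have : Nontrivial (Submodule.span ℝ {ϑ})ᗮ := Module.finrank_pos_iff (R := ℝ).1 (by omega)
  obtain ⟨ω, hω⟩ := exists_norm_eq (Submodule.span ℝ {ϑ})ᗮ zero_le_one
  exact ⟨ω, hω, Submodule.mem_orthogonal_singleton_iff_inner_left.1 ω.2⟩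

/-- If every point of `P` sees the others within a narrow cone, then tripling each point by a flat
triangle orthogonal to that cone creates no angle close to `π`. -/
lemma exists_allAnglesLT_of_cones (hF : 2 ≤ Module.finrank ℝ F) {ι : Type*} {P : Finset ι}
    {x ϑ : ι → F} {ρ σ ψ : ℝ} (hϑ : ∀ b ∈ P, ‖ϑ b‖ = 1)
    (hx : ∀ b ∈ P, ∀ b' ∈ P, b ≠ b' → x b' - x b ≠ 0)
    (hangle : ∀ b ∈ P, ∀ b' ∈ P, b ≠ b' → angle (x b' - x b) (ϑ b) < ρ)
    (hψ0 : 0 < ψ) (hψ1 : ψ ≤ π / 3) (hσψ : σ < ψ) (hρψ : ρ + ψ + 2 * σ ≤ π / 2)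
    (hρσ : ρ + σ ≤ π / 2) :
    ∃ S : Finset F, S.card = 3 * P.card ∧ AllAnglesLT (π - 2 * σ) S := by
  have htriangle : ∀ b ∈ P, ∃ e : Fin 3 → F,
      (∀ k l, k ≠ l → e l - e k ≠ 0 ∧ angle (e l - e k) (ϑ b) ≤ π / 2 + ψ) ∧
      ∀ k l l', l ≠ k → l' ≠ k → angle (e l - e k) (e l' - e k) ≤ π - 2 * ψ := by
    intro b hb
    obtain ⟨ω, hω, hωϑ⟩ := exists_unit_orthogonal hF (ϑ b)
    exact exists_flat_triangle hω (hϑ b hb) hωϑ hψ0 hψ1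
  choose! e hside hvertex using htriangle
  have hangle' : ∀ b ∈ P, ∀ b' ∈ P, b' ≠ b → angle (ϑ b) (x b' - x b) < ρ :=
    fun b hb b' hb' hne => (angle_comm _ _).trans_lt (hangle b hb b' hb' hne.symm)
  refine exists_allAnglesLT_of_triangles hx (fun b hb k l hkl => (hside b hb k l hkl).1) ?_ ?_ ?_
  · intro b hb b' hb' b'' hb'' hne' hne''
    linarith [angle_le_angle_add_angle (x b' - x b) (ϑ b) (x b'' - x b),
      hangle b hb b' hb' hne'.symm, hangle' b hb b'' hb'' hne'']
  · intro b hb b' hb' hne k l hkl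
    linarith [angle_le_angle_add_angle (e b l - e b k) (ϑ b) (x b' - x b),
      hangle' b hb b' hb' hne, (hside b hb k l hkl).2]
  · intro b hb k l l' hl hl'
    linarith [hvertex b hb k l l' hl hl']

lemma exists_unit_angle_lt_of_submodule {E : Type*} [NormedAddCommGroup E] [InnerProductSpace ℝ E]
    (W : Submodule ℝ E) [Nontrivial W] [W.HasOrthogonalProjection] {θ : E} (hθ : ‖θ‖ = 1) {ρ : ℝ}
    (hρ0 : 0 ≤ ρ) (hρ : ρ ≤ π / 2) :
    ∃ ϑ : W, ‖ϑ‖ = 1 ∧ ∀ u : W, u ≠ 0 → angle (u : E) θ < ρ → angle u ϑ < ρ := by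
  have hθ0 : θ ≠ 0 := norm_ne_zero_iff.1 (hθ ▸ one_ne_zero)
  have hcos : 0 ≤ cos ρ := cos_nonneg_of_mem_Icc ⟨by linarith, hρ⟩
  have hinner : ∀ u : W, u ≠ 0 → angle (u : E) θ < ρ →
      cos ρ * ‖u‖ < ⟪u, W.orthogonalProjectionOnto θ⟫ := by
    intro u hu hlt
    have := (angle_lt_iff_cos_mul_lt_inner (by simpa using hu) hθ0 hρ0 (by linarith)).1 hlt
    rwa [hθ, mul_one, ← Submodule.inner_orthogonalProjectionOnto_eq_of_mem_left] at this
  by_cases hw : W.orthogonalProjectionOnto θ = 0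
  · obtain ⟨ϑ, hϑ⟩ := exists_norm_eq W zero_le_one
    refine ⟨ϑ, hϑ, fun u hu hlt => absurd (hinner u hu hlt) (not_lt.2 ?_)⟩
    rw [hw, inner_zero_right]
    positivity
  · have hw' : 0 < ‖W.orthogonalProjectionOnto θ‖ := norm_pos_iff.2 hw
    have hle : ‖W.orthogonalProjectionOnto θ‖ ≤ 1 :=
      hθ ▸ W.norm_orthogonalProjectionOnto_apply_le θ
    refine ⟨‖W.orthogonalProjectionOnto θ‖⁻¹ • W.orthogonalProjectionOnto θ, ?_, fun u hu hlt => ?_⟩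
    · rw [norm_smul, norm_inv, norm_norm, inv_mul_cancel₀ hw'.ne']
    · rw [angle_smul_right_of_pos _ _ (by positivity),
        angle_lt_iff_cos_mul_lt_inner hu hw hρ0 (by linarith)]
      refine lt_of_le_of_lt ?_ (hinner u hu hlt)
      exact mul_le_mul_of_nonneg_left (mul_le_of_le_one_right (norm_nonneg _) hle) hcos

end ErdosFuredi

section DimensionAtLeastTwo

/-- Some `K` of the `d`-planes of `ℝⁿ` form a net: the cone of aperture `α` around any `d`-plane
contains the cone of aperture `α / 2` around one of them. -/
def HasConeNet (n d K : ℕ) (α : ℝ) : Prop :=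
  ∃ W : Fin K → Submodule ℝ (EuclideanSpace ℝ (Fin n)),
    (∀ j, Module.finrank ℝ (W j) = d) ∧
    ∀ V : Submodule ℝ (EuclideanSpace ℝ (Fin n)), Module.finrank ℝ V = d →
      ∃ j : Fin K, ∀ x, coneX x (W j) (α / 2) ⊆ coneX x V α

variable {n d K q : ℕ} {α β s c c' κ : ℝ}

lemma HasConeNet.exists_common_plane (hK : HasConeNet n d K α) {ι : Type*} {ℬ : Finset ι}
    (hℬ : ℬ.Nonempty) {V : ι → Submodule ℝ (EuclideanSpace ℝ (Fin n))}
    (hV : ∀ b ∈ ℬ, Module.finrank ℝ (V b) = d) :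
    ∃ W : Submodule ℝ (EuclideanSpace ℝ (Fin n)), Module.finrank ℝ W = d ∧ ∃ S ⊆ ℬ,
      ℬ.card ≤ K * S.card ∧ ∀ b ∈ S, ∀ x, coneX x W (α / 2) ⊆ coneX x (V b) α := by
  obtain ⟨W, hW, hnet⟩ := hK
  obtain ⟨b₀, hb₀⟩ := hℬ
  have : Nonempty (Fin K) := ⟨(hnet _ (hV b₀ hb₀)).choose⟩
  choose! j hj using fun b hb => hnet (V b) (hV b hb)
  have hsum : ∑ _i : Fin K, ℬ.card ≤ ∑ i : Fin K, K * (ℬ.filter (j · = i)).card := by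
    rw [← Finset.mul_sum, ← Finset.card_eq_sum_card_fiberwise (by simp), Finset.sum_const,
      Finset.card_fin, smul_eq_mul]
  obtain ⟨i, -, hi⟩ := Finset.exists_le_of_sum_le Finset.univ_nonempty hsum
  refine ⟨W i, hW i, _, Finset.filter_subset _ _, hi, fun b hb x => ?_⟩
  obtain ⟨hbℬ, rfl⟩ := Finset.mem_filter.1 hb
  exact hj b hbℬ x

lemma exists_submodule_finrank_eq (hd : d ≤ n) :
    ∃ V : Submodule ℝ (EuclideanSpace ℝ (Fin n)), Module.finrank ℝ V = d := by
  obtain ⟨f, hf⟩ := exists_linearIndependent_of_le_finrank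
    (R := ℝ) (M := EuclideanSpace ℝ (Fin n)) (n := d) (by rwa [finrank_euclideanSpace_fin])
  exact ⟨Submodule.span ℝ (range f), by rw [finrank_span_eq_card hf, Fintype.card_fin]⟩

variable {x : EuclideanSpace ℝ (Fin n)} {r : ℝ} {ℬ : Finset (EuclideanSpace ℝ (Fin n) × ℝ)}
  {A : Set (EuclideanSpace ℝ (Fin n))} {μ : Measure (EuclideanSpace ℝ (Fin n))}

lemma IsRichFamily.nonempty (h : IsRichFamily d K q β x r ℬ) (hd : d ≤ n) (hq : 0 < q) :
    ℬ.Nonempty := by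
  obtain ⟨V, hV⟩ := exists_submodule_finrank_eq hd
  by_contra hempty
  obtain ⟨z, hz⟩ := h.exists_translate ∅ (Finset.empty_subset _)
    (by simp [Finset.not_nonempty_iff_eq_empty.1 hempty]) V hV
  simp at hz
  omega

lemma IsRichFamily.disjoint (h : IsRichFamily d K q β x r ℬ) {B B' : EuclideanSpace ℝ (Fin n) × ℝ}
    (hB : B ∈ ℬ) (hB' : B' ∈ ℬ) (hne : B ≠ B') :
    Disjoint (closedBall B.1 B.2) (closedBall B'.1 B'.2) :=
  disjoint_left.2 fun p hp hp' => (h.separated B hB B' hB' hne p hp p hp').1 (sub_self p)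

lemma IsRichFamily.subset_closedBall_two_mul (h : IsRichFamily d K q β x r ℬ)
    {B : EuclideanSpace ℝ (Fin n) × ℝ} (hB : B ∈ ℬ) {y : EuclideanSpace ℝ (Fin n)}
    (hy : y ∈ closedBall x r) : closedBall B.1 B.2 ⊆ closedBall y (2 * r) := by
  intro p hp
  have hpx := mem_closedBall.1 (h.subset B hB hp)
  rw [mem_closedBall] at hy ⊢
  linarith [dist_triangle_right p y x]

lemma IsSparseScale.eq_of_disjoint_almostHalfSpace [IsFiniteMeasure μ]
    (h : IsSparseScale μ d K q α β c (2 * c) κ x r ℬ A) (hc : 0 ≤ c)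
    {B B' : EuclideanSpace ℝ (Fin n) × ℝ} (hB : B ∈ ℬ) (hB' : B' ∈ ℬ)
    {y θ : EuclideanSpace ℝ (Fin n)} {V : Submodule ℝ (EuclideanSpace ℝ (Fin n))}
    (hy : y ∈ closedBall x r)
    (hsparse : μ.real ((closedBall y (2 * r) ∩ coneX y V α) \ almostHalfSpace y θ α) ≤
      2 * c * μ.real (closedBall y (2 * r)))
    (hcone : closedBall B.1 B.2 ⊆ coneX y V α) (hcone' : closedBall B'.1 B'.2 ⊆ coneX y V α)
    (hdisj : Disjoint (closedBall B.1 B.2) (almostHalfSpace y θ α))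
    (hdisj' : Disjoint (closedBall B'.1 B'.2) (almostHalfSpace y θ α)) : B = B' := by
  by_contra hne
  have hunion := measureReal_mono (μ := μ) (union_subset
    (subset_sdiff.2 ⟨subset_inter (h.subset_closedBall_two_mul hB hy) hcone, hdisj⟩)
    (subset_sdiff.2 ⟨subset_inter (h.subset_closedBall_two_mul hB' hy) hcone', hdisj'⟩))
  rw [measureReal_union (h.disjoint hB hB' hne) measurableSet_closedBall] at hunion
  have hball : μ.real (closedBall y (2 * r)) ≤ μ.real (closedBall x (3 * r)) :=
    measureReal_mono (closedBall_subset_closedBall' (by linarith [mem_closedBall.1 hy]))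
  nlinarith [h.lt_measure B hB, h.lt_measure B' hB']

lemma TranslateMeets.exists_mem {V : Submodule ℝ (EuclideanSpace ℝ (Fin n))}
    {z : EuclideanSpace ℝ (Fin n)} {B : EuclideanSpace ℝ (Fin n) × ℝ} (h : TranslateMeets V z B) :
    ∃ w : V, (w : EuclideanSpace ℝ (Fin n)) + z ∈ closedBall B.1 B.2 := by
  obtain ⟨p, ⟨w, hw, rfl⟩, hp⟩ := h
  exact ⟨⟨w, hw⟩, hp⟩

section Translate

variable {V : Submodule ℝ (EuclideanSpace ℝ (Fin n))} {w w' : V} {y z p : EuclideanSpace ℝ (Fin n)}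
  {B B' : EuclideanSpace ℝ (Fin n) × ℝ} (h : AngularlySeparated β B B')
  (hw : (w : EuclideanSpace ℝ (Fin n)) + z ∈ closedBall B.1 B.2)
  (hw' : (w' : EuclideanSpace ℝ (Fin n)) + z ∈ closedBall B'.1 B'.2)

include h hw hw'

lemma AngularlySeparated.sub_ne_zero_of_translate : w' - w ≠ 0 := by
  rw [sub_ne_zero]
  rintro rfl
  exact (h _ hw _ hw').1 (sub_self _)

variable (hy : y ∈ closedBall B.1 B.2) (hp : p ∈ closedBall B'.1 B'.2)

include hy hp

lemma AngularlySeparated.angle_translate_le :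
    angle (p - y) ((w' - w : V) : EuclideanSpace ℝ (Fin n)) ≤ 2 * β := by
  have := h.angle_sub_le hw hy hw' hp
  rwa [add_sub_add_right_eq_sub] at this

lemma AngularlySeparated.mem_coneX_of_translate (hα0 : 0 < α) (hα1 : α ≤ 1)
    (hβ : 2 * β < arcsin α) : p ∈ coneX y V α :=
  mem_coneX_of_angle_lt (w' - w).2
    (Subtype.coe_ne_coe.2 (h.sub_ne_zero_of_translate hw hw'))
    (h y hy p hp).1 hα0 hα1 ((h.angle_translate_le hw hw' hy hp).trans_lt hβ)

end Translate

variable [IsFiniteMeasure μ]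

lemma IsSparseScale.exists_transversal (h : IsSparseScale μ d K q α β c (2 * c) c x r ℬ A)
    (hK : HasConeNet n d K α) (hd : d ≤ n) (hq : 0 < q) (hα0 : 0 < α) (hα1 : α ≤ 1) (hc : 0 ≤ c)
    (hβ : 2 * β < arcsin (α / 2)) :
    ∃ W : Submodule ℝ (EuclideanSpace ℝ (Fin n)), Module.finrank ℝ W = d ∧
      ∃ (P : Finset (EuclideanSpace ℝ (Fin n) × ℝ)) (w : EuclideanSpace ℝ (Fin n) × ℝ → W)
        (θ : EuclideanSpace ℝ (Fin n) × ℝ → EuclideanSpace ℝ (Fin n)), q ≤ 3 * P.card ∧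
        ∀ B ∈ P, ‖θ B‖ = 1 ∧ ∀ B' ∈ P, B ≠ B' → w B' - w B ≠ 0 ∧
          angle ((w B' - w B : W) : EuclideanSpace ℝ (Fin n)) (θ B) <
            π / 2 - arcsin α + 2 * β := by
  choose! y hyB hyA using fun B hB => h.exists_mem le_rfl (B := B) hB
  choose! θ V hθ hV hsparse using fun B hB =>
    h.sparse (y B) (hyA B hB) (2 * r) (by linarith [h.scale_pos]) le_rfl
  obtain ⟨W, hW, S, hSℬ, hScard, hcone⟩ := hK.exists_common_plane (h.nonempty hd hq) hV
  obtain ⟨z, hz⟩ := h.exists_translate S hSℬ hScard W hW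
  set T := S.filter (TranslateMeets W z)
  have hTS : T ⊆ S := Finset.filter_subset _ _
  have hTℬ : T ⊆ ℬ := hTS.trans hSℬ
  choose! w hw using fun B (hB : B ∈ T) => (Finset.mem_filter.1 hB).2.exists_mem
  have hsep : ∀ B ∈ T, ∀ B' ∈ T, B ≠ B' → AngularlySeparated β B B' :=
    fun B hB B' hB' => h.separated B (hTℬ hB) B' (hTℬ hB')
  have hcone' : ∀ B ∈ T, ∀ B' ∈ T, B ≠ B' → closedBall B'.1 B'.2 ⊆ coneX (y B) (V B) α :=
    fun B hB B' hB' hne p hp => hcone B (hTS hB) _ ((hsep B hB B' hB' hne).mem_coneX_of_translate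
      (hw B hB) (hw B' hB') (hyB B (hTℬ hB)) hp (by linarith) (by linarith) hβ)
  obtain ⟨P, hPT, hPcard, hP⟩ := exists_independent_of_outdegree_le_one (S := T)
    (R := fun B B' => B ∈ T ∧ B ≠ B' ∧
      Disjoint (closedBall B'.1 B'.2) (almostHalfSpace (y B) (θ B) α)) (by
    rintro B B₁ hB₁ B₂ hB₂ ⟨hB, hne₁, hdisj₁⟩ ⟨-, hne₂, hdisj₂⟩
    exact h.eq_of_disjoint_almostHalfSpace hc (hTℬ hB₁) (hTℬ hB₂)
      (h.subset B (hTℬ hB) (hyB B (hTℬ hB))) (hsparse B (hTℬ hB))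
      (hcone' B hB B₁ hB₁ hne₁) (hcone' B hB B₂ hB₂ hne₂) hdisj₁ hdisj₂)
  refine ⟨W, hW, P, w, θ, hz.trans hPcard, fun B hB => ⟨hθ B (hTℬ (hPT hB)), ?_⟩⟩
  intro B' hB' hne
  have hsepB := hsep B (hPT hB) B' (hPT hB') hne
  refine ⟨hsepB.sub_ne_zero_of_translate (hw B (hPT hB)) (hw B' (hPT hB')), ?_⟩
  obtain ⟨p, hp, hpH⟩ := not_disjoint_iff.1 fun hdisj => hP B hB B' hB' hne ⟨hPT hB, hne, hdisj⟩
  have hpθ := angle_lt_of_mem_almostHalfSpace (hθ B (hTℬ (hPT hB))) hα0 hα1 hpH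
  have hpw := hsepB.angle_translate_le (hw B (hPT hB)) (hw B' (hPT hB')) (hyB B (hTℬ (hPT hB))) hp
  rw [angle_comm] at hpw
  linarith [angle_le_angle_add_angle ((w B' - w B : W) : EuclideanSpace ℝ (Fin n)) (p - y B) (θ B)]

theorem not_isSparseScale_of_two_le (hd : 2 ≤ d) (hdn : d ≤ n) (hα0 : 0 < α) (hα1 : α ≤ 1)
    (hs : 0 < s) (hsβ : arcsin s ≤ β) (hβ : arcsin s + 2 * β ≤ arcsin (α / 2))
    (hq : IsErdosFurediConstant d s q) (hK : HasConeNet n d K α) (hc : 0 ≤ c) :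
    ¬ IsSparseScale μ d K q α β c (2 * c) c x r ℬ A := by
  intro h
  have hσ : 0 < arcsin s := arcsin_pos.2 hs
  have hdouble : 2 * arcsin (α / 2) ≤ arcsin α := by
    simpa [mul_div_cancel₀] using two_mul_arcsin_le (x := α / 2) (by linarith) (by linarith)
  have hsixth : arcsin (α / 2) ≤ π / 6 := arcsin_le_pi_div_six (by linarith)
  have hq0 : 0 < q := by linarith [hq.three_le (by omega) hs]
  obtain ⟨W, hW, P, w, θ, hPq, hP⟩ := h.exists_transversal hK hdn hq0 hα0 hα1 hc (by linarith)
  have : Nontrivial W := Module.nontrivial_of_finrank_pos (R := ℝ) (by omega)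
  choose! ϑ hϑ hϑangle using fun B hB => exists_unit_angle_lt_of_submodule W
    (ρ := π / 2 - arcsin α + 2 * β) (hP B hB).1 (by linarith [arcsin_le_pi_div_two α]) (by linarith)
  obtain ⟨S, hScard, hS⟩ := exists_allAnglesLT_of_cones (x := w) (σ := arcsin s)
    (ψ := 3 / 2 * β) (by omega) hϑ (fun B hB B' hB' hne => ((hP B hB).2 B' hB' hne).1)
    (fun B hB B' hB' hne => hϑangle B hB _ ((hP B hB).2 B' hB' hne).1 ((hP B hB).2 B' hB' hne).2)
    (by linarith) (by linarith [pi_pos]) (by linarith) (by linarith) (by linarith)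
  exact hq.not_allAnglesLT hs hW (hScard ▸ hPq) hS

end DimensionAtLeastTwo

section Quantiles

lemma continuous_measureReal_Iic (ν : Measure ℝ) [IsFiniteMeasure ν] [NullSingletonClass ν] :
    Continuous fun s => ν.real (Iic s) := by
  have hprim := intervalIntegral.continuous_primitive (μ := ν)
    (fun a b => (intervalIntegrable_const : IntervalIntegrable (fun _ => (1 : ℝ)) ν a b)) 0
  have heq : (fun s => ν.real (Iic s)) =
      fun s => ν.real (Iic 0) + ∫ _ in (0 : ℝ)..s, (1 : ℝ) ∂ν := by
    funext s
    have := intervalIntegral.integral_Iic_sub_Iic (μ := ν) (a := 0) (b := s)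
      (integrable_const (1 : ℝ)).integrableOn (integrable_const (1 : ℝ)).integrableOn
    simp only [setIntegral_const, smul_eq_mul, mul_one] at this
    linarith
  rw [heq]
  exact continuous_const.add hprim

lemma exists_measureReal_Iic_eq (ν : Measure ℝ) [IsFiniteMeasure ν] [NullSingletonClass ν] {v : ℝ}
    (hv0 : 0 < v) (hv : v < ν.real univ) : ∃ s, ν.real (Iic s) = v := by
  have hbot : Tendsto (fun s => ν.real (Iic s)) atBot (nhds 0) := by
    have := tendsto_measure_iInter_atBot (μ := ν) (s := fun s : ℝ => Iic s)
      (fun _ => measurableSet_Iic.nullMeasurableSet) (fun _ _ => Iic_subset_Iic.2)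
      ⟨0, measure_ne_top _ _⟩
    rw [iInter_Iic_eq_empty_iff.2 (by simp [not_bddBelow_univ]), measure_empty] at this
    exact (ENNReal.tendsto_toReal ENNReal.zero_ne_top).comp this
  have htop : Tendsto (fun s => ν.real (Iic s)) atTop (nhds (ν.real univ)) :=
    (ENNReal.tendsto_toReal (measure_ne_top _ _)).comp (tendsto_measure_Iic_atTop ν)
  exact mem_range_of_exists_le_of_exists_ge (continuous_measureReal_Iic ν)
    ((hbot.eventually_lt_const hv0).exists.imp fun _ h => h.le)
    ((htop.eventually_const_lt hv).exists.imp fun _ h => h.le)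

variable {X : Type*} [MeasurableSpace X] {μ : Measure X} {E : Set X} {f : X → ℝ}

lemma measureReal_map_restrict (hf : Measurable f) {T : Set ℝ} (hT : MeasurableSet T) :
    ((μ.restrict E).map f).real T = μ.real (E ∩ f ⁻¹' T) := by
  rw [map_measureReal_apply hf hT, measureReal_restrict_apply (hf hT), inter_comm]

lemma nullSingletonClass_map_restrict (hf : Measurable f) (hnull : ∀ s, μ (f ⁻¹' {s}) = 0) :
    NullSingletonClass ((μ.restrict E).map f) :=
  ⟨fun s => by
    rw [Measure.map_apply hf (measurableSet_singleton s)]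
    exact Measure.restrict_le_self.absolutelyContinuous (hnull s)⟩

variable [IsFiniteMeasure μ]

lemma continuous_measureReal_inter_le (hf : Measurable f) (hnull : ∀ s, μ (f ⁻¹' {s}) = 0) :
    Continuous fun s => μ.real (E ∩ {p | f p ≤ s}) := by
  have := nullSingletonClass_map_restrict (E := E) hf hnull
  exact (continuous_measureReal_Iic ((μ.restrict E).map f)).congr fun s =>
    measureReal_map_restrict hf measurableSet_Iic

lemma exists_measureReal_inter_le_eq (hf : Measurable f) (hnull : ∀ s, μ (f ⁻¹' {s}) = 0) {v : ℝ}
    (hv0 : 0 < v) (hv : v < μ.real E) : ∃ s, μ.real (E ∩ {p | f p ≤ s}) = v := by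
  have := nullSingletonClass_map_restrict (E := E) hf hnull
  obtain ⟨s, hs⟩ := exists_measureReal_Iic_eq ((μ.restrict E).map f) hv0
    (by rwa [measureReal_map_restrict hf MeasurableSet.univ, preimage_univ, inter_univ])
  exact ⟨s, by rwa [measureReal_map_restrict hf measurableSet_Iic] at hs⟩

end Quantiles

section Spheres

lemma pi_div_three_lt_angle_of_dist_eq {E : Type*} [NormedAddCommGroup E] [InnerProductSpace ℝ E]
    {x y s s' w : E} {r : ℝ} (hdist : ‖s - y‖ = ‖s' - y‖) (hne : s' - s ≠ 0) (hs : ‖s - x‖ ≤ r)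
    (hs' : ‖s' - x‖ ≤ r) (hr : 2 * r < ‖x - y‖) (hw : w ∈ Submodule.span ℝ {x - y}) (hw0 : w ≠ 0) :
    π / 3 < angle (s' - s) w := by
  obtain ⟨k, rfl⟩ := Submodule.mem_span_singleton.1 hw
  have hk : 0 < |k| := abs_pos.2 (left_ne_zero_of_smul hw0)
  have hchord : 2 * ⟪s' - s, x - y⟫ = -⟪s' - s, (s' - x) + (s - x)⟫ := by
    have hsq : ⟪s' - s, (s' - y) + (s - y)⟫ = 0 := by
      rw [show s' - s = (s' - y) - (s - y) by abel, real_inner_comm, real_inner_add_sub_eq_zero_iff,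
        hdist]
    rw [show (s' - y) + (s - y) = (s' - x) + (s - x) + (2 : ℝ) • (x - y) by module,
      inner_add_right, inner_smul_right] at hsq
    linarith
  have hsmall : |⟪s' - s, x - y⟫| ≤ ‖s' - s‖ * r := by
    have := (abs_real_inner_le_norm (s' - s) ((s' - x) + (s - x))).trans
      (mul_le_mul_of_nonneg_left ((norm_add_le _ _).trans (add_le_add hs' hs)) (norm_nonneg _))
    rw [← abs_neg, ← hchord, abs_mul, abs_two] at this
    linarith
  by_contra! hangle
  have hlarge := cos_mul_le_inner_of_angle_le (by linarith [pi_pos]) hangle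
  rw [cos_pi_div_three, norm_smul, inner_smul_right, Real.norm_eq_abs] at hlarge
  have hupper : k * ⟪s' - s, x - y⟫ ≤ |k| * (‖s' - s‖ * r) :=
    (le_abs_self _).trans (by rw [abs_mul]; gcongr)
  have hpos : 0 < |k| * ‖s' - s‖ := mul_pos hk (norm_pos_iff.2 hne)
  nlinarith

variable {n K q : ℕ} {β c : ℝ} {μ : Measure (EuclideanSpace ℝ (Fin n))}

lemma measure_sphere_eq_zero (hn : 0 < n) (hμ : ∀ (y : EuclideanSpace ℝ (Fin n)) (R : ℝ), 0 < R →
    μ (sphere y R) = 0) (y : EuclideanSpace ℝ (Fin n)) (R : ℝ) : μ (sphere y R) = 0 := by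
  rcases lt_trichotomy R 0 with hR | rfl | hR
  · rw [sphere_eq_empty_of_neg hR, measure_empty]
  · refine measure_mono_null ?_ (hμ (y + EuclideanSpace.single ⟨0, hn⟩ 1) 1 one_pos)
    rw [sphere_zero, singleton_subset_iff, mem_sphere_iff_norm]
    simp
  · exact hμ y R hR

lemma IsRichFamily.exists_inter_sphere_eq_empty {x y : EuclideanSpace ℝ (Fin n)} {r R : ℝ}
    {ℬ : Finset (EuclideanSpace ℝ (Fin n) × ℝ)} (h : IsRichFamily 1 K q β x r ℬ) (hK : 0 < K)
    (hq : 2 ≤ q) (hβ : β ≤ π / 6) (hR : 0 < R) (hr : 2 * r < R) (hx : x ∈ sphere y R) :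
    ∃ B ∈ ℬ, closedBall B.1 B.2 ∩ sphere y R = ∅ := by
  by_contra! hmeets
  have hxy : ‖x - y‖ = R := mem_sphere_iff_norm.1 hx
  obtain ⟨z, hz⟩ := h.exists_translate ℬ Subset.rfl (Nat.le_mul_of_pos_left _ hK)
    (Submodule.span ℝ {x - y}) (finrank_span_singleton (norm_pos_iff.1 (hxy ▸ hR)))
  obtain ⟨B, hB, B', hB', hne⟩ := Finset.one_lt_card.1 (lt_of_lt_of_le (by omega) hz)
  obtain ⟨hB, hBz⟩ := Finset.mem_filter.1 hB
  obtain ⟨hB', hBz'⟩ := Finset.mem_filter.1 hB'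
  obtain ⟨w, hw⟩ := hBz.exists_mem
  obtain ⟨w', hw'⟩ := hBz'.exists_mem
  obtain ⟨s, hs, hsR⟩ := hmeets B hB
  obtain ⟨s', hs', hsR'⟩ := hmeets B' hB'
  have hsep := h.separated B hB B' hB' hne
  have hlt := pi_div_three_lt_angle_of_dist_eq
    (((mem_sphere_iff_norm.1 hsR).trans (mem_sphere_iff_norm.1 hsR').symm)) (hsep s hs s' hs').1
    (mem_closedBall_iff_norm.1 (h.subset B hB hs)) (mem_closedBall_iff_norm.1 (h.subset B' hB' hs'))
    (hxy ▸ hr) (w' - w).2 (Subtype.coe_ne_coe.2 (hsep.sub_ne_zero_of_translate hw hw'))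
  linarith [hsep.angle_translate_le hw hw' hs hs']

variable [IsFiniteMeasure μ]

-- At a density point `x` of the sphere every ball of a rich family meets the sphere, but a line
-- through `x` and the centre cannot nearly contain two of its chords.
lemma measure_sphere_eq_zero_of_pos (hc : 0 < c) (hK : 0 < K) (hq : 2 ≤ q) (hβ : β ≤ π / 6)
    (hμ : ∀ᵐ x ∂μ, ∀ R > (0 : ℝ), ∃ r : ℝ, 0 < r ∧ r < R ∧ ∃ ℬ, IsRichFamily 1 K q β x r ℬ ∧
      ∀ B ∈ ℬ, ENNReal.ofReal c * μ (closedBall x (3 * r)) < μ (closedBall B.1 B.2))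
    (y : EuclideanSpace ℝ (Fin n)) {R : ℝ} (hR : 0 < R) : μ (sphere y R) = 0 := by
  by_contra hne
  obtain ⟨x, ⟨hx, hxR⟩, hdens⟩ := exists_density_point hne
    ((ae_restrict_of_ae hμ).and (ae_restrict_mem isClosed_sphere.measurableSet)) hc
  obtain ⟨ε, hε, hdens⟩ := Metric.eventually_nhds_iff.1 (eventually_nhdsWithin_iff.1 hdens)
  obtain ⟨r, hr, hrlt, ℬ, hℬ, hmass⟩ := hx (min (ε / 3) (R / 2)) (by positivity)
  have hr3 : dist (3 * r) 0 < ε := by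
    rw [Real.dist_eq, sub_zero, abs_of_pos (by positivity)]
    linarith [hrlt.trans_le (min_le_left _ _)]
  obtain ⟨B, hB, hempty⟩ := hℬ.exists_inter_sphere_eq_empty hK hq hβ hR
    (by linarith [hrlt.trans_le (min_le_right _ _)]) hxR
  refine ((hdens hr3 (mem_Ioi.2 (by positivity))).2 _ measurableSet_closedBall
    ((hℬ.subset B hB).trans (closedBall_subset_closedBall (by linarith))) ?_).ne_empty hempty
  have := ENNReal.toReal_strict_mono (measure_ne_top _ _) (hmass B hB)
  rwa [ENNReal.toReal_mul, ENNReal.toReal_ofReal hc.le] at this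

end Spheres

section DimensionOne

lemma exists_lt_lt_of_injOn {ι : Type*} {S : Finset ι} (hS : 3 ≤ S.card) {g : ι → ℝ}
    (hg : InjOn g S) : ∃ a ∈ S, ∃ b ∈ S, ∃ c ∈ S, g a < g b ∧ g b < g c := by
  rw [← Finset.card_image_of_injOn hg] at hS
  have hmem := fun i => Finset.mem_image.1 (Finset.orderEmbOfFin_mem (S.image g) rfl i)
  have hlt := fun i j => ((S.image g).orderEmbOfFin rfl).lt_iff_lt (a := i) (b := j)
  obtain ⟨a, ha, hga⟩ := hmem ⟨0, by omega⟩
  obtain ⟨b, hb, hgb⟩ := hmem ⟨1, by omega⟩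
  obtain ⟨c, hc, hgc⟩ := hmem ⟨2, by omega⟩
  refine ⟨a, ha, b, hb, c, hc, ?_, ?_⟩
  · rw [hga, hgb, hlt, Fin.mk_lt_mk]
    exact zero_lt_one
  · rw [hgb, hgc, hlt, Fin.mk_lt_mk]
    exact one_lt_two

variable {α β c κ : ℝ} {K q : ℕ} {x y θ p : EuclideanSpace ℝ (Fin 1)}
  {V : Submodule ℝ (EuclideanSpace ℝ (Fin 1))}

lemma inner_eq_apply_zero_mul (u v : EuclideanSpace ℝ (Fin 1)) : ⟪u, v⟫ = v 0 * u 0 := by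
  simp [PiLp.inner_apply]

lemma mem_coneX_sdiff_almostHalfSpace (hV : Module.finrank ℝ V = 1) (hα : 0 < α)
    (hne : p 0 ≠ y 0) (hp : θ 0 * (p 0 - y 0) ≤ 0) :
    p ∈ coneX y V α \ almostHalfSpace y θ α := by
  obtain rfl : V = ⊤ := Submodule.eq_top_of_finrank_eq (by rw [hV, finrank_euclideanSpace_fin])
  have hpy : 0 < ‖p - y‖ := norm_pos_iff.2 (sub_ne_zero.2 fun h => hne (by rw [h]))
  constructor
  · simp only [coneX, mem_ofPred_eq, Submodule.top_coe, infDist_zero_of_mem (mem_univ _)]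
    positivity
  · simp only [almostHalfSpace, mem_ofPred_eq, inner_eq_apply_zero_mul, PiLp.sub_apply, not_lt]
    exact hp.trans (by positivity)

lemma AngularlySeparated.apply_zero_lt {B B' : EuclideanSpace ℝ (Fin 1) × ℝ}
    (h : AngularlySeparated β B B') (hβ : β < π / 2) (hlt : B.1 0 < B'.1 0)
    {p' : EuclideanSpace ℝ (Fin 1)} (hp : p ∈ closedBall B.1 B.2)
    (hp' : p' ∈ closedBall B'.1 B'.2) : p 0 < p' 0 := by
  have hne : B'.1 - B.1 ≠ 0 := sub_ne_zero.2 fun h => hlt.ne (by rw [h])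
  obtain ⟨hpp, hangle⟩ := h p hp p' hp'
  have hpos := (angle_lt_iff_cos_mul_lt_inner hpp hne pi_div_two_pos.le
    (half_le_self pi_pos.le)).1 (hangle.trans_lt hβ)
  rw [cos_pi_div_two, zero_mul, inner_eq_apply_zero_mul] at hpos
  exact sub_pos.1 (pos_of_mul_pos_right hpos (sub_pos.2 hlt).le)

variable {μ : Measure (EuclideanSpace ℝ (Fin 1))}
  {r : ℝ} {ℬ : Finset (EuclideanSpace ℝ (Fin 1) × ℝ)} {A : Set (EuclideanSpace ℝ (Fin 1))}

lemma IsRichFamily.three_le_card (h : IsRichFamily 1 K q β x r ℬ) (hK : 0 < K) (hq : 3 ≤ q) :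
    3 ≤ ℬ.card := by
  obtain ⟨z, hz⟩ := h.exists_translate ℬ Subset.rfl (Nat.le_mul_of_pos_left _ hK) ⊤
    (by rw [finrank_top, finrank_euclideanSpace_fin])
  exact hq.trans (hz.trans (Finset.card_filter_le _ _))

lemma IsRichFamily.injOn_apply_zero (h : IsRichFamily 1 K q β x r ℬ) :
    InjOn (fun B : EuclideanSpace ℝ (Fin 1) × ℝ => B.1 0) ℬ := by
  intro B hB B' hB' heq
  by_contra hne
  refine (h.separated B hB B' hB' hne _ (mem_closedBall_self (h.radius_pos B hB).le) _
    (mem_closedBall_self (h.radius_pos B' hB').le)).1 (sub_eq_zero.2 ?_)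
  ext i
  rw [Subsingleton.elim i 0]
  exact heq.symm

variable [IsFiniteMeasure μ]

lemma exists_measureReal_closedBall_inter_le_eq (hnull : ∀ y R, μ (sphere y R) = 0)
    (B : EuclideanSpace ℝ (Fin 1) × ℝ) {v : ℝ} (hv0 : 0 < v)
    (hv : v < μ.real (closedBall B.1 B.2)) :
    ∃ s, μ.real (closedBall B.1 B.2 ∩ {p | p 0 ≤ s}) = v := by
  refine exists_measureReal_inter_le_eq (by fun_prop) (fun s => ?_) hv0 hv
  refine measure_mono_null (fun p hp => ?_) (hnull (EuclideanSpace.single 0 s) 0)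
  rw [sphere_zero, mem_singleton_iff]
  ext i
  rw [Subsingleton.elim i 0]
  simpa using hp

lemma IsSparseScale.measureReal_lt_of_subset (h : IsSparseScale μ 1 K q α β c (c + c / 8) κ x r ℬ A)
    (hα : 0 < α) (hc : 0 < c) {B B' : EuclideanSpace ℝ (Fin 1) × ℝ} (hB : B ∈ ℬ) (hB' : B' ∈ ℬ)
    (hne : B' ≠ B) (hy : y ∈ closedBall B.1 B.2) (hV : Module.finrank ℝ V = 1)
    (hsparse : μ.real ((closedBall y (2 * r) ∩ coneX y V α) \ almostHalfSpace y θ α) ≤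
      (c + c / 8) * μ.real (closedBall y (2 * r)))
    {D : Set (EuclideanSpace ℝ (Fin 1))} (hDB : D ⊆ closedBall B.1 B.2) (hD : MeasurableSet D)
    (hside : ∀ p ∈ closedBall B'.1 B'.2 ∪ D, p 0 ≠ y 0 ∧ θ 0 * (p 0 - y 0) ≤ 0) :
    μ.real D < c / 8 * μ.real (closedBall x (3 * r)) := by
  have hyx := h.subset B hB hy
  have hsub : closedBall B'.1 B'.2 ∪ D ⊆
      (closedBall y (2 * r) ∩ coneX y V α) \ almostHalfSpace y θ α := by
    intro p hp
    obtain ⟨hcone, hspace⟩ := mem_coneX_sdiff_almostHalfSpace hV hα (hside p hp).1 (hside p hp).2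
    refine ⟨⟨hp.elim (fun hp => ?_) fun hp => ?_, hcone⟩, hspace⟩
    · exact h.subset_closedBall_two_mul hB' hyx hp
    · exact h.subset_closedBall_two_mul hB hyx (hDB hp)
  have hunion := measureReal_mono (μ := μ) hsub
  rw [measureReal_union ((h.disjoint hB' hB hne).mono_right hDB) hD] at hunion
  have hball : μ.real (closedBall y (2 * r)) ≤ μ.real (closedBall x (3 * r)) :=
    measureReal_mono (closedBall_subset_closedBall' (by linarith [mem_closedBall.1 hyx]))
  nlinarith [h.lt_measure B' hB']

-- Cut the middle one of three balls into three parts: a point of the middle part sees either the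
-- left ball and the left part, or the right ball and the right part, outside the half-space.
theorem not_isSparseScale_of_dim_one (hα : 0 < α) (hβ : β < π / 2) (hK : 0 < K) (hq : 3 ≤ q)
    (hc : 0 < c) (hκ : κ < c / 4) (hnull : ∀ y R, μ (sphere y R) = 0) :
    ¬ IsSparseScale μ 1 K q α β c (c + c / 8) κ x r ℬ A := by
  intro h
  obtain ⟨L, hL, B, hB, R, hR, hLB, hBR⟩ :=
    exists_lt_lt_of_injOn (h.three_le_card hK hq) h.injOn_apply_zero
  have hneL : L ≠ B := fun h => hLB.ne (by rw [h])
  have hneR : R ≠ B := fun h => hBR.ne' (by rw [h])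
  have hM : 0 < c * μ.real (closedBall x (3 * r)) := mul_pos hc h.measure_pos
  have hBM := h.lt_measure B hB
  obtain ⟨τ₁, hτ₁⟩ := exists_measureReal_closedBall_inter_le_eq hnull B
    (v := c * μ.real (closedBall x (3 * r)) / 4) (by linarith) (by linarith)
  obtain ⟨τ₂, hτ₂⟩ := exists_measureReal_closedBall_inter_le_eq hnull B
    (v := c * μ.real (closedBall x (3 * r)) / 2) (by linarith) (by linarith)
  have hmeas : ∀ s, MeasurableSet (closedBall B.1 B.2 ∩ {p | p 0 ≤ s}) := fun s =>
    measurableSet_closedBall.inter (measurableSet_le (by fun_prop) measurable_const)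
  obtain ⟨y, ⟨⟨hyB, hy₂⟩, hy₁⟩, hyA⟩ := h.inter_nonempty
    ((closedBall B.1 B.2 ∩ {p | p 0 ≤ τ₂}) \ (closedBall B.1 B.2 ∩ {p | p 0 ≤ τ₁}))
    ((hmeas _).diff (hmeas _)) (sdiff_subset.trans (inter_subset_left.trans (h.ball_subset hB))) (by
      have := le_measureReal_sdiff (μ := μ) (s₁ := closedBall B.1 B.2 ∩ {p | p 0 ≤ τ₂})
        (s₂ := closedBall B.1 B.2 ∩ {p | p 0 ≤ τ₁})
      rw [hτ₁, hτ₂] at this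
      nlinarith [h.measure_pos])
  have hy₁ : τ₁ < y 0 := lt_of_not_ge fun hle => hy₁ ⟨hyB, hle⟩
  obtain ⟨θ, V, -, hV, hsparse⟩ := h.sparse y hyA (2 * r) (by linarith [h.scale_pos]) le_rfl
  rcases le_total 0 (θ 0) with hθ | hθ
  · have hleft := h.measureReal_lt_of_subset hα hc hB hL hneL hyB hV hsparse inter_subset_left
      (hmeas τ₁) fun p hp => by
        have hpy : p 0 < y 0 := hp.elim
          (fun hp => (h.separated L hL B hB hneL).apply_zero_lt hβ hLB hp hyB)
          (fun hp => hp.2.trans_lt hy₁)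
        exact ⟨hpy.ne, mul_nonpos_of_nonneg_of_nonpos hθ (by linarith)⟩
    linarith
  · have hright := h.measureReal_lt_of_subset hα hc hB hR hneR hyB hV hsparse sdiff_subset
      (measurableSet_closedBall.diff (hmeas τ₂)) fun p hp => by
        have hpy : y 0 < p 0 := hp.elim
          (fun hp => (h.separated B hB R hR hneR.symm).apply_zero_lt hβ hBR hyB hp)
          (fun hp => hy₂.trans_lt (lt_of_not_ge fun hle => hp.2 ⟨hp.1, hle⟩))
        exact ⟨hpy.ne', mul_nonpos_of_nonpos_of_nonneg hθ (by linarith)⟩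
    rw [measureReal_sdiff inter_subset_left (hmeas _), hτ₂] at hright
    linarith

end DimensionOne

section TailRadii

variable {X : Type*} [PseudoMetricSpace X] [MeasurableSpace X] {μ : Measure X} {E f : Set X} {y : X}
  {ρ δ δ' : ℝ}

/-- The largest radius `s ≤ ρ` for which at least the proportion `δ` of the mass of `E` lies outside
`closedBall y s`. -/
noncomputable def tailRadius (μ : Measure X) (E : Set X) (y : X) (ρ δ : ℝ) : ℝ :=
  sSup {s ∈ Icc 0 ρ | δ * μ.real E ≤ μ.real (E \ closedBall y s)}

lemma le_tailRadius {s : ℝ} (hs : s ∈ Icc 0 ρ) (hle : δ * μ.real E ≤ μ.real (E \ closedBall y s)) :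
    s ≤ tailRadius μ E y ρ δ :=
  le_csSup ⟨ρ, fun _ h => h.1.2⟩ ⟨hs, hle⟩

lemma exists_mem_lt_dist_of_measureReal_sdiff_pos {s : ℝ} (h : 0 < μ.real (f \ closedBall y s)) :
    ∃ a ∈ f, s < dist a y := by
  obtain ⟨a, ha, has⟩ := nonempty_of_measureReal_ne_zero h.ne'
  exact ⟨a, ha, not_le.1 has⟩

lemma measureReal_sdiff_closedBall_zero (hnull : μ (sphere y 0) = 0) :
    μ.real (E \ closedBall y 0) = μ.real E := by
  rw [measureReal_def, measure_sdiff_null, measureReal_def]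
  have := measure_union_null hnull (measure_empty (μ := μ))
  rwa [← ball_zero, union_comm, ball_union_sphere] at this

variable [OpensMeasurableSpace X] [IsFiniteMeasure μ] (hnull : ∀ s, μ (sphere y s) = 0)

include hnull

lemma continuous_measureReal_sdiff_closedBall :
    Continuous fun s => μ.real (E \ closedBall y s) := by
  have hcont := continuous_measureReal_inter_le (μ := μ) (E := E) (f := (dist · y))
    (by fun_prop) hnull
  refine (continuous_const (y := μ.real E)).sub hcont |>.congr fun s => ?_
  exact sub_eq_of_eq_add' (measureReal_inter_add_sdiff measurableSet_closedBall).symm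

lemma tailRadius_mem (hρ : 0 ≤ ρ) (hδ : δ ≤ 1) :
    tailRadius μ E y ρ δ ∈ {s ∈ Icc 0 ρ | δ * μ.real E ≤ μ.real (E \ closedBall y s)} := by
  refine IsCompact.sSup_mem (isCompact_Icc.inter_right (isClosed_le continuous_const
    (continuous_measureReal_sdiff_closedBall hnull))) ⟨0, ⟨le_rfl, hρ⟩, ?_⟩
  rw [measureReal_sdiff_closedBall_zero (hnull 0)]
  exact mul_le_of_le_one_left measureReal_nonneg hδ

lemma measureReal_sdiff_tailRadius (hρ : 0 ≤ ρ) (hδ : δ ≤ 1) (hlt : tailRadius μ E y ρ δ < ρ) :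
    μ.real (E \ closedBall y (tailRadius μ E y ρ δ)) = δ * μ.real E := by
  obtain ⟨h0, hle⟩ := tailRadius_mem hnull hρ hδ
  have hρlt : μ.real (E \ closedBall y ρ) < δ * μ.real E :=
    lt_of_not_ge fun h => hlt.not_ge (le_tailRadius ⟨hρ, le_rfl⟩ h)
  obtain ⟨s, hs, hseq⟩ := intermediate_value_Icc' hlt.le
    (continuous_measureReal_sdiff_closedBall (E := E) hnull).continuousOn ⟨hρlt.le, hle⟩
  have hsle := le_tailRadius ⟨h0.1.trans hs.1, hs.2⟩ hseq.ge
  rwa [hsle.antisymm hs.1] at hseq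

lemma tailRadius_pos (hρ : 0 < ρ) (hδ : δ < 1) (hE : 0 < μ.real E) : 0 < tailRadius μ E y ρ δ := by
  refine (tailRadius_mem hnull hρ.le hδ.le).1.1.lt_of_ne fun h0 => ?_
  have := measureReal_sdiff_tailRadius hnull hρ.le hδ.le (h0 ▸ hρ)
  rw [← h0, measureReal_sdiff_closedBall_zero (hnull 0)] at this
  nlinarith

lemma tailRadius_le_tailRadius (hρ : 0 ≤ ρ) (hδ' : δ ≤ 1) (hδ : δ' ≤ δ) :
    tailRadius μ E y ρ δ ≤ tailRadius μ E y ρ δ' :=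
  have h := tailRadius_mem hnull hρ hδ'
  le_tailRadius h.1 ((mul_le_mul_of_nonneg_right hδ measureReal_nonneg).trans h.2)

lemma tailRadius_le_two_mul (hρ : 0 ≤ ρ) (hδ' : δ' ≤ 1) (hf : f ⊆ E) (hfρ : f ⊆ closedBall y ρ)
    (hmass : δ' * μ.real E < μ.real f) (hdist : ∀ a ∈ f, ∀ a' ∈ f, dist a y ≤ 2 * dist a' y)
    (hpos : 0 < μ.real (f \ closedBall y (tailRadius μ E y ρ δ))) :
    tailRadius μ E y ρ δ ≤ 2 * tailRadius μ E y ρ δ' := by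
  obtain ⟨a, ha, hlt⟩ := exists_mem_lt_dist_of_measureReal_sdiff_pos hpos
  suffices ∃ a' ∈ f, dist a' y ≤ tailRadius μ E y ρ δ' by
    obtain ⟨a', ha', hle⟩ := this
    linarith [hdist a ha a' ha']
  by_contra! hfar
  have hsub : f ⊆ E \ closedBall y (tailRadius μ E y ρ δ') := fun a' ha' =>
    ⟨hf ha', not_le.2 (hfar a' ha')⟩
  have heq := measureReal_sdiff_tailRadius (E := E) hnull hρ hδ' ((hfar a ha).trans_le (hfρ ha))
  linarith [measureReal_mono (μ := μ) hsub]

end TailRadii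

section Pigeonhole

lemma exists_forall_notMem_of_card_lt {ι : Type*} {T : Finset ι} {I : Finset ℕ}
    (hcard : T.card < I.card) (g : ι → ℝ) {W : ℕ → Set ℝ}
    (hW : ∀ i k, i < k → Disjoint (W i) (W k)) : ∃ i ∈ I, ∀ x ∈ T, g x ∉ W i := by
  by_contra! hcon
  obtain ⟨i₀, hi₀⟩ := Finset.card_pos.1 (Nat.zero_lt_of_lt hcard)
  have : Nonempty ι := ⟨(hcon i₀ hi₀).choose⟩
  choose! x hx hgx using hcon
  obtain ⟨i, hi, k, hk, hne, heq⟩ := Finset.exists_ne_map_eq_of_card_lt_of_maps_to hcard hx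
  rcases hne.lt_or_gt with hlt | hlt
  · exact disjoint_left.1 (hW i k hlt) (hgx i hi) (heq ▸ hgx k hk)
  · exact disjoint_left.1 (hW k i hlt) (hgx k hk) (heq ▸ hgx i hi)

lemma exists_sum_sub_lt {ι : Type*} {S : Finset ι} {J : ℕ} {τ : ℝ} {T : ι → ℕ → ℝ}
    (hT : ∀ b ∈ S, T b J - T b 0 ≤ 1) (hJ : S.card < J * τ) :
    ∃ j < J, ∑ b ∈ S, (T b (j + 1) - T b j) < τ := by
  by_contra! hcon
  have hsum := Finset.card_nsmul_le_sum (Finset.range J) _ τ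
    fun j hj => hcon j (Finset.mem_range.1 hj)
  rw [Finset.sum_comm, Finset.card_range, nsmul_eq_mul] at hsum
  simp only [Finset.sum_range_sub] at hsum
  have := Finset.sum_le_card_nsmul S _ 1 hT
  rw [nsmul_eq_mul, mul_one] at this
  linarith

/-- The total increment of `min 2 (s b i / s b 0)` over all levels is at most one for every `b`, so
it is small on one of many blocks of levels. -/
lemma exists_block_le_one_add_mul {ι : Type*} {S : Finset ι} {J : ℕ} {τ : ℝ} (hJ : S.card < J * τ)
    (B : ℕ) {s : ι → ℕ → ℝ} (hs : ∀ b ∈ S, 0 < s b 0) (hmono : ∀ b ∈ S, Monotone (s b)) :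
    ∃ j < J, ∀ b ∈ S, ∀ i ≤ (j + 1) * B, s b i ≤ 2 * s b 0 → s b i ≤ (1 + τ) * s b (j * B) := by
  set T : ι → ℕ → ℝ := fun b i => min 2 (s b i / s b 0)
  have hTmono : ∀ b ∈ S, Monotone (T b) := fun b hb i k hik =>
    min_le_min_left _ (div_le_div_of_nonneg_right (hmono b hb hik) (hs b hb).le)
  have hT0 : ∀ b ∈ S, T b 0 = 1 := fun b hb => by
    simp only [T, div_self (hs b hb).ne']
    norm_num
  obtain ⟨j, hj, hlt⟩ := exists_sum_sub_lt (T := fun b j => T b (j * B)) (fun b hb => by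
    simp only [zero_mul, hT0 b hb]
    linarith [min_le_left 2 (s b (J * B) / s b 0)]) hJ
  refine ⟨j, hj, fun b hb i hi hi2 => ?_⟩
  have hincr : T b ((j + 1) * B) - T b (j * B) < τ :=
    (Finset.single_le_sum (f := fun b => T b ((j + 1) * B) - T b (j * B)) (fun b hb =>
      sub_nonneg.2 (hTmono b hb (Nat.mul_le_mul_right B j.le_succ))) hb).trans_lt hlt
  have hTi : T b i = s b i / s b 0 := min_eq_right ((div_le_iff₀ (hs b hb)).2 hi2)
  have hratio : s b i / s b 0 - s b (j * B) / s b 0 < τ := by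
    linarith [hTmono b hb hi, min_le_right 2 (s b (j * B) / s b 0)]
  rw [← sub_div, div_lt_iff₀ (hs b hb)] at hratio
  have hτ : 0 < τ := (sub_nonneg.2 (hTmono b hb (Nat.mul_le_mul_right B j.le_succ))).trans_lt hincr
  nlinarith [hmono b hb (Nat.zero_le (j * B))]

lemma exists_stable_level {ι : Type*} {S : Finset ι} {N J : ℕ} {τ : ℝ} (hS : S.card ≤ N)
    (hJ : N < J * τ) {s : ι → ℕ → ℝ} (hs : ∀ b ∈ S, 0 < s b 0) (hmono : ∀ b ∈ S, Monotone (s b))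
    (Q : ι → ι → ℕ → ℝ) {W : ℕ → Set ℝ} (hW : ∀ i k, i < k → Disjoint (W i) (W k)) :
    ∃ p i, p ≤ i ∧ i ≤ J * (N ^ 2 + 1) ∧
      (∀ b ∈ S, s b i ≤ 2 * s b 0 → s b i ≤ (1 + τ) * s b p) ∧
      ∀ b ∈ S, ∀ b' ∈ S, Q b b' p ∉ W i := by
  have hSN : (S.card : ℝ) ≤ N := by exact_mod_cast hS
  obtain ⟨j, hj, hblock⟩ := exists_block_le_one_add_mul (hSN.trans_lt hJ) (N ^ 2 + 1) hs hmono
  have hcard : (S ×ˢ S).card < (Finset.Ioc (j * (N ^ 2 + 1)) ((j + 1) * (N ^ 2 + 1))).card := by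
    rw [Finset.card_product, Nat.card_Ioc, ← Nat.sub_mul, Nat.add_sub_cancel_left, one_mul, sq]
    exact Nat.lt_succ_of_le (Nat.mul_le_mul hS hS)
  obtain ⟨i, hi, hgap⟩ := exists_forall_notMem_of_card_lt hcard
    (fun b => Q b.1 b.2 (j * (N ^ 2 + 1))) hW
  rw [Finset.mem_Ioc] at hi
  exact ⟨j * (N ^ 2 + 1), i, hi.1.le, hi.2.trans (Nat.mul_le_mul_right _ hj),
    fun b hb => hblock b hb i hi.2, fun b hb b' hb' => hgap (b, b') (Finset.mk_mem_product hb hb')⟩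

end Pigeonhole

section Sectors

variable {F : Type*} [NormedAddCommGroup F] [InnerProductSpace ℝ F] {y ϑ a a' : F} {φ ζ τ s : ℝ}

/-- The closed solid sector of half-angle `φ` around the direction `ϑ` with apex `y`, without its
apex. -/
def sector (y ϑ : F) (φ : ℝ) : Set F :=
  {a | a - y ≠ 0 ∧ angle (a - y) ϑ ≤ φ}

lemma sector_subset_sector (h : φ ≤ ζ) : sector y ϑ φ ⊆ sector y ϑ ζ :=
  fun _ ha => ⟨ha.1, ha.2.trans h⟩

lemma mem_sector_of_inner_le (hϑ : ‖ϑ‖ = 1) (hφ : φ < π / 2) (hζ0 : 0 ≤ ζ) (hζ : ζ ≤ π / 2)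
    (hτ : (1 + τ) * cos ζ ≤ cos φ) (hs : 0 < s) (ha' : a' ∈ sector y ϑ φ) (hs' : s ≤ dist a' y)
    (has : dist a y ≤ (1 + τ) * s) (hle : ⟪a', ϑ⟫ ≤ ⟪a, ϑ⟫) : a ∈ sector y ϑ ζ := by
  obtain ⟨-, hangle'⟩ := ha'
  have hϑ0 : ϑ ≠ 0 := norm_ne_zero_iff.1 (hϑ ▸ one_ne_zero)
  have hφ0 : 0 ≤ φ := (angle_nonneg _ _).trans hangle'
  have hcosφ : 0 < cos φ := cos_pos_of_mem_Ioo ⟨by linarith [pi_pos], hφ⟩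
  have hcosζ : 0 ≤ cos ζ := cos_nonneg_of_mem_Icc ⟨by linarith [pi_pos], hζ⟩
  have hle' : cos φ * dist a' y ≤ ⟪a - y, ϑ⟫ := by
    have := cos_mul_le_inner_of_angle_le (by linarith [pi_pos]) hangle'
    rw [hϑ, mul_one, inner_sub_left, ← dist_eq_norm] at this
    rw [inner_sub_left]
    linarith
  have hne : a - y ≠ 0 := by
    intro h0
    rw [h0, inner_zero_left] at hle'
    linarith [mul_pos hcosφ (hs.trans_le hs')]
  refine ⟨hne, (angle_le_iff_cos_mul_le_inner hne hϑ0 hζ0 (by linarith [pi_pos])).2 ?_⟩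
  rw [hϑ, mul_one, ← dist_eq_norm]
  calc cos ζ * dist a y ≤ cos ζ * ((1 + τ) * s) := by gcongr
    _ = (1 + τ) * cos ζ * s := by ring
    _ ≤ cos φ * dist a' y := by gcongr
    _ ≤ ⟪a - y, ϑ⟫ := hle'

variable [FiniteDimensional ℝ F]

lemma AngularlySeparated.radius_le_sin_mul {β : ℝ} {B B' : F × ℝ} (h : AngularlySeparated β B B')
    (hF : 2 ≤ Module.finrank ℝ F) (hβ : β ≤ π / 2) (hr : 0 ≤ B'.2) (hy : y ∈ closedBall B.1 B.2) :
    B'.2 ≤ sin β * (dist B'.1 y + B'.2) := by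
  obtain ⟨u, hu, huw, hpos⟩ : ∃ u, ‖u‖ = 1 ∧ ⟪u, B'.1 - B.1⟫ = 0 ∧ 0 ≤ ⟪B'.1 - y, u⟫ := by
    obtain ⟨u, hu, huw⟩ := exists_unit_orthogonal hF (B'.1 - B.1)
    rcases le_total 0 ⟪B'.1 - y, u⟫ with h0 | h0
    · exact ⟨u, hu, huw, h0⟩
    · exact ⟨-u, by rwa [norm_neg], by rw [inner_neg_left, huw, neg_zero],
        by rw [inner_neg_right]; linarith⟩
  set p := B'.1 + B'.2 • u
  have hp : dist p B'.1 = B'.2 := by simp [p, norm_smul, hu, abs_of_nonneg hr]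
  have hangle : π / 2 - β ≤ angle (p - y) u := by
    have hdir := (h y hy p hp.le).2
    have horth := (inner_eq_zero_iff_angle_eq_pi_div_two _ _).1 huw
    rw [angle_comm] at horth hdir
    linarith [angle_le_angle_add_angle (B'.1 - B.1) (p - y) u]
  have hβ0 : 0 ≤ β := (angle_nonneg _ _).trans (h y hy p hp.le).2
  calc B'.2 ≤ ⟪B'.1 - y, u⟫ + B'.2 := by linarith
    _ = ⟪p - y, u⟫ := by
        rw [show p - y = (B'.1 - y) + B'.2 • u by simp only [p]; abel, inner_add_left,
          real_inner_smul_left, real_inner_self_eq_norm_sq, hu, one_pow, mul_one]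
    _ = cos (angle (p - y) u) * ‖p - y‖ := by rw [← cos_angle_mul_norm_mul_norm, hu, mul_one]
    _ ≤ cos (π / 2 - β) * (dist B'.1 y + B'.2) := by
        gcongr
        · exact cos_nonneg_of_mem_Icc ⟨by linarith, by linarith⟩
        · exact cos_le_cos_of_nonneg_of_le_pi (by linarith) (angle_le_pi _ _) hangle
        · rw [← dist_eq_norm]
          linarith [dist_triangle p B'.1 y]
    _ = sin β * (dist B'.1 y + B'.2) := by rw [cos_pi_div_two_sub]

lemma AngularlySeparated.dist_le_two_mul {β : ℝ} {B B' : F × ℝ} (h : AngularlySeparated β B B')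
    (hF : 2 ≤ Module.finrank ℝ F) (hβ : β ≤ π / 2) (hsin : sin β ≤ 1 / 4)
    (hy : y ∈ closedBall B.1 B.2) (ha : a ∈ closedBall B'.1 B'.2)
    (ha' : a' ∈ closedBall B'.1 B'.2) : dist a y ≤ 2 * dist a' y := by
  have hr : 0 ≤ B'.2 := dist_nonneg.trans ha
  have := h.radius_le_sin_mul hF hβ hr hy
  have : sin β * (dist B'.1 y + B'.2) ≤ 1 / 4 * (dist B'.1 y + B'.2) := by gcongr
  rw [mem_closedBall] at ha ha'
  linarith [dist_triangle a B'.1 y, dist_triangle_left B'.1 y a']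

end Sectors

section TopBalls

lemma measureReal_le_inter_add_sdiff {Ω : Type*} [MeasurableSpace Ω] {μ : Measure Ω}
    [IsFiniteMeasure μ] (f : Set Ω) {E U : Set Ω} (hf : f ⊆ E) :
    μ.real f ≤ μ.real (f ∩ U) + μ.real (E \ U) := by
  rw [← inter_union_sdiff f U]
  refine (measureReal_union_le _ _).trans ?_
  rw [inter_union_sdiff]
  exact add_le_add_right (measureReal_mono (sdiff_subset_sdiff_left hf)) _

variable {F : Type*} [NormedAddCommGroup F] [InnerProductSpace ℝ F] [MeasurableSpace F]
  {μ : Measure F} {c δ φ ζ τ ρ s s' : ℝ} {y ϑ : F} {E X f : Set F}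

/-- From `y`, the set `f` is seen in the direction `ϑ`, the sector around `ϑ` belongs to a set `X`
of mass at most `c` in `closedBall y s`, only the proportion `δ` of `E` lies outside that ball, and
a larger part of `f` is not much closer to `y` than `s`. All proportions are relative to `E`. Such
an `f` is extremal in the direction `ϑ`. -/
structure IsTopSet (μ : Measure F) (c δ φ ζ τ : ℝ) (ϑ : F) (E : Set F) (y : F) (s' s : ℝ)
    (X f : Set F) : Prop where
  radius_pos : 0 < s'
  radius_le : s ≤ (1 + τ) * s'
  subset : f ⊆ E
  subset_sector : f ⊆ sector y ϑ φ
  sector_subset : sector y ϑ ζ ⊆ X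
  lt_measure : c * μ.real E < μ.real f
  measure_inter_le : μ.real (closedBall y s ∩ X) ≤ c * μ.real E
  measure_sdiff : μ.real (E \ closedBall y s) = δ * μ.real E
  le_measure_sdiff : 2 * (δ * μ.real E) ≤ μ.real (f \ closedBall y s')

variable [IsFiniteMeasure μ] [OpensMeasurableSpace F]

lemma IsTopSet.exists_inner_lt (h : IsTopSet μ c δ φ ζ τ ϑ E y s' s X f) (hϑ : ‖ϑ‖ = 1)
    (hφ : φ < π / 2) (hφζ : φ ≤ ζ) (hζ0 : 0 ≤ ζ) (hζ : ζ ≤ π / 2) (hτ : (1 + τ) * cos ζ ≤ cos φ)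
    (hf : MeasurableSet f) {D : Set F} (hDf : Disjoint D f) (hDs : D ⊆ closedBall y s)
    (hD : δ * μ.real E ≤ μ.real D) :
    ∃ a ∈ D, ∀ a' ∈ f \ closedBall y s', ⟪a, ϑ⟫ < ⟪a', ϑ⟫ := by
  by_contra! hcon
  have hDsector : D ⊆ sector y ϑ ζ := fun a ha => by
    obtain ⟨a', ⟨ha', has'⟩, hle⟩ := hcon a ha
    exact mem_sector_of_inner_le hϑ hφ hζ0 hζ hτ h.radius_pos (h.subset_sector ha')
      (not_le.1 has').le ((hDs ha).trans h.radius_le) hle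
  have hsub : D ∪ (f ∩ closedBall y s) ⊆ closedBall y s ∩ X :=
    union_subset (subset_inter hDs (hDsector.trans h.sector_subset))
      (subset_inter inter_subset_right (inter_subset_left.trans
        ((h.subset_sector.trans (sector_subset_sector hφζ)).trans h.sector_subset)))
  have hmass := measureReal_mono (μ := μ) hsub
  rw [measureReal_union (hDf.mono_right inter_subset_left) (hf.inter measurableSet_closedBall)]
    at hmass
  linarith [h.measure_inter_le, h.lt_measure, h.measure_sdiff,
    measureReal_le_inter_add_sdiff (μ := μ) f (U := closedBall y s) h.subset]

/-- Of two disjoint top sets, the far part of one that reaches lower in the direction `ϑ` would lie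
below the other one and hence in the sector of the other apex, whose mass is already exhausted. -/
lemma IsTopSet.not_disjoint {y₁ : F} {s₁' s₁ : ℝ} {X₁ f₁ : Set F}
    (h : IsTopSet μ c δ φ ζ τ ϑ E y s' s X f) (h₁ : IsTopSet μ c δ φ ζ τ ϑ E y₁ s₁' s₁ X₁ f₁)
    (hϑ : ‖ϑ‖ = 1) (hφ : φ < π / 2) (hφζ : φ ≤ ζ) (hζ0 : 0 ≤ ζ) (hζ : ζ ≤ π / 2)
    (hτ : (1 + τ) * cos ζ ≤ cos φ) (hf : MeasurableSet f) (hf₁ : MeasurableSet f₁) :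
    ¬ Disjoint f f₁ := by
  intro hdisj
  have hfar : δ * μ.real E ≤ μ.real ((f \ closedBall y s') ∩ closedBall y₁ s₁) := by
    linarith [h.le_measure_sdiff, h₁.measure_sdiff, measureReal_le_inter_add_sdiff (μ := μ) _
      (U := closedBall y₁ s₁) ((sdiff_subset (t := closedBall y s')).trans h.subset)]
  have hfar₁ : δ * μ.real E ≤ μ.real ((f₁ \ closedBall y₁ s₁') ∩ closedBall y s) := by
    linarith [h₁.le_measure_sdiff, h.measure_sdiff, measureReal_le_inter_add_sdiff (μ := μ) _
      (U := closedBall y s) ((sdiff_subset (t := closedBall y₁ s₁')).trans h₁.subset)]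
  obtain ⟨a, ha, hlt⟩ := h₁.exists_inner_lt hϑ hφ hφζ hζ0 hζ hτ hf₁
    (hdisj.mono_left (inter_subset_left.trans sdiff_subset)) inter_subset_right hfar
  obtain ⟨a₁, ha₁, hlt₁⟩ := h.exists_inner_lt hϑ hφ hφζ hζ0 hζ hτ hf
    (hdisj.symm.mono_left (inter_subset_left.trans sdiff_subset)) inter_subset_right hfar₁
  exact (hlt a₁ ha₁.1).not_gt (hlt₁ a ha.1)

lemma isTopSet_of_tailRadius {δ₀ δ' : ℝ} (hnull : ∀ s, μ (sphere y s) = 0) (hρ : 0 < ρ)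
    (hE : 0 < μ.real E) (hc : 0 < c) (hδ : 0 < δ) (hδδ' : δ ≤ δ') (hδ' : δ' < 1) (hδ₀ : δ₀ ≤ c)
    (hδ₀1 : δ₀ ≤ 1)
    (hfE : f ⊆ E) (hfρ : f ⊆ closedBall y ρ) (hf : c * μ.real E < μ.real f)
    (hdist : ∀ a ∈ f, ∀ a' ∈ f, dist a y ≤ 2 * dist a' y)
    (hX : μ.real (closedBall y (tailRadius μ E y ρ δ) ∩ X) ≤ (c - c * δ / 2) * μ.real E)
    (hstable : tailRadius μ E y ρ δ ≤ 2 * tailRadius μ E y ρ δ₀ →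
      tailRadius μ E y ρ δ ≤ (1 + τ) * tailRadius μ E y ρ δ')
    (hgap : μ.real (f \ closedBall y (tailRadius μ E y ρ δ')) ∉
      Ico (c * δ / 2 * μ.real E) (2 * (δ * μ.real E)))
    (hφζ : φ ≤ ζ) (hfsector : f ⊆ sector y ϑ φ) (hsector : sector y ϑ ζ ⊆ X) :
    IsTopSet μ c δ φ ζ τ ϑ E y (tailRadius μ E y ρ δ') (tailRadius μ E y ρ δ) X f := by
  have hcδ : 0 < c * δ / 2 * μ.real E := by positivity
  have htail : c * δ / 2 * μ.real E < μ.real (f \ closedBall y (tailRadius μ E y ρ δ)) := by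
    have hinter := measureReal_mono (μ := μ) (inter_comm f _ ▸ inter_subset_inter_right
      (closedBall y (tailRadius μ E y ρ δ))
      (hfsector.trans ((sector_subset_sector hφζ).trans hsector)))
    have := measureReal_inter_add_sdiff (μ := μ) (s := f)
      (measurableSet_closedBall (x := y) (ε := tailRadius μ E y ρ δ))
    linarith
  obtain ⟨a, ha, hlt⟩ := exists_mem_lt_dist_of_measureReal_sdiff_pos (hcδ.trans htail)
  have hle : tailRadius μ E y ρ δ ≤ 2 * tailRadius μ E y ρ δ₀ :=
    tailRadius_le_two_mul hnull hρ.le hδ₀1 hfE hfρ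
      ((mul_le_mul_of_nonneg_right hδ₀ hE.le).trans_lt hf) hdist (hcδ.trans htail)
  refine ⟨tailRadius_pos hnull hρ hδ' hE, hstable hle, hfE, hfsector, hsector, hf, by linarith,
    measureReal_sdiff_tailRadius hnull hρ.le (hδδ'.trans hδ'.le) (hlt.trans_le (hfρ ha)), ?_⟩
  by_contra! hlt'
  refine hgap ⟨htail.le.trans (measureReal_mono (sdiff_subset_sdiff_right ?_)), hlt'⟩
  exact closedBall_subset_closedBall (tailRadius_le_tailRadius hnull hρ.le hδ'.le hδδ')

end TopBalls

section TailLevels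

/-- The proportions of mass at which the tails of the measure are compared. The ratio of consecutive
levels is small enough for the windows `[c δ / 2, 2 δ)` around the levels `δ` to be disjoint. -/
noncomputable def tailLevel (c : ℝ) (i : ℕ) : ℝ :=
  c / 2 * (c / 4) ^ i

variable {c : ℝ}

lemma tailLevel_pos (hc : 0 < c) (i : ℕ) : 0 < tailLevel c i := by
  unfold tailLevel
  positivity

lemma tailLevel_antitone (hc : 0 < c) (hc1 : c < 1) : Antitone (tailLevel c) := fun _ _ h =>
  mul_le_mul_of_nonneg_left (pow_le_pow_of_le_one (by positivity) (by linarith) h) (by positivity)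

lemma tailLevel_zero : tailLevel c 0 = c / 2 := by
  rw [tailLevel, pow_zero, mul_one]

lemma disjoint_window_tailLevel (hc : 0 < c) (hc1 : c < 1) {M : ℝ} (hM : 0 ≤ M) {i k : ℕ}
    (h : i < k) :
    Disjoint (Ico (c * tailLevel c i / 2 * M) (2 * (tailLevel c i * M)))
      (Ico (c * tailLevel c k / 2 * M) (2 * (tailLevel c k * M))) := by
  have hle : tailLevel c k ≤ c / 4 * tailLevel c i :=
    (tailLevel_antitone hc hc1 (Nat.succ_le_of_lt h)).trans_eq (by
      rw [tailLevel, tailLevel, Nat.succ_eq_add_one, pow_succ]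
      ring)
  refine disjoint_left.2 fun a ha ha' => ?_
  have := mul_le_mul_of_nonneg_right hle hM
  linarith [ha.1, ha'.2]

end TailLevels

section LineDirections

variable {F : Type*} [NormedAddCommGroup F] [InnerProductSpace ℝ F]

lemma AngularlySeparated.closedBall_subset_sector {β : ℝ} {B B' : F × ℝ}
    (h : AngularlySeparated β B B') {y z ϑ : F} {k k' : ℝ} (hk : k • ϑ + z ∈ closedBall B.1 B.2)
    (hk' : k' • ϑ + z ∈ closedBall B'.1 B'.2) (hlt : k < k') (hy : y ∈ closedBall B.1 B.2) :
    closedBall B'.1 B'.2 ⊆ sector y ϑ (2 * β) := by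
  intro a ha
  refine ⟨(h y hy a ha).1, ?_⟩
  have := h.angle_sub_le hk hy hk' ha
  rwa [add_sub_add_right_eq_sub, ← sub_smul,
    angle_smul_right_of_pos _ _ (sub_pos.2 hlt)] at this

variable {n : ℕ} {y θ ϑ v : EuclideanSpace ℝ (Fin n)} {α ζ ζ' : ℝ}
  {V : Submodule ℝ (EuclideanSpace ℝ (Fin n))}

lemma sector_subset_coneX (hα0 : 0 < α) (hα1 : α ≤ 1) (hϑ : ‖ϑ‖ = 1) (hv : v ∈ V) (hv1 : ‖v‖ = 1)
    (hζ : ζ < ζ') (hζ0 : 0 ≤ ζ') (hζ' : ζ' ≤ arcsin α) (h : cos (arcsin α - ζ') ≤ |⟪ϑ, v⟫|) :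
    sector y ϑ ζ ⊆ coneX y V α := by
  intro a ha
  obtain ⟨w, hw, hw1, hϑw⟩ : ∃ w ∈ V, ‖w‖ = 1 ∧ cos (arcsin α - ζ') ≤ ⟪ϑ, w⟫ := by
    rcases abs_choice ⟪ϑ, v⟫ with h0 | h0
    · exact ⟨v, hv, hv1, h0 ▸ h⟩
    · exact ⟨-v, V.neg_mem hv, by rwa [norm_neg], by rwa [inner_neg_right, ← h0]⟩
  have hw0 : w ≠ 0 := norm_ne_zero_iff.1 (hw1 ▸ one_ne_zero)
  have hangle : angle ϑ w ≤ arcsin α - ζ' :=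
    (angle_le_iff_cos_mul_le_inner (norm_ne_zero_iff.1 (hϑ ▸ one_ne_zero)) hw0 (by linarith)
      (by linarith [arcsin_le_pi_div_two α, pi_pos])).2 (by rwa [hϑ, hw1, mul_one, mul_one])
  refine mem_coneX_of_angle_lt hw hw0 ha.1 hα0 hα1 ?_
  linarith [angle_le_angle_add_angle (a - y) ϑ w, ha.2]

lemma disjoint_sector_almostHalfSpace_or (hα0 : 0 < α) (hα1 : α ≤ 1) (hϑ : ‖ϑ‖ = 1) (hθ : ‖θ‖ = 1)
    (hζ : ζ ≤ arcsin α) :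
    Disjoint (sector y ϑ ζ) (almostHalfSpace y θ α) ∨
      Disjoint (sector y (-ϑ) ζ) (almostHalfSpace y θ α) := by
  by_contra! hcon
  obtain ⟨a, ha, haH⟩ := not_disjoint_iff.1 hcon.1
  obtain ⟨a', ha', haH'⟩ := not_disjoint_iff.1 hcon.2
  have hϑπ := angle_self_neg_of_nonzero (norm_ne_zero_iff.1 (hϑ ▸ one_ne_zero) : ϑ ≠ 0)
  have hangle := angle_comm ϑ (a - y) ▸ ha.2
  have hangle' := angle_comm θ (a' - y) ▸ angle_lt_of_mem_almostHalfSpace hθ hα0 hα1 haH'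
  linarith [angle_le_angle_add_angle ϑ (a - y) (-ϑ), angle_le_angle_add_angle (a - y) θ (-ϑ),
    angle_le_angle_add_angle θ (a' - y) (-ϑ), ha'.2, angle_lt_of_mem_almostHalfSpace hθ hα0 hα1 haH]

end LineDirections

section ExtremalBalls

variable {n K q N J : ℕ} {α β c c' κ ζ ζ' τ δ r : ℝ} {x y : EuclideanSpace ℝ (Fin n)}
  {μ : Measure (EuclideanSpace ℝ (Fin n))} {ℬ : Finset (EuclideanSpace ℝ (Fin n) × ℝ)}
  {A : Set (EuclideanSpace ℝ (Fin n))} [IsFiniteMeasure μ]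

lemma measureReal_closedBall_tailRadius_inter_le {X : Set (EuclideanSpace ℝ (Fin n))}
    (hnull : ∀ s, μ (sphere y s) = 0) (hr : 0 ≤ r) (hy : y ∈ closedBall x r) (hc : 0 ≤ c)
    (hδ : 0 ≤ δ) (hδ1 : δ ≤ 1) (hc' : c' ≤ c + c * δ / 2)
    (hX : μ.real (closedBall y (tailRadius μ (closedBall x (3 * r)) y (2 * r) δ) ∩ X) ≤
      c' * μ.real (closedBall y (tailRadius μ (closedBall x (3 * r)) y (2 * r) δ))) :
    μ.real (closedBall y (tailRadius μ (closedBall x (3 * r)) y (2 * r) δ) ∩ X) ≤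
      (c - c * δ / 2) * μ.real (closedBall x (3 * r)) := by
  set E := closedBall x (3 * r)
  set s := tailRadius μ E y (2 * r) δ
  obtain ⟨⟨-, hs⟩, htail⟩ := tailRadius_mem (E := E) hnull (mul_nonneg zero_le_two hr) hδ1
  have hsE : closedBall y s ⊆ E :=
    closedBall_subset_closedBall' (by linarith [mem_closedBall.1 hy])
  rw [measureReal_sdiff hsE measurableSet_closedBall] at htail
  calc μ.real (closedBall y s ∩ X) ≤ c' * μ.real (closedBall y s) := hX
    _ ≤ (c + c * δ / 2) * ((1 - δ) * μ.real E) :=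
        mul_le_mul hc' (by linarith) measureReal_nonneg (by positivity)
    _ = (c - c * δ / 2 - c * δ ^ 2 / 2) * μ.real E := by ring
    _ ≤ (c - c * δ / 2) * μ.real E := mul_le_mul_of_nonneg_right
        (by linarith [mul_nonneg hc (sq_nonneg δ)]) measureReal_nonneg

lemma IsSparseScale.exists_isTopSet (h : IsSparseScale μ 1 K q α β c c' c x r ℬ A) (hn : 2 ≤ n)
    (hβ : β ≤ π / 2) (hsin : sin β ≤ 1 / 4) (hβζ : 2 * β ≤ ζ) (hnull : ∀ y s, μ (sphere y s) = 0)
    (hc : 0 < c) (hc1 : c < 1) (hN : ℬ.card ≤ N) (hJ : N < J * τ)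
    (hc' : c' ≤ c + c * tailLevel c (J * (N ^ 2 + 1)) / 2) :
    ∃ (δ : ℝ) (y θ : EuclideanSpace ℝ (Fin n) × ℝ → EuclideanSpace ℝ (Fin n))
      (s' s : EuclideanSpace ℝ (Fin n) × ℝ → ℝ)
      (V : EuclideanSpace ℝ (Fin n) × ℝ → Submodule ℝ (EuclideanSpace ℝ (Fin n))),
      ∀ b ∈ ℬ, y b ∈ closedBall b.1 b.2 ∧ ‖θ b‖ = 1 ∧ Module.finrank ℝ (V b) = 1 ∧
        ∀ ϑ, ∀ f ∈ ℬ, closedBall f.1 f.2 ⊆ sector (y b) ϑ (2 * β) →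
          sector (y b) ϑ ζ ⊆ coneX (y b) (V b) α \ almostHalfSpace (y b) (θ b) α →
          IsTopSet μ c δ (2 * β) ζ τ ϑ (closedBall x (3 * r)) (y b) (s' b) (s b)
            (coneX (y b) (V b) α \ almostHalfSpace (y b) (θ b) α) (closedBall f.1 f.2) := by
  set E := closedBall x (3 * r)
  have hr := h.scale_pos
  have hδ0 := tailLevel_pos hc
  have hδanti := tailLevel_antitone hc hc1
  have hδ1 : ∀ i, tailLevel c i < 1 := fun i => by
    linarith [hδanti (Nat.zero_le i), tailLevel_zero (c := c)]
  choose! y hyb hyA using fun b hb => h.exists_mem le_rfl (B := b) hb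
  have hyx : ∀ b ∈ ℬ, y b ∈ closedBall x r := fun b hb => h.subset b hb (hyb b hb)
  set s : EuclideanSpace ℝ (Fin n) × ℝ → ℕ → ℝ := fun b i =>
    tailRadius μ E (y b) (2 * r) (tailLevel c i)
  have hs : ∀ b i, 0 < s b i := fun b i =>
    tailRadius_pos (hnull _) (by linarith) (hδ1 i) h.measure_pos
  have hsr : ∀ b i, s b i ≤ 2 * r := fun b i =>
    (tailRadius_mem (hnull _) (by linarith) (hδ1 i).le).1.2
  obtain ⟨p, i, hpi, hi, hstable, hgap⟩ := exists_stable_level hN hJ (fun b _ => hs b 0)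
    (fun b _ i k hik => tailRadius_le_tailRadius (hnull _) (by linarith) (hδ1 i).le (hδanti hik))
    (fun b f p => μ.real (closedBall f.1 f.2 \ closedBall (y b) (s b p)))
    (fun i k hik => disjoint_window_tailLevel hc hc1 h.measure_pos.le hik)
  choose! θ V hθ hV hsparse using fun b hb =>
    h.sparse (y b) (hyA b hb) (s b i) (hs b i) (hsr b i)
  refine ⟨tailLevel c i, y, θ, fun b => s b p, fun b => s b i, V, fun b hb =>
    ⟨hyb b hb, hθ b hb, hV b hb, fun ϑ f hf hfϑ hϑX => ?_⟩⟩
  have hne : b ≠ f := by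
    rintro rfl
    exact (hfϑ (hyb b hb)).1 (sub_self _)
  have hX := measureReal_closedBall_tailRadius_inter_le (hnull (y b)) hr.le (hyx b hb) hc.le
    (hδ0 i).le (hδ1 i).le (hc'.trans (by gcongr; exact hδanti hi))
    (by simpa only [inter_sdiff_assoc] using hsparse b hb)
  exact isTopSet_of_tailRadius (hnull _) (by linarith) h.measure_pos hc (hδ0 i) (hδanti hpi)
    (hδ1 p) (by rw [tailLevel_zero]; linarith) (hδ1 0).le (h.ball_subset hf)
    (h.subset_closedBall_two_mul hf (hyx b hb)) (h.lt_measure f hf)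
    (fun a ha a' ha' => (h.separated b hb f hf hne).dist_le_two_mul
      (by rwa [finrank_euclideanSpace_fin]) hβ hsin (hyb b hb) ha ha')
    hX (hstable b hb) (hgap b hb f hf) hβζ hfϑ hϑX

lemma IsSparseScale.exists_forall_card_le_one (h : IsSparseScale μ 1 K q α β c c' c x r ℬ A)
    (hn : 2 ≤ n) (hβ : 2 * β < π / 2) (hsin : sin β ≤ 1 / 4) (hβζ : 2 * β ≤ ζ) (hζ0 : 0 ≤ ζ)
    (hζ : ζ ≤ π / 2) (hτ : (1 + τ) * cos ζ ≤ cos (2 * β)) (hnull : ∀ y s, μ (sphere y s) = 0)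
    (hc : 0 < c) (hc1 : c < 1) (hN : ℬ.card ≤ N) (hJ : N < J * τ)
    (hc' : c' ≤ c + c * tailLevel c (J * (N ^ 2 + 1)) / 2) :
    ∃ (y θ : EuclideanSpace ℝ (Fin n) × ℝ → EuclideanSpace ℝ (Fin n))
      (V : EuclideanSpace ℝ (Fin n) × ℝ → Submodule ℝ (EuclideanSpace ℝ (Fin n))),
      (∀ b ∈ ℬ, y b ∈ closedBall b.1 b.2 ∧ ‖θ b‖ = 1 ∧ Module.finrank ℝ (V b) = 1) ∧
      ∀ ϑ, ‖ϑ‖ = 1 → ∃ F : Finset (EuclideanSpace ℝ (Fin n) × ℝ), F.card ≤ 1 ∧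
        ∀ b ∈ ℬ, ∀ f ∈ ℬ, closedBall f.1 f.2 ⊆ sector (y b) ϑ (2 * β) →
          sector (y b) ϑ ζ ⊆ coneX (y b) (V b) α \ almostHalfSpace (y b) (θ b) α → f ∈ F := by
  obtain ⟨δ, y, θ, s', s, V, htop⟩ := h.exists_isTopSet (ζ := ζ) hn (by linarith [pi_pos]) hsin hβζ
    hnull hc hc1 hN hJ hc'
  refine ⟨y, θ, V, fun b hb => ⟨(htop b hb).1, (htop b hb).2.1, (htop b hb).2.2.1⟩, fun ϑ hϑ => ?_⟩
  refine ⟨ℬ.filter fun f => ∃ b ∈ ℬ, IsTopSet μ c δ (2 * β) ζ τ ϑ (closedBall x (3 * r)) (y b)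
    (s' b) (s b) (coneX (y b) (V b) α \ almostHalfSpace (y b) (θ b) α) (closedBall f.1 f.2), ?_, ?_⟩
  · refine Finset.card_le_one.2 fun f hf f' hf' => ?_
    obtain ⟨hfℬ, b, -, hb⟩ := Finset.mem_filter.1 hf
    obtain ⟨hfℬ', b', -, hb'⟩ := Finset.mem_filter.1 hf'
    by_contra hne
    exact hb.not_disjoint hb' hϑ hβ hβζ hζ0 hζ hτ measurableSet_closedBall measurableSet_closedBall
      (h.disjoint hfℬ hfℬ' hne)
  · exact fun b hb f hf hfϑ hϑX => Finset.mem_filter.2 ⟨hf, b, hb, (htop b hb).2.2.2 ϑ f hf hfϑ hϑX⟩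

lemma IsRichFamily.exists_lt_lt_of_translateMeets_span {d : ℕ} (h : IsRichFamily d K q β x r ℬ)
    {S : Finset (EuclideanSpace ℝ (Fin n) × ℝ)} (hS : S ⊆ ℬ) (hcard : 3 ≤ S.card)
    {ϑ z : EuclideanSpace ℝ (Fin n)} (hmeets : ∀ b ∈ S, TranslateMeets (ℝ ∙ ϑ) z b) :
    ∃ k : EuclideanSpace ℝ (Fin n) × ℝ → ℝ, (∀ b ∈ S, k b • ϑ + z ∈ closedBall b.1 b.2) ∧
      ∃ a ∈ S, ∃ b ∈ S, ∃ f ∈ S, k a < k b ∧ k b < k f := by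
  have hpoint : ∀ b ∈ S, ∃ k : ℝ, k • ϑ + z ∈ closedBall b.1 b.2 := fun b hb => by
    obtain ⟨⟨w, hw⟩, hwb⟩ := (hmeets b hb).exists_mem
    obtain ⟨k, rfl⟩ := Submodule.mem_span_singleton.1 hw
    exact ⟨k, hwb⟩
  choose! k hk using hpoint
  refine ⟨k, hk, exists_lt_lt_of_injOn hcard fun b hb b' hb' heq => ?_⟩
  by_contra hne
  exact disjoint_left.1 (h.disjoint (hS hb) (hS hb') hne) (hk b hb) (heq ▸ hk b' hb')

/-- Among three balls on a line in the direction `ϑ`, the middle one sees the outer ones in the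
directions `ϑ` and `-ϑ`, and its almost half-space can affect only one of the two. -/
lemma IsSparseScale.exists_axis (h : IsSparseScale μ 1 K q α β c c' c x r ℬ A)
    (hn : 2 ≤ n) (hα0 : 0 < α) (hα1 : α ≤ 1) (hβ0 : 0 ≤ β) (hsin : sin β ≤ 1 / 4)
    (hβζ : 2 * β < ζ) (hζ : ζ < ζ') (hζ' : ζ' ≤ arcsin α) (hτ : (1 + τ) * cos ζ ≤ cos (2 * β))
    (hnull : ∀ y s, μ (sphere y s) = 0)
    (hc : 0 < c) (hc1 : c < 1) (hN : ℬ.card ≤ N) (hJ : N < J * τ)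
    (hc' : c' ≤ c + c * tailLevel c (J * (N ^ 2 + 1)) / 2) :
    ∃ v : EuclideanSpace ℝ (Fin n) × ℝ → EuclideanSpace ℝ (Fin n), (∀ b ∈ ℬ, ‖v b‖ = 1) ∧
      ∀ ϑ, ‖ϑ‖ = 1 → ∃ F : Finset (EuclideanSpace ℝ (Fin n) × ℝ), F.card ≤ 2 ∧ ∀ z,
        (ℬ.filter fun b => b ∉ F ∧ cos (arcsin α - ζ') ≤ |⟪ϑ, v b⟫| ∧
          TranslateMeets (ℝ ∙ ϑ) z b).card < 3 := by
  have hαπ := arcsin_le_pi_div_two α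
  obtain ⟨y, θ, V, hyV, hF⟩ := h.exists_forall_card_le_one hn (by linarith) hsin hβζ.le
    (by linarith) (by linarith) hτ hnull hc hc1 hN hJ hc'
  have hv : ∀ b ∈ ℬ, ∃ v ∈ V b, ‖v‖ = 1 := fun b hb => by
    have := Module.nontrivial_of_finrank_pos (R := ℝ) ((hyV b hb).2.2 ▸ one_pos)
    obtain ⟨v, hv⟩ := exists_norm_eq (V b) zero_le_one
    exact ⟨v, v.2, hv⟩
  choose! v hvV hv1 using hv
  refine ⟨v, hv1, fun ϑ hϑ => ?_⟩
  have hϑ' : ‖-ϑ‖ = 1 := by rwa [norm_neg]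
  obtain ⟨F, hFcard, hF₁⟩ := hF ϑ hϑ
  obtain ⟨F', hFcard', hF₂⟩ := hF (-ϑ) hϑ'
  refine ⟨F ∪ F', (Finset.card_union_le _ _).trans (Nat.add_le_add hFcard hFcard'), fun z => ?_⟩
  by_contra! hcard
  obtain ⟨k, hk, a, ha, b, hb, f, hf, hab, hbf⟩ := h.exists_lt_lt_of_translateMeets_span
    (Finset.filter_subset _ _) hcard fun b hb => (Finset.mem_filter.1 hb).2.2.2
  have hka := hk a ha
  have hkb := hk b hb
  have hkf := hk f hf
  have hkb' := hkb
  rw [← neg_smul_neg] at hka hkb'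
  rw [Finset.mem_filter, Finset.notMem_union] at ha hb hf
  have hsep : ∀ e ∈ ℬ, k b ≠ k e → AngularlySeparated β b e := fun e he hne =>
    h.separated b hb.1 e he fun heq => hne (heq ▸ rfl)
  rcases disjoint_sector_almostHalfSpace_or (y := y b) hα0 hα1 hϑ (hyV b hb.1).2.1 (hζ.le.trans hζ')
    with hdisj | hdisj
  · exact hf.2.1.1 (hF₁ b hb.1 f hf.1
      ((hsep f hf.1 hbf.ne).closedBall_subset_sector hkb hkf hbf (hyV b hb.1).1)
      (subset_sdiff.2 ⟨sector_subset_coneX hα0 hα1 hϑ (hvV b hb.1) (hv1 b hb.1) hζ (by linarith) hζ'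
        hb.2.2.1, hdisj⟩))
  · exact ha.2.1.2 (hF₂ b hb.1 a ha.1
      ((hsep a ha.1 hab.ne').closedBall_subset_sector hkb' hka (neg_lt_neg hab) (hyV b hb.1).1)
      (subset_sdiff.2 ⟨sector_subset_coneX hα0 hα1 hϑ' (hvV b hb.1) (hv1 b hb.1) hζ (by linarith)
        hζ' (by rw [inner_neg_left, abs_neg]; exact hb.2.2.1), hdisj⟩))

end ExtremalBalls

section PolarCoordinates

lemma lintegral_norm_eq_mul_lintegral_Ioi {E : Type*} [NormedAddCommGroup E] [NormedSpace ℝ E]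
    [FiniteDimensional ℝ E] [Nontrivial E] [MeasurableSpace E] [BorelSpace E] (μ : Measure E)
    [μ.IsAddHaarMeasure] {f : ℝ → ℝ≥0∞} (hf : Measurable f) :
    ∫⁻ x, f ‖x‖ ∂μ = μ.toSphere univ *
      ∫⁻ r in Ioi 0, ENNReal.ofReal (r ^ (Module.finrank ℝ E - 1)) * f r := by
  have hpow : Measurable fun r : Ioi (0 : ℝ) =>
      ENNReal.ofReal (r.1 ^ (Module.finrank ℝ E - 1)) := by fun_prop
  calc ∫⁻ x, f ‖x‖ ∂μ
    _ = ∫⁻ x : ({0}ᶜ : Set E), f ‖x.1‖ ∂(μ.comap (↑)) := by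
      rw [lintegral_subtype_comap (measurableSet_singleton _).compl (fun x => f ‖x‖),
        restrict_compl_singleton]
    _ = ∫⁻ p, f p.2 ∂(μ.toSphere.prod (Measure.volumeIoiPow (Module.finrank ℝ E - 1))) := by
      rw [← μ.measurePreserving_homeomorphUnitSphereProd.lintegral_comp (by fun_prop)]
      simp only [homeomorphUnitSphereProd_apply_snd_coe]
    _ = _ := by
      rw [lintegral_prod _ (by fun_prop)]
      simp only [lintegral_const]
      rw [mul_comm, Measure.volumeIoiPow,
        lintegral_withDensity_eq_lintegral_mul _ hpow (by fun_prop)]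
      exact congrArg _ (lintegral_subtype_comap measurableSet_Ioi
        fun r => ENNReal.ofReal (r ^ (Module.finrank ℝ E - 1)) * f r)

variable {k : ℕ}

lemma exists_measurePreserving_fst_eq_inner {v : EuclideanSpace ℝ (Fin (k + 1))} (hv : ‖v‖ = 1) :
    ∃ e : EuclideanSpace ℝ (Fin (k + 1)) → ℝ × EuclideanSpace ℝ (Fin k), MeasurePreserving e ∧
      ∀ x, (e x).1 = ⟪v, x⟫ ∧ ‖x‖ ^ 2 = (e x).1 ^ 2 + ‖(e x).2‖ ^ 2 := by
  obtain ⟨b, hb⟩ := Orthonormal.exists_orthonormalBasis_extension_of_card_eq (𝕜 := ℝ)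
    (E := EuclideanSpace ℝ (Fin (k + 1))) (ι := Fin (k + 1)) (by simp) (v := fun _ => v) (s := {0})
    (by rw [orthonormal_iff_ite]; rintro ⟨i, rfl⟩ ⟨j, rfl⟩; simp [hv])
  have hsplit : MeasurePreserving
      (Prod.map id (WithLp.toLp 2) : ℝ × (Fin k → ℝ) → ℝ × EuclideanSpace ℝ (Fin k)) :=
    (MeasurePreserving.id volume).prod (PiLp.volume_preserving_toLp (Fin k))
  refine ⟨fun x => (b.repr x 0, WithLp.toLp 2 fun i => b.repr x i.succ),
    ((hsplit.comp (volume_preserving_piFinSuccAbove (fun _ : Fin (k + 1) => ℝ) 0)).comp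
      (PiLp.volume_preserving_ofLp (Fin (k + 1)))).comp b.measurePreserving_repr, fun x => ⟨?_, ?_⟩⟩
  · simp only [b.repr_apply_apply, hb 0 rfl]
  · rw [← b.repr.norm_map x, EuclideanSpace.norm_sq_eq, EuclideanSpace.norm_sq_eq,
      Fin.sum_univ_succ]
    simp

lemma volume_preimage_fst_norm (hk : 1 ≤ k) {T : Set (ℝ × ℝ)} (hT : MeasurableSet T) :
    volume ((fun p : ℝ × EuclideanSpace ℝ (Fin k) => (p.1, ‖p.2‖)) ⁻¹' T) =
      (volume : Measure (EuclideanSpace ℝ (Fin k))).toSphere univ *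
        ∫⁻ p in T ∩ {p | 0 < p.2}, ENNReal.ofReal (p.2 ^ (k - 1)) := by
  have : Nonempty (Fin k) := ⟨⟨0, hk⟩⟩
  have hpos : MeasurableSet {p : ℝ × ℝ | 0 < p.2} := measurableSet_lt (by fun_prop) (by fun_prop)
  have hslice (s : ℝ) : volume ((fun y : EuclideanSpace ℝ (Fin k) => (s, ‖y‖)) ⁻¹' T) =
      (volume : Measure (EuclideanSpace ℝ (Fin k))).toSphere univ *
        ∫⁻ ρ, (T ∩ {p | 0 < p.2}).indicator (fun p => ENNReal.ofReal (p.2 ^ (k - 1))) (s, ρ) := by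
    have hs : MeasurableSet {ρ | (s, ρ) ∈ T} := hT.preimage (by fun_prop)
    rw [← lintegral_indicator_one (hT.preimage (by fun_prop))]
    refine (lintegral_norm_eq_mul_lintegral_Ioi volume (measurable_one.indicator hs)).trans ?_
    rw [finrank_euclideanSpace_fin, ← lintegral_indicator measurableSet_Ioi]
    congr! 3 with ρ
    by_cases hρ : 0 < ρ <;> by_cases hmem : (s, ρ) ∈ T <;> simp [indicator_apply, hρ, hmem]
  have hmeas : Measurable
      ((T ∩ {p | 0 < p.2}).indicator fun p : ℝ × ℝ => ENNReal.ofReal (p.2 ^ (k - 1))) :=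
    Measurable.indicator (by fun_prop) (hT.inter hpos)
  rw [Measure.volume_eq_prod, Measure.prod_apply (hT.preimage (by fun_prop))]
  simp only [← preimage_comp, Function.comp_def, hslice]
  rw [lintegral_const_mul _ hmeas.lintegral_prod_right', ← lintegral_indicator (hT.inter hpos),
    Measure.volume_eq_prod, lintegral_prod _ hmeas.aemeasurable]

/-- The points of the closed unit disc that make an angle at most `φ` with the first axis. -/
def discSector (φ : ℝ) : Set (ℝ × ℝ) :=
  {p | √(p.1 ^ 2 + p.2 ^ 2) ≤ 1 ∧ cos φ * √(p.1 ^ 2 + p.2 ^ 2) ≤ p.1}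

lemma measurableSet_discSector (φ : ℝ) : MeasurableSet (discSector φ) :=
  have hnorm : Measurable fun p : ℝ × ℝ => √(p.1 ^ 2 + p.2 ^ 2) := by fun_prop
  (measurableSet_le hnorm measurable_const).inter
    (measurableSet_le (hnorm.const_mul _) measurable_fst)

lemma polarCoord_symm_mem_discSector_iff {φ r ϑ : ℝ} (h0 : 0 ≤ φ) (hπ : φ < π) (hr : 0 < r)
    (hϑ : ϑ ∈ Ioo (-π) π) :
    polarCoord.symm (r, ϑ) ∈ discSector φ ∩ {p | 0 < p.2} ↔ r ∈ Ioc 0 1 ∧ ϑ ∈ Ioc 0 φ := by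
  have hnorm : √((r * cos ϑ) ^ 2 + (r * sin ϑ) ^ 2) = r := by
    rw [mul_pow, mul_pow, ← mul_add, cos_sq_add_sin_sq, mul_one, sqrt_sq hr.le]
  have hsin : 0 < sin ϑ ↔ 0 < ϑ :=
    ⟨fun h => by_contra fun hneg =>
      h.not_ge (sin_nonpos_of_nonpos_of_neg_pi_le (not_lt.1 hneg) hϑ.1.le),
      fun h => sin_pos_of_pos_of_lt_pi h hϑ.2⟩
  have hcos (hpos : 0 < ϑ) : cos φ ≤ cos ϑ ↔ ϑ ≤ φ :=
    strictAntiOn_cos.le_iff_ge ⟨h0, hπ.le⟩ ⟨hpos.le, hϑ.2.le⟩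
  simp only [discSector, polarCoord_symm_apply, mem_inter_iff, mem_ofPred_eq, hnorm, mul_comm _ r,
    mul_le_mul_iff_right₀ hr, mul_pos_iff_of_pos_left hr, hsin, mem_Ioc, hr, true_and]
  grind

lemma setLIntegral_discSector (j : ℕ) {φ : ℝ} (h0 : 0 ≤ φ) (hπ : φ < π) :
    ∫⁻ p in discSector φ ∩ {p | 0 < p.2}, ENNReal.ofReal (p.2 ^ j) =
      (∫⁻ r in Ioc (0 : ℝ) 1, ENNReal.ofReal (r ^ (j + 1))) *
        ∫⁻ ϑ in Ioc 0 φ, ENNReal.ofReal (sin ϑ ^ j) := by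
  have hpolar : ∀ p ∈ polarCoord.target, ENNReal.ofReal p.1 •
      (discSector φ ∩ {p | 0 < p.2}).indicator (fun p => ENNReal.ofReal (p.2 ^ j))
        (polarCoord.symm p) =
      (Ioc 0 1).indicator (fun r => ENNReal.ofReal (r ^ (j + 1))) p.1 *
        (Ioc 0 φ).indicator (fun ϑ => ENNReal.ofReal (sin ϑ ^ j)) p.2 := by
    rintro ⟨r, ϑ⟩ ⟨hr, hϑ⟩
    have hmem := polarCoord_symm_mem_discSector_iff h0 hπ hr hϑ
    by_cases hcap : r ∈ Ioc 0 1 ∧ ϑ ∈ Ioc 0 φ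
    · have hr0 : 0 ≤ r := hcap.1.1.le
      rw [indicator_of_mem (hmem.2 hcap), indicator_of_mem hcap.1, indicator_of_mem hcap.2,
        polarCoord_symm_apply, smul_eq_mul, ← ENNReal.ofReal_mul hr0,
        ← ENNReal.ofReal_mul (by positivity)]
      congr 1
      ring
    · rw [indicator_of_notMem (mt hmem.1 hcap), smul_zero]
      rcases not_and_or.1 hcap with h | h <;> simp [indicator_of_notMem h]
  have hmeas : MeasurableSet (discSector φ ∩ {p | 0 < p.2}) :=
    (measurableSet_discSector φ).inter (measurableSet_lt measurable_const measurable_snd)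
  have hr : Ioc (0 : ℝ) 1 ∩ Ioi 0 = Ioc 0 1 := inter_eq_left.2 Ioc_subset_Ioi_self
  have hϑ : Ioc 0 φ ∩ Ioo (-π) π = Ioc 0 φ :=
    inter_eq_left.2 fun ϑ h => ⟨(neg_lt_zero.2 pi_pos).trans h.1, h.2.trans_lt hπ⟩
  rw [← lintegral_indicator hmeas, ← lintegral_comp_polarCoord_symm,
    setLIntegral_congr_fun polarCoord.open_target.measurableSet hpolar, polarCoord_target,
    Measure.volume_eq_prod, ← Measure.prod_restrict,
    lintegral_prod_mul (Measurable.indicator (by fun_prop) measurableSet_Ioc).aemeasurable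
      (Measurable.indicator (by fun_prop) measurableSet_Ioc).aemeasurable,
    setLIntegral_indicator measurableSet_Ioc, setLIntegral_indicator measurableSet_Ioc, hr, hϑ]

lemma exists_volume_cap_eq (hk : 1 ≤ k) : ∃ C : ℝ≥0∞,
    ∀ v : EuclideanSpace ℝ (Fin (k + 1)), ‖v‖ = 1 → ∀ φ, 0 ≤ φ → φ < π →
      volume (closedBall 0 1 ∩ {x | cos φ * ‖x‖ ≤ ⟪v, x⟫}) =
        C * ∫⁻ ϑ in Ioc 0 φ, ENNReal.ofReal (sin ϑ ^ (k - 1)) := by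
  refine ⟨(volume : Measure (EuclideanSpace ℝ (Fin k))).toSphere univ *
    ∫⁻ r in Ioc (0 : ℝ) 1, ENNReal.ofReal (r ^ (k - 1 + 1)), fun v hv φ h0 hπ => ?_⟩
  obtain ⟨e, he, hev⟩ := exists_measurePreserving_fst_eq_inner hv
  have hpre : closedBall 0 1 ∩ {x | cos φ * ‖x‖ ≤ ⟪v, x⟫} =
      e ⁻¹' ((fun p => (p.1, ‖p.2‖)) ⁻¹' discSector φ) := by
    ext x
    have hnorm : √(⟪v, x⟫ ^ 2 + ‖(e x).2‖ ^ 2) = ‖x‖ := by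
      rw [← (hev x).1, ← (hev x).2, sqrt_sq (norm_nonneg x)]
    simp only [discSector, mem_inter_iff, mem_closedBall_zero_iff, mem_preimage, mem_ofPred_eq,
      (hev x).1, hnorm]
  rw [hpre, he.measure_preimage
      ((measurableSet_discSector φ).preimage (by fun_prop)).nullMeasurableSet,
    volume_preimage_fst_norm hk (measurableSet_discSector φ),
    setLIntegral_discSector (k - 1) h0 hπ, mul_assoc]

end PolarCoordinates

section CapFunctions

lemma convexOn_integral_sin_pow (j : ℕ) :
    ConvexOn ℝ (Icc 0 (π / 2)) fun φ => ∫ ϑ in (0 : ℝ)..φ, sin ϑ ^ j := by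
  have hderiv (φ : ℝ) : HasDerivAt (fun φ => ∫ ϑ in (0 : ℝ)..φ, sin ϑ ^ j) (sin φ ^ j) φ :=
    intervalIntegral.integral_hasDerivAt_right (Continuous.intervalIntegrable (by fun_prop) _ _)
      (Continuous.stronglyMeasurableAtFilter (by fun_prop) _ _) (by fun_prop)
  refine MonotoneOn.convexOn_of_deriv (convex_Icc _ _)
    (fun φ _ => (hderiv φ).continuousAt.continuousWithinAt)
    (fun φ _ => (hderiv φ).differentiableAt.differentiableWithinAt) fun φ hφ ψ hψ hle => ?_
  rw [interior_Icc] at hφ hψ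
  rw [(hderiv φ).deriv, (hderiv ψ).deriv]
  exact pow_le_pow_left₀ (sin_nonneg_of_nonneg_of_le_pi hφ.1.le (by linarith [hφ.2, pi_pos]))
    (sin_le_sin_of_le_of_le_pi_div_two (by linarith [hφ.1, pi_pos]) hψ.2.le hle) j

lemma toReal_lintegral_sin_pow (j : ℕ) {φ : ℝ} (h0 : 0 ≤ φ) (hπ : φ ≤ π) :
    (∫⁻ ϑ in Ioc 0 φ, ENNReal.ofReal (sin ϑ ^ j)).toReal = ∫ ϑ in (0 : ℝ)..φ, sin ϑ ^ j := by
  rw [intervalIntegral.integral_of_le h0, integral_eq_lintegral_of_nonneg_ae _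
    (Continuous.aestronglyMeasurable (by fun_prop))]
  filter_upwards [ae_restrict_mem measurableSet_Ioc] with ϑ hϑ
  exact pow_nonneg (sin_nonneg_of_nonneg_of_le_pi hϑ.1.le (hϑ.2.trans hπ)) j

variable {n : ℕ} {P : Measure (EuclideanSpace ℝ (Fin n))} {v x : EuclideanSpace ℝ (Fin n)} {φ : ℝ}

/-- The closed double cone of half-angle `φ` around the line spanned by `v`: the `x` whose line
makes an angle at most `φ` with it, together with `0`. -/
def doubleCone (v : EuclideanSpace ℝ (Fin n)) (φ : ℝ) : Set (EuclideanSpace ℝ (Fin n)) :=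
  {x | cos φ * (‖v‖ * ‖x‖) ≤ |⟪v, x⟫|}

lemma measurableSet_doubleCone : MeasurableSet (doubleCone v φ) :=
  measurableSet_le (by fun_prop) (by fun_prop)

lemma mem_doubleCone_comm : x ∈ doubleCone v φ ↔ v ∈ doubleCone x φ := by
  rw [doubleCone, doubleCone, mem_ofPred_eq, mem_ofPred_eq, mul_comm ‖x‖, real_inner_comm]

lemma doubleCone_smul {a : ℝ} (ha : a ≠ 0) : doubleCone (a • v) φ = doubleCone v φ := by
  ext x
  rw [doubleCone, doubleCone, mem_ofPred_eq, mem_ofPred_eq, norm_smul, real_inner_smul_left,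
    abs_mul, norm_eq_abs, mul_assoc, mul_left_comm, mul_le_mul_iff_right₀ (abs_pos.2 ha)]

lemma mem_doubleCone_of_norm_eq_one (hv : ‖v‖ = 1) :
    x ∈ doubleCone v φ ↔ cos φ * ‖x‖ ≤ |⟪v, x⟫| := by
  rw [doubleCone, mem_ofPred_eq, hv, one_mul]

lemma measureReal_doubleCone_eq_add [IsFiniteMeasure P] (hP : P {0} = 0) (hv : ‖v‖ = 1)
    (hφ : 0 < cos φ) : P.real (doubleCone v φ) =
      P.real {x | cos φ * ‖x‖ ≤ ⟪v, x⟫} + P.real {x | cos φ * ‖x‖ ≤ ⟪-v, x⟫} := by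
  have hunion : doubleCone v φ =
      {x | cos φ * ‖x‖ ≤ ⟪v, x⟫} ∪ {x | cos φ * ‖x‖ ≤ ⟪-v, x⟫} := by
    ext x
    simp only [mem_doubleCone_of_norm_eq_one hv, mem_ofPred_eq, mem_union, inner_neg_left, le_abs]
  have hdisj : AEDisjoint P {x | cos φ * ‖x‖ ≤ ⟪v, x⟫} {x | cos φ * ‖x‖ ≤ ⟪-v, x⟫} := by
    refine measure_mono_null (fun x hx => ?_) hP
    simp only [mem_inter_iff, mem_ofPred_eq, inner_neg_left] at hx
    refine norm_le_zero_iff.1 (nonpos_of_mul_nonpos_right ?_ hφ)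
    linarith [hx.1, hx.2]
  rw [hunion, measureReal_union₀ ?_ hdisj]
  exact (measurableSet_le (by fun_prop) (by fun_prop)).nullMeasurableSet

/-- `P` is a distribution of random directions under which every double cone of half-angle
`φ < π / 2` has the same mass `g φ`, and `g` is a convex function. -/
structure IsCapFunction (P : Measure (EuclideanSpace ℝ (Fin n))) (g : ℝ → ℝ) : Prop where
  measure_zero : P {0} = 0
  apply_zero : g 0 = 0
  convexOn : ConvexOn ℝ (Icc 0 (π / 2)) g
  measureReal_doubleCone : ∀ v, v ≠ 0 → ∀ φ, 0 ≤ φ → φ < π / 2 → P.real (doubleCone v φ) = g φ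

lemma exists_isCapFunction (hn : 2 ≤ n) :
    ∃ (P : Measure (EuclideanSpace ℝ (Fin n))) (g : ℝ → ℝ),
      IsProbabilityMeasure P ∧ IsCapFunction P g := by
  obtain ⟨k, rfl⟩ : ∃ k, n = k + 1 := ⟨n - 1, by omega⟩
  obtain ⟨C, hC⟩ := exists_volume_cap_eq (by omega : 1 ≤ k)
  set D : Set (EuclideanSpace ℝ (Fin (k + 1))) := closedBall 0 1
  have hD : IsProbabilityMeasure (ProbabilityTheory.cond volume D) :=
    ProbabilityTheory.cond_isProbabilityMeasure_of_finite
      (measure_closedBall_pos _ _ one_pos).ne' measure_closedBall_lt_top.ne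
  have hP (E : Set (EuclideanSpace ℝ (Fin (k + 1)))) :
      ProbabilityTheory.cond volume D E = (volume D)⁻¹ * volume (D ∩ E) :=
    ProbabilityTheory.cond_apply measurableSet_closedBall _ _
  have hzero : ProbabilityTheory.cond volume D {0} = 0 := by
    rw [hP, measure_mono_null inter_subset_right (measure_singleton 0), mul_zero]
  have hcap {v : EuclideanSpace ℝ (Fin (k + 1))} (hv : ‖v‖ = 1) {φ : ℝ} (h0 : 0 ≤ φ) (hπ : φ < π) :
      (ProbabilityTheory.cond volume D).real {x | cos φ * ‖x‖ ≤ ⟪v, x⟫} =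
        ((volume D)⁻¹ * C).toReal * ∫ ϑ in (0 : ℝ)..φ, sin ϑ ^ (k - 1) := by
    rw [measureReal_def, hP, hC v hv φ h0 hπ, ← mul_assoc, ENNReal.toReal_mul,
      toReal_lintegral_sin_pow _ h0 hπ.le]
  refine ⟨ProbabilityTheory.cond volume D,
    fun φ => (2 * ((volume D)⁻¹ * C).toReal) • ∫ ϑ in (0 : ℝ)..φ, sin ϑ ^ (k - 1), hD,
    hzero, by simp, (convexOn_integral_sin_pow (k - 1)).smul (by positivity),
    fun v hv φ h0 hφ => ?_⟩
  have hφπ : φ < π := by linarith [pi_pos]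
  have hunit : ‖‖v‖⁻¹ • v‖ = 1 := norm_smul_inv_norm (𝕜 := ℝ) hv
  rw [← doubleCone_smul (inv_ne_zero (norm_ne_zero_iff.2 hv)), measureReal_doubleCone_eq_add hzero
    hunit (cos_pos_of_mem_Ioo ⟨by linarith [pi_pos], hφ⟩), hcap hunit h0 hφπ,
    hcap ((norm_neg _).trans hunit) h0 hφπ, smul_eq_mul]
  ring

end CapFunctions

section Counting

variable {X ι : Type*} {S : Finset ι} {E : ι → Set X}

lemma card_filter_mem_eq_sum_indicator (x : X) :
    ((S.filter (x ∈ E ·)).card : ℝ) = ∑ b ∈ S, (E b).indicator 1 x := by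
  simp only [Finset.card_filter, Nat.cast_sum, Nat.cast_ite, Nat.cast_one, Nat.cast_zero,
    indicator_apply, Pi.one_apply]

variable [MeasurableSpace X] {P : Measure X} [IsFiniteMeasure P]

lemma integrable_card_filter_mem (hE : ∀ b ∈ S, MeasurableSet (E b)) :
    Integrable (fun x => ((S.filter (x ∈ E ·)).card : ℝ)) P := by
  simp only [card_filter_mem_eq_sum_indicator]
  exact integrable_finsetSum _ fun b hb => (integrable_const 1).indicator (hE b hb)

lemma integral_card_filter_mem (hE : ∀ b ∈ S, MeasurableSet (E b)) :
    ∫ x, ((S.filter (x ∈ E ·)).card : ℝ) ∂P = ∑ b ∈ S, P.real (E b) := by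
  simp only [card_filter_mem_eq_sum_indicator]
  rw [integral_finsetSum _ fun b hb => (integrable_const 1).indicator (hE b hb)]
  exact Finset.sum_congr rfl fun b hb => integral_indicator_one (hE b hb)

end Counting

section NetOfLines

variable {n : ℕ} {v w y : EuclideanSpace ℝ (Fin n)} {a A ψ : ℝ}

lemma exists_inner_eq_cos {F : Type*} [NormedAddCommGroup F] [InnerProductSpace ℝ F] {v w : F}
    (hv : ‖v‖ = 1) (hw : ‖w‖ = 1) (hvw : ⟪v, w⟫ = cos ψ) (hψ : sin ψ ≠ 0) (χ : ℝ) :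
    ∃ y : F, ‖y‖ = 1 ∧ ⟪v, y⟫ = cos χ ∧ ⟪y, w⟫ = cos (χ - ψ) := by
  set u := w - cos ψ • v
  have hvv : ⟪v, v⟫ = 1 := by rw [real_inner_self_eq_norm_sq, hv, one_pow]
  have hww : ⟪w, w⟫ = 1 := by rw [real_inner_self_eq_norm_sq, hw, one_pow]
  have hvu : ⟪v, u⟫ = 0 := by
    rw [inner_sub_right, real_inner_smul_right, hvv, hvw, mul_one, sub_self]
  have huw : ⟪u, w⟫ = sin ψ ^ 2 := by
    rw [inner_sub_left, real_inner_smul_left, hww, hvw, sin_sq]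
    ring
  have huu : ⟪u, u⟫ = sin ψ ^ 2 := by
    rw [show ⟪u, u⟫ = ⟪u, w⟫ - cos ψ * ⟪u, v⟫ by rw [← real_inner_smul_right, ← inner_sub_right],
      huw, real_inner_comm, hvu, mul_zero, sub_zero]
  refine ⟨cos χ • v + (sin χ / sin ψ) • u, ?_, ?_, ?_⟩
  · rw [← sq_eq_sq₀ (norm_nonneg _) zero_le_one, ← real_inner_self_eq_norm_sq]
    simp only [inner_add_left, inner_add_right, real_inner_smul_left, real_inner_smul_right, hvv,
      hvu, real_inner_comm v u, huu]
    have hcancel : sin χ / sin ψ * sin ψ = sin χ := div_mul_cancel₀ _ hψ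
    linear_combination (sin χ / sin ψ * sin ψ + sin χ) * hcancel + sin_sq_add_cos_sq χ
  · rw [inner_add_right, real_inner_smul_right, real_inner_smul_right, hvv, hvu]
    ring
  · rw [inner_add_left, real_inner_smul_left, real_inner_smul_left, hvw, huw, cos_sub]
    field_simp

lemma sin_le_infDist_span_singleton {F : Type*} [NormedAddCommGroup F] [InnerProductSpace ℝ F]
    {v y : F} (hv : ‖v‖ = 1) (hy : ‖y‖ = 1) {χ : ℝ} (hvy : ⟪v, y⟫ = cos χ) :
    sin χ ≤ infDist y (ℝ ∙ v : Submodule ℝ F) := by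
  refine (le_infDist ⟨0, Submodule.zero_mem _⟩).2 fun p hp => ?_
  obtain ⟨k, rfl⟩ := Submodule.mem_span_singleton.1 hp
  refine le_of_sq_le_sq ?_ dist_nonneg
  rw [dist_eq_norm, norm_sub_sq_real, norm_smul, hv, hy, real_inner_smul_right, real_inner_comm,
    hvy, mul_one, norm_eq_abs, sq_abs]
  nlinarith [sin_sq_add_cos_sq χ, sq_nonneg (cos χ - k)]

lemma cos_sub_le_inner_of_coneX_subset {W : Submodule ℝ (EuclideanSpace ℝ (Fin n))} (ha : 0 < a)
    (haA : a ≤ A) (hA : A ≤ π / 2) (hv : ‖v‖ = 1) (hw : ‖w‖ = 1) (hwW : w ∈ W)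
    (h0 : 0 ≤ ⟪v, w⟫) (hsub : coneX 0 W (sin a) ⊆ coneX 0 (ℝ ∙ v) (sin A)) :
    cos (A - a) ≤ ⟪v, w⟫ := by
  by_contra! hlt
  have hlt1 : ⟪v, w⟫ < 1 := hlt.trans_le (cos_le_one _)
  set ψ := arccos ⟪v, w⟫
  have hψ : cos ψ = ⟪v, w⟫ := cos_arccos (by linarith) hlt1.le
  have hψ0 : 0 < ψ := arccos_pos.2 hlt1
  have hψπ : ψ ≤ π / 2 := arccos_le_pi_div_two.2 h0
  have hψA : A - a < ψ := by
    by_contra! hle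
    exact hlt.not_ge (hψ ▸ cos_le_cos_of_nonneg_of_le_pi hψ0.le (by linarith) hle)
  set χ := max A ψ
  have hχπ : χ ≤ π / 2 := max_le hA hψπ
  have hχψ : 0 ≤ χ - ψ := sub_nonneg.2 (le_max_right _ _)
  have hχa : χ - ψ < a := sub_lt_iff_lt_add.2 (max_lt (by linarith) (by linarith))
  obtain ⟨y, hy, hvy, hyw⟩ :=
    exists_inner_eq_cos hv hw hψ.symm (sin_pos_of_pos_of_lt_pi hψ0 (by linarith)).ne' χ
  have hangle : angle y w = χ - ψ := by
    rw [angle, hy, hw, hyw, mul_one, div_one, arccos_cos hχψ (by linarith)]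
  have hmem : y ∈ coneX 0 W (sin a) := by
    rw [coneX, mem_ofPred_eq, sub_zero]
    exact infDist_lt_sin_mul_norm (norm_ne_zero_iff.1 (by simp [hy])) hwW
      (norm_ne_zero_iff.1 (by simp [hw])) (by linarith) (hangle ▸ hχa)
  have hfar := hsub hmem
  rw [coneX, mem_ofPred_eq, sub_zero, hy, mul_one] at hfar
  have hsin : sin A ≤ sin χ :=
    sin_le_sin_of_le_of_le_pi_div_two (by linarith) hχπ (le_max_left _ _)
  linarith [sin_le_infDist_span_singleton hv hy hvy]

lemma mem_doubleCone_of_coneX_subset {W : Submodule ℝ (EuclideanSpace ℝ (Fin n))} (ha : 0 < a)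
    (haA : a ≤ A) (hA : A ≤ π / 2) (hv : v ≠ 0) (hw : ‖w‖ = 1) (hwW : w ∈ W)
    (hsub : coneX 0 W (sin a) ⊆ coneX 0 (ℝ ∙ v) (sin A)) : w ∈ doubleCone v (A - a) := by
  have hunit : ‖‖v‖⁻¹ • v‖ = 1 := norm_smul_inv_norm (𝕜 := ℝ) hv
  have hne : ‖v‖⁻¹ ≠ 0 := inv_ne_zero (norm_ne_zero_iff.2 hv)
  rw [← Submodule.span_singleton_smul_eq hne.isUnit] at hsub
  rw [← doubleCone_smul hne, mem_doubleCone_of_norm_eq_one hunit, hw, mul_one]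
  rcases le_total 0 ⟪‖v‖⁻¹ • v, w⟫ with h0 | h0
  · rw [abs_of_nonneg h0]
    exact cos_sub_le_inner_of_coneX_subset ha haA hA hunit hw hwW h0 hsub
  · rw [abs_of_nonpos h0, ← inner_neg_right]
    exact cos_sub_le_inner_of_coneX_subset ha haA hA hunit (by rwa [norm_neg]) (W.neg_mem hwW)
      (by rwa [inner_neg_right, neg_nonneg]) hsub

variable {K : ℕ} {α : ℝ} {P : Measure (EuclideanSpace ℝ (Fin n))} [IsProbabilityMeasure P]
  {g : ℝ → ℝ}

lemma IsCapFunction.one_le_mul_of_hasConeNet (hg : IsCapFunction P g) (hK : HasConeNet n 1 K α)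
    (hα0 : 0 < α) (hα1 : α ≤ 1) : 1 ≤ K * g (arcsin α - arcsin (α / 2)) := by
  have ha : 0 < arcsin (α / 2) := arcsin_pos.2 (by linarith)
  have haA : arcsin (α / 2) ≤ arcsin α := monotone_arcsin (by linarith)
  have hA := arcsin_le_pi_div_two α
  obtain ⟨W, hW, hnet⟩ := hK
  have : ∀ j, Nontrivial (W j) := fun j =>
    Module.nontrivial_of_finrank_pos (R := ℝ) (by rw [hW j]; exact one_pos)
  choose w hw using fun j => exists_norm_eq (W j) zero_le_one
  have hcover : ({0}ᶜ : Set (EuclideanSpace ℝ (Fin n))) ⊆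
      ⋃ j, doubleCone (w j : EuclideanSpace ℝ (Fin n)) (arcsin α - arcsin (α / 2)) := by
    intro v hv
    obtain ⟨j, hj⟩ := hnet (ℝ ∙ v) (finrank_span_singleton hv)
    refine mem_iUnion.2 ⟨j, mem_doubleCone_comm.1 (mem_doubleCone_of_coneX_subset ha haA hA hv
      (hw j) (w j).2 ?_)⟩
    rw [sin_arcsin (by linarith) (by linarith), sin_arcsin (by linarith) hα1]
    exact hj 0
  calc (1 : ℝ) = P.real {0}ᶜ := by
        rw [probReal_compl_eq_one_sub (measurableSet_singleton 0), measureReal_def,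
          hg.measure_zero, ENNReal.toReal_zero, sub_zero]
    _ ≤ _ := (measureReal_mono hcover).trans (measureReal_iUnion_fintype_le _)
    _ = K * g (arcsin α - arcsin (α / 2)) := by
        rw [Finset.sum_congr rfl fun j _ => hg.measureReal_doubleCone (w j)
          (norm_ne_zero_iff.1 ((hw j).trans_ne one_ne_zero)) _ (by linarith) (by linarith),
          Finset.sum_const, Finset.card_fin, nsmul_eq_mul]

end NetOfLines

section AveragingOverLines

variable {n K q : ℕ} {β δ δ' r : ℝ} {x θ z : EuclideanSpace ℝ (Fin n)}
  {ℬ : Finset (EuclideanSpace ℝ (Fin n) × ℝ)} {B B' : EuclideanSpace ℝ (Fin n) × ℝ}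
  {P : Measure (EuclideanSpace ℝ (Fin n))} {g : ℝ → ℝ}

lemma AngularlySeparated.mem_doubleCone (h : AngularlySeparated β B B') (hβ : β ≤ π)
    (hz : TranslateMeets (ℝ ∙ θ) z B) (hz' : TranslateMeets (ℝ ∙ θ) z B') :
    θ ∈ doubleCone (B'.1 - B.1) β := by
  obtain ⟨⟨_, hw⟩, hwB⟩ := hz.exists_mem
  obtain ⟨⟨_, hw'⟩, hwB'⟩ := hz'.exists_mem
  obtain ⟨a, rfl⟩ := Submodule.mem_span_singleton.1 hw
  obtain ⟨a', rfl⟩ := Submodule.mem_span_singleton.1 hw'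
  obtain ⟨hne, hangle⟩ := h _ hwB _ hwB'
  rw [add_sub_add_right_eq_sub, ← sub_smul] at hne hangle
  rw [mem_doubleCone_comm, ← doubleCone_smul (left_ne_zero_of_smul hne)]
  exact (cos_mul_le_inner_of_angle_le hβ hangle).trans (le_abs_self _)

/-- Two balls are adjacent when the line through their centres makes an angle at most `β` with the
line spanned by `θ`. -/
def alignmentGraph (β : ℝ) (θ : EuclideanSpace ℝ (Fin n)) :
    SimpleGraph (EuclideanSpace ℝ (Fin n) × ℝ) where
  Adj B B' := B ≠ B' ∧ θ ∈ doubleCone (B'.1 - B.1) β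
  symm := ⟨fun B B' h => ⟨h.1.symm, by
    rw [← neg_sub, ← neg_one_smul ℝ, doubleCone_smul (by norm_num)]
    exact h.2⟩⟩
  loopless := ⟨fun _ h => h.1 rfl⟩

lemma alignmentGraph_adj :
    (alignmentGraph β θ).Adj B B' ↔ B ≠ B' ∧ θ ∈ doubleCone (B'.1 - B.1) β :=
  Iff.rfl

lemma IsRichFamily.not_cliqueFreeOn_alignmentGraph (h : IsRichFamily 1 K q β x r ℬ) (hβ : β ≤ π)
    (hq : 3 ≤ q) (hθ : θ ≠ 0) {I : Finset (EuclideanSpace ℝ (Fin n) × ℝ)} (hI : I ⊆ ℬ)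
    (hcard : ℬ.card ≤ K * I.card) : ¬ (alignmentGraph β θ).CliqueFreeOn I 3 := by
  obtain ⟨z, hz⟩ := h.exists_translate I hI hcard (ℝ ∙ θ) (finrank_span_singleton hθ)
  obtain ⟨T, hT, hTcard⟩ := Finset.exists_subset_card_eq (hq.trans hz)
  refine fun hfree => hfree (fun B hB => (Finset.mem_filter.1 (hT hB)).1)
    ⟨fun B hB B' hB' hne => ?_, hTcard⟩
  obtain ⟨hBI, hBz⟩ := Finset.mem_filter.1 (hT hB)
  obtain ⟨hBI', hBz'⟩ := Finset.mem_filter.1 (hT hB')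
  exact alignmentGraph_adj.2
    ⟨hne, (h.separated B (hI hBI) B' (hI hBI') hne).mem_doubleCone hβ hBz hBz'⟩

variable [IsProbabilityMeasure P]

lemma IsCapFunction.exists_sum_degreeIn_le (hg : IsCapFunction P g)
    (h : IsRichFamily 1 K q β x r ℬ) (hβ0 : 0 ≤ β) (hβ : β < π / 2) :
    ∃ θ : EuclideanSpace ℝ (Fin n), θ ≠ 0 ∧
      ∑ B ∈ ℬ, (degreeIn (alignmentGraph β θ) ℬ B : ℝ) ≤ ℬ.offDiag.card * g β := by
  have hmeas : ∀ p ∈ ℬ.offDiag, MeasurableSet (doubleCone (p.2.1 - p.1.1) β) :=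
    fun _ _ => measurableSet_doubleCone
  obtain ⟨θ, hθ, hle⟩ := exists_notMem_null_le_integral (integrable_card_filter_mem hmeas)
    hg.measure_zero
  refine ⟨θ, hθ, ?_⟩
  have hmass : ∀ p ∈ ℬ.offDiag, P.real (doubleCone (p.2.1 - p.1.1) β) = g β := by
    intro p hp
    obtain ⟨hB, hB', hne⟩ := Finset.mem_offDiag.1 hp
    exact hg.measureReal_doubleCone _ (h.separated _ hB _ hB' hne
      _ (mem_closedBall_self (h.radius_pos _ hB).le)
      _ (mem_closedBall_self (h.radius_pos _ hB').le)).1 β hβ0 hβ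
  rw [integral_card_filter_mem hmeas, Finset.sum_congr rfl hmass, Finset.sum_const,
    nsmul_eq_mul] at hle
  rw [← Nat.cast_sum, sum_degreeIn]
  refine le_trans (le_of_eq ?_) hle
  congr 2
  exact Finset.filter_congr fun p hp =>
    alignmentGraph_adj.trans (and_iff_right (Finset.mem_offDiag.1 hp).2.2)

theorem IsCapFunction.lt_card_mul (hg : IsCapFunction P g) (h : IsRichFamily 1 K q β x r ℬ)
    (hn : 1 ≤ n) (hβ0 : 0 ≤ β) (hβ : β < π / 2) (hK : 2 ≤ K) (hq : 3 ≤ q) :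
    2 * K - 1 < ℬ.card * g β := by
  by_contra! hle
  have hK' : (2 : ℝ) ≤ K := by exact_mod_cast hK
  obtain ⟨θ, hθ, hdeg⟩ := hg.exists_sum_degreeIn_le h hβ0 hβ
  have hone : (1 : ℝ) ≤ ℬ.card := by exact_mod_cast (h.nonempty hn (by omega)).card_pos
  have hsum : ∑ B ∈ ℬ, (degreeIn (alignmentGraph β θ) ℬ B : ℝ) ≤ ℬ.card * (2 * K - 1) :=
    calc ∑ B ∈ ℬ, (degreeIn (alignmentGraph β θ) ℬ B : ℝ) ≤ ℬ.offDiag.card * g β := hdeg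
      _ = (ℬ.card - 1) * (ℬ.card * g β) := by
          rw [Finset.offDiag_card, Nat.cast_sub (Nat.le_mul_self _), Nat.cast_mul]
          ring
      _ ≤ (ℬ.card - 1) * (2 * K - 1) := mul_le_mul_of_nonneg_left hle (by linarith)
      _ ≤ ℬ.card * (2 * K - 1) := mul_le_mul_of_nonneg_right (by linarith) (by linarith)
  obtain ⟨I, hI, hfree, hcard⟩ := exists_cliqueFreeOn_of_sum_degreeIn_le (k := 2) (x := 2 * K)
    one_le_two (by linarith) (by push_cast; nlinarith) hsum
  have hcard' : ℬ.card ≤ K * I.card := by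
    push_cast [mul_assoc] at hcard
    exact_mod_cast le_of_mul_le_mul_left hcard two_pos
  exact h.not_cliqueFreeOn_alignmentGraph (by linarith [pi_pos]) hq hθ hI hcard' hfree

lemma IsCapFunction.two_le_card_mul_sub (hg : IsCapFunction P g) (h : IsRichFamily 1 K q β x r ℬ)
    (hn : 1 ≤ n) (hβ0 : 0 < β) (hβδ : β < δ) (hδ : δ < δ') (hδ' : δ' ≤ π / 2)
    (hβK : 2 * β ≤ (2 * K - 1) * (δ' - δ)) (hK : 2 ≤ K) (hq : 3 ≤ q) :
    2 ≤ ℬ.card * (g δ' - g δ) := by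
  have hslope : g β / β ≤ (g δ' - g δ) / (δ' - δ) := by
    have h0 := hg.convexOn.slope_mono_adjacent (x := 0) (z := δ) ⟨le_rfl, by linarith⟩
      ⟨by linarith, by linarith⟩ hβ0 hβδ
    rw [hg.apply_zero, sub_zero, sub_zero] at h0
    exact h0.trans (hg.convexOn.slope_mono_adjacent ⟨hβ0.le, by linarith⟩
      ⟨by linarith, hδ'⟩ hβδ hδ)
  rw [div_le_div_iff₀ hβ0 (by linarith)] at hslope
  refine le_of_mul_le_mul_right ?_ hβ0
  calc 2 * β ≤ (2 * K - 1) * (δ' - δ) := hβK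
    _ ≤ ℬ.card * g β * (δ' - δ) := mul_le_mul_of_nonneg_right
        (hg.lt_card_mul h hn hβ0.le (by linarith) hK hq).le (by linarith)
    _ = ℬ.card * (g β * (δ' - δ)) := mul_assoc _ _ _
    _ ≤ ℬ.card * ((g δ' - g δ) * β) := by gcongr
    _ = ℬ.card * (g δ' - g δ) * β := (mul_assoc _ _ _).symm

theorem IsCapFunction.exists_three_le_card (hg : IsCapFunction P g)
    (h : IsRichFamily 1 K q β x r ℬ) (hn : 1 ≤ n) (hβ0 : 0 < β) (hβδ : β < δ) (hδ : δ < δ')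
    (hδ' : δ' < π / 2) (hβK : 2 * β ≤ (2 * K - 1) * (δ' - δ)) (hK : 2 ≤ K) (hq : 3 ≤ q)
    (hgδ : 1 ≤ K * g δ) {v : EuclideanSpace ℝ (Fin n) × ℝ → EuclideanSpace ℝ (Fin n)}
    (hv : ∀ B ∈ ℬ, ‖v B‖ = 1) :
    ∃ ϑ : EuclideanSpace ℝ (Fin n), ‖ϑ‖ = 1 ∧
      ∀ F : Finset (EuclideanSpace ℝ (Fin n) × ℝ), F.card ≤ 2 → ∃ z,
        3 ≤ (ℬ.filter fun B => B ∉ F ∧ cos δ' ≤ |⟪ϑ, v B⟫| ∧ TranslateMeets (ℝ ∙ ϑ) z B).card := by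
  have hmeas : ∀ B ∈ ℬ, MeasurableSet (doubleCone (v B) δ') := fun _ _ => measurableSet_doubleCone
  obtain ⟨u, hu, hle⟩ := exists_notMem_null_integral_le (integrable_card_filter_mem hmeas)
    hg.measure_zero
  rw [integral_card_filter_mem hmeas, Finset.sum_congr rfl fun B hB => hg.measureReal_doubleCone
    (v B) (norm_ne_zero_iff.1 ((hv B hB).trans_ne one_ne_zero)) δ' (by linarith) hδ',
    Finset.sum_const, nsmul_eq_mul] at hle
  set D := ℬ.filter fun B => u ∈ doubleCone (v B) δ'
  have hϑ : ‖‖u‖⁻¹ • u‖ = 1 := norm_smul_inv_norm (𝕜 := ℝ) hu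
  refine ⟨‖u‖⁻¹ • u, hϑ, fun F hF => ?_⟩
  have hgain := hg.two_le_card_mul_sub h hn hβ0 hβδ hδ hδ'.le hβK hK hq
  have hsdiff : (D.card : ℝ) ≤ (D \ F).card + 2 := by
    exact_mod_cast Finset.card_le_card_sdiff_add_card.trans (add_le_add_right hF _)
  have hcard : ℬ.card ≤ K * (D \ F).card := by
    have : (ℬ.card : ℝ) ≤ K * (D \ F).card :=
      calc (ℬ.card : ℝ) ≤ ℬ.card * (K * g δ) := le_mul_of_one_le_right (by positivity) hgδ
        _ = K * (ℬ.card * g δ) := by ring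
        _ ≤ K * (D \ F).card := by gcongr; linarith
    exact_mod_cast this
  obtain ⟨z, hz⟩ := h.exists_translate _ (Finset.sdiff_subset.trans (Finset.filter_subset _ _))
    hcard (ℝ ∙ ‖u‖⁻¹ • u) (finrank_span_singleton (norm_ne_zero_iff.1 (hϑ.trans_ne one_ne_zero)))
  refine ⟨z, (hq.trans hz).trans (Finset.card_le_card fun B hB => ?_)⟩
  obtain ⟨hBD, hBz⟩ := Finset.mem_filter.1 hB
  obtain ⟨hBD, hBF⟩ := Finset.mem_sdiff.1 hBD
  obtain ⟨hBℬ, hBu⟩ := Finset.mem_filter.1 hBD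
  refine Finset.mem_filter.2 ⟨hBℬ, hBF, ?_, hBz⟩
  rw [mem_doubleCone_comm, ← doubleCone_smul (inv_ne_zero (norm_ne_zero_iff.2 hu)),
    mem_doubleCone_of_norm_eq_one hϑ, hv B hBℬ, mul_one] at hBu
  exact hBu

end AveragingOverLines

section NetCardinality

variable {n K : ℕ} {α : ℝ} {P : Measure (EuclideanSpace ℝ (Fin n))} {g : ℝ → ℝ}

lemma IsCapFunction.pi_div_two_mul_le [IsProbabilityMeasure P] (hg : IsCapFunction P g) (hn : 0 < n)
    {δ : ℝ} (hδ0 : 0 < δ) (hδ : δ < π / 2) : π / 2 * g δ ≤ δ := by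
  refine le_of_tendsto (((continuous_mul_const (g δ)).tendsto (π / 2)).mono_left
    (nhdsWithin_le_nhds (s := Iio (π / 2)))) ?_
  filter_upwards [Ioo_mem_nhdsLT hδ] with ψ ⟨hδψ, hψ⟩
  have hψ0 : 0 < ψ := hδ0.trans hδψ
  have hone : g ψ ≤ 1 := by
    rw [← hg.measureReal_doubleCone (EuclideanSpace.single ⟨0, hn⟩ 1) (by simp) ψ hψ0.le hψ]
    exact measureReal_le_one
  have hsecant := hg.convexOn.secant_mono (a := 0) ⟨le_rfl, by linarith⟩ ⟨hδ0.le, hδ.le⟩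
    ⟨hψ0.le, hψ.le⟩ hδ0.ne' hψ0.ne' hδψ.le
  simp only [hg.apply_zero, sub_zero] at hsecant
  rw [div_le_div_iff₀ hδ0 hψ0] at hsecant
  nlinarith

lemma HasConeNet.three_div_two_le_mul (hK : HasConeNet n 1 K α) (hn : 2 ≤ n) (hα0 : 0 < α)
    (hα1 : α ≤ 1) : 3 / 2 ≤ K * α := by
  obtain ⟨P, g, hP, hg⟩ := exists_isCapFunction hn
  have ha : 0 < arcsin (α / 2) := arcsin_pos.2 (by linarith)
  have hdouble := two_mul_arcsin_le (x := α / 2) (by linarith) (by linarith)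
  have htriple := arcsin_two_mul_le (x := α / 2) (by linarith) (by linarith)
  rw [mul_div_cancel₀ α two_ne_zero] at hdouble htriple
  have hlinear := arcsin_le_pi_div_three_mul (x := α / 2) (by linarith) (by linarith)
  have hcap := hg.pi_div_two_mul_le (by omega) (δ := arcsin α - arcsin (α / 2)) (by linarith)
    (by linarith [arcsin_le_pi_div_two α])
  have hgα : g (arcsin α - arcsin (α / 2)) ≤ 2 / 3 * α := by nlinarith [pi_pos]
  have := (hg.one_le_mul_of_hasConeNet hK hα0 hα1).trans
    (mul_le_mul_of_nonneg_left hgα K.cast_nonneg)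
  linarith

lemma HasConeNet.two_le (hK : HasConeNet n 1 K α) (hn : 2 ≤ n) (hα0 : 0 < α) (hα1 : α ≤ 1) :
    2 ≤ K := by
  have hKα := hK.three_div_two_le_mul hn hα0 hα1
  have : (1 : ℝ) < K := by nlinarith [K.cast_nonneg (α := ℝ)]
  exact_mod_cast this

lemma HasConeNet.two_mul_arcsin_lt (hK : HasConeNet n 1 K α) (hn : 2 ≤ n) (hα0 : 0 < α)
    (hα1 : α ≤ 1) {t : ℝ} (ht : 2 ≤ t) :
    2 * arcsin (1 / (2 * t)) < (2 * K - 1) * arcsin (α / (2 * t)) := by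
  have hKα := hK.three_div_two_le_mul hn hα0 hα1
  have hK2 : (2 : ℝ) ≤ K := by exact_mod_cast hK.two_le hn hα0 hα1
  have hnet : 2.25 ≤ (2 * K - 1) * α := by
    rcases le_total α 0.75 with _ | _ <;> nlinarith
  calc 2 * arcsin (1 / (2 * t))
    _ ≤ 2 * (1.1 * (1 / (2 * t))) := by
      gcongr
      refine arcsin_le_mul_of_le_one_div_four (by positivity) ?_
      exact one_div_le_one_div_of_le four_pos (by linarith)
    _ < 2.25 * (1 / (2 * t)) := by
      rw [← mul_assoc]
      gcongr
      norm_num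
    _ ≤ (2 * K - 1) * α * (1 / (2 * t)) := by gcongr
    _ = (2 * K - 1) * (α / (2 * t)) := by ring
    _ ≤ (2 * K - 1) * arcsin (α / (2 * t)) := by
      gcongr
      · linarith
      · exact self_le_arcsin (by positivity) (div_le_one_of_le₀ (by linarith) (by linarith))

end NetCardinality

section Conclusion

variable {n d K q : ℕ} {α β c c' κ : ℝ} {μ : Measure (EuclideanSpace ℝ (Fin n))} [IsFiniteMeasure μ]

lemma IsSparseScale.card_mul_le_one {x : EuclideanSpace ℝ (Fin n)} {r : ℝ}
    {ℬ : Finset (EuclideanSpace ℝ (Fin n) × ℝ)} {A : Set (EuclideanSpace ℝ (Fin n))}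
    (h : IsSparseScale μ d K q α β c c' κ x r ℬ A) : ℬ.card * c ≤ 1 := by
  refine le_of_mul_le_mul_right ?_ h.measure_pos
  calc ℬ.card * c * μ.real (closedBall x (3 * r))
    _ = ℬ.card • (c * μ.real (closedBall x (3 * r))) := by rw [nsmul_eq_mul, mul_assoc]
    _ ≤ ∑ B ∈ ℬ, μ.real (closedBall B.1 B.2) :=
      Finset.card_nsmul_le_sum _ _ _ fun B hB => (h.lt_measure B hB).le
    _ = μ.real (⋃ B ∈ ℬ, closedBall B.1 B.2) := (measureReal_biUnion_finset
      (fun B hB B' hB' hne => h.disjoint hB hB' hne) fun _ _ => measurableSet_closedBall).symm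
    _ ≤ 1 * μ.real (closedBall x (3 * r)) := by
      rw [one_mul]
      exact measureReal_mono (iUnion₂_subset fun B hB => h.ball_subset hB)

lemma IsSparseScale.lt_one {x : EuclideanSpace ℝ (Fin n)} {r : ℝ}
    {ℬ : Finset (EuclideanSpace ℝ (Fin n) × ℝ)} {A : Set (EuclideanSpace ℝ (Fin n))}
    (h : IsSparseScale μ d K q α β c c' κ x r ℬ A) (hd : d ≤ n) (hq : 0 < q) : c < 1 := by
  obtain ⟨B, hB⟩ := h.nonempty hd hq
  refine lt_of_mul_lt_mul_right ?_ h.measure_pos.le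
  rw [one_mul]
  exact (h.lt_measure B hB).trans_le (measureReal_mono (h.ball_subset hB))

theorem exists_lt_forall_not_isSparseScale_of_line (hn : 2 ≤ n) (hα0 : 0 < α) (hα1 : α ≤ 1)
    (hβ0 : 0 < β) (hsin : sin β ≤ 1 / 4) (hK : HasConeNet n 1 K α)
    (hβ : 2 * β < (2 * K - 1) * (arcsin (α / 2) - 2 * β)) (hq : 3 ≤ q)
    (hnull : ∀ y s, μ (sphere y s) = 0) (hc : 0 < c) :
    ∃ c' > c, ∀ x r ℬ A, ¬ IsSparseScale μ 1 K q α β c c' c x r ℬ A := by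
  obtain ⟨P, g, hP, hg⟩ := exists_isCapFunction hn
  have hK2 := hK.two_le hn hα0 hα1
  have hK1 : 0 < 2 * (K : ℝ) - 1 := by linarith [show (2 : ℝ) ≤ K by exact_mod_cast hK2]
  set w := 2 * β / (2 * K - 1)
  have hw0 : 0 < w := by positivity
  have hw : 2 * β < arcsin (α / 2) - w := by linarith [(div_lt_iff₀' hK1).2 hβ]
  have hα := two_mul_arcsin_le (x := α / 2) (by linarith) (by linarith)
  rw [mul_div_cancel₀ α two_ne_zero] at hα
  have hαπ := arcsin_le_pi_div_two α
  obtain ⟨ζ, hβζ, hζ⟩ := exists_between hw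
  have hcos : 0 < cos ζ := cos_pos_of_mem_Ioo ⟨by linarith, by linarith⟩
  have hτ : 0 < cos (2 * β) / cos ζ - 1 := sub_pos.2 <| (one_lt_div hcos).2 <|
    cos_lt_cos_of_nonneg_of_le_pi (by linarith) (by linarith) hβζ
  obtain ⟨N, hN⟩ := exists_nat_ge (1 / c)
  obtain ⟨J, hJ⟩ := exists_nat_gt (N / (cos (2 * β) / cos ζ - 1))
  have hgain := mul_pos hc (tailLevel_pos hc (J * (N ^ 2 + 1)))
  refine ⟨c + c * tailLevel c (J * (N ^ 2 + 1)) / 2, by linarith, fun x r ℬ A h => ?_⟩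
  have hcard : ℬ.card ≤ N := by exact_mod_cast ((le_div_iff₀ hc).2 h.card_mul_le_one).trans hN
  obtain ⟨v, hv, hfew⟩ := h.exists_axis hn hα0 hα1 hβ0.le hsin hβζ hζ (by linarith)
    (by rw [add_sub_cancel, div_mul_cancel₀ _ hcos.ne']) hnull hc
    (h.lt_one (by omega) (by omega)) hcard ((div_lt_iff₀ hτ).1 hJ) le_rfl
  obtain ⟨ϑ, hϑ, hmany⟩ := hg.exists_three_le_card h.toIsRichFamily (by omega) hβ0
    (δ := arcsin α - arcsin (α / 2)) (δ' := arcsin α - (arcsin (α / 2) - w)) (by linarith)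
    (by linarith) (by linarith)
    (by rw [sub_sub_sub_cancel_left, sub_sub_cancel, mul_div_cancel₀ _ hK1.ne']) hK2 hq
    (hg.one_le_mul_of_hasConeNet hK hα0 hα1) hv
  obtain ⟨F, hF, hlt⟩ := hfew ϑ hϑ
  obtain ⟨z, hz⟩ := hmany F hF
  exact (hlt z).not_ge hz

variable {t : ℝ}

theorem exists_lt_ae_le_limsup_coneDensity (hd : 1 ≤ d) (hdn : d ≤ n) (hα0 : 0 < α) (hα1 : α ≤ 1)
    (ht1 : 1 ≤ t) (ht : ConeSeparation α t) (hq : IsErdosFurediConstant d (α / (2 * t)) q)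
    (hK : HasConeNet n d K α) (hc : 0 < c)
    (hμ : ∀ᵐ x ∂μ, ∀ R > (0 : ℝ), ∃ r : ℝ, 0 < r ∧ r < R ∧
      ∃ ℬ, IsRichFamily d K q (arcsin (1 / (2 * t))) x r ℬ ∧
        ∀ B ∈ ℬ, ENNReal.ofReal c * μ (closedBall x (3 * r)) < μ (closedBall B.1 B.2)) :
    ∃ c' > c, ∀ᵐ x ∂μ, ENNReal.ofReal c' ≤ limsup (coneDensity μ d α x) (nhdsWithin 0 (Ioi 0)) := by
  have hT := arcsin_add_arcsin_le_of_coneSeparation hα0 ht1 ht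
  have ht2 := two_lt_of_arcsin_add_arcsin_le hα0 hα1 ht1 hT
  have hσβ := arcsin_add_two_mul_arcsin_le hα0 hα1 ht1 hT
  have hs : 0 < α / (2 * t) := by positivity
  have ht4 : 1 / (2 * t) ≤ 1 / 4 := one_div_le_one_div_of_le four_pos (by linarith)
  have hq3 := hq.three_le hd hs
  have hK0 : 0 < K := by
    obtain ⟨V, hV⟩ := exists_submodule_finrank_eq hdn
    obtain ⟨W, -, hW⟩ := hK
    exact (hW V hV).choose.pos
  obtain ⟨κ, hκ, c', hc', hscale⟩ : ∃ κ > 0, ∃ c' > c, ∀ x r ℬ A,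
      ¬ IsSparseScale μ d K q α (arcsin (1 / (2 * t))) c c' κ x r ℬ A := by
    rcases hd.lt_or_eq with hd | rfl
    · exact ⟨c, hc, 2 * c, by linarith, fun _ _ _ _ => not_isSparseScale_of_two_le hd hdn hα0 hα1 hs
        (arcsin_le_arcsin (by gcongr)) hσβ hq hK hc.le⟩
    have hβ6 := arcsin_le_pi_div_six (x := 1 / (2 * t)) (by linarith)
    have hnull := measure_sphere_eq_zero hdn fun y R =>
      measure_sphere_eq_zero_of_pos hc hK0 (by omega) hβ6 hμ y
    rcases hdn.lt_or_eq with hn | rfl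
    · obtain ⟨c', hc', hscale⟩ := exists_lt_forall_not_isSparseScale_of_line hn hα0 hα1
        (arcsin_pos.2 (by positivity))
        (by rwa [sin_arcsin (by linarith [show 0 < 1 / (2 * t) by positivity]) (by linarith)]) hK
        ((hK.two_mul_arcsin_lt hn hα0 hα1 ht2.le).trans_le
          (mul_le_mul_of_nonneg_left (by linarith) (by
            linarith [show (1 : ℝ) ≤ K by exact_mod_cast hK0]))) hq3 hnull hc
      exact ⟨c, hc, c', hc', hscale⟩
    · exact ⟨c / 8, by linarith, c + c / 8, by linarith, fun _ _ _ _ => not_isSparseScale_of_dim_one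
        hα0 (by linarith [pi_pos]) hK0 hq3 hc (by linarith) hnull⟩
  exact ⟨c', hc', ae_le_limsup_coneDensity hc.le (hc.le.trans hc'.le) hκ hμ hscale⟩

end Conclusion

end

theorem stmt12 (n m : ℕ) (hm : m < n) (α : ℝ) (hα0 : 0 < α) (hα1 : α ≤ 1)
    (t : ℝ) (q K : ℕ) (c : ℝ) (hc : 0 < c)
    -- `t = t(α/2)` is as in the cone-separation lemma:
    (ht1 : 1 ≤ t)
    (ht : ∀ (N : ℕ) (x₀ y₀ : EuclideanSpace ℝ (Fin N)) (r_x r_y : ℝ), 0 < r_x → 0 < r_y →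
      Disjoint (closedBall x₀ (t * r_x)) (closedBall y₀ (t * r_y)) →
      ∀ θ : EuclideanSpace ℝ (Fin N), ‖θ‖ = 1 →
        y₀ ∈ oneSidedCone x₀ θ ((α / 2) / t) →
        ∀ x ∈ closedBall x₀ r_x, closedBall y₀ r_y ⊆ oneSidedCone x θ (α / 2))
    -- `q = q(n-m, α/(2t))` is as in the Erdős–Füredi lemma:
    (hq : ∀ S : Finset (EuclideanSpace ℝ (Fin (n - m))), S.card = q →
      ∃ x₀ ∈ S, ∃ x₁ ∈ S, ∃ x₂ ∈ S, ∃ θ : EuclideanSpace ℝ (Fin (n - m)), ‖θ‖ = 1 ∧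
        x₁ ∈ oneSidedCone x₀ θ (α / (2 * t)) ∧ x₂ ∈ oneSidedCone x₀ (-θ) (α / (2 * t)))
    -- `K = K(n,m,α)` is as in the Grassmannian discretization:
    (hK : ∃ W : Fin K → Submodule ℝ (EuclideanSpace ℝ (Fin n)),
      (∀ j, Module.finrank ℝ (W j) = n - m) ∧
      ∀ V : Submodule ℝ (EuclideanSpace ℝ (Fin n)), Module.finrank ℝ V = n - m →
        ∃ j : Fin K, ∀ x, coneX x (W j) (α / 2) ⊆ coneX x V α)
    (μ : Measure (EuclideanSpace ℝ (Fin n))) [IsFiniteMeasure μ]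
    -- the hypothesis on the existence of collections of balls at arbitrarily small scales:
    (hμ : ∀ᵐ x ∂μ, ∀ R > (0 : ℝ), ∃ r : ℝ, 0 < r ∧ r < R ∧
      ∃ ℬ : Finset (EuclideanSpace ℝ (Fin n) × ℝ),
        (∀ B ∈ ℬ, 0 < B.2 ∧ closedBall B.1 B.2 ⊆ closedBall x r) ∧
        -- (1) the enlarged balls `2tB` are pairwise disjoint:
        (∀ B ∈ ℬ, ∀ B' ∈ ℬ, B ≠ B' →
          Disjoint (closedBall B.1 (2 * t * B.2)) (closedBall B'.1 (2 * t * B'.2))) ∧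
        -- (2) each ball carries a lot of measure:
        (∀ B ∈ ℬ, ENNReal.ofReal c * μ (closedBall x (3 * r)) < μ (closedBall B.1 B.2)) ∧
        -- (3) large subcollections are hit `q` times by translates of any `(n-m)`-plane:
        (∀ ℬ' ⊆ ℬ, ℬ.card ≤ K * ℬ'.card →
          ∀ V : Submodule ℝ (EuclideanSpace ℝ (Fin n)), Module.finrank ℝ V = n - m →
            ∃ z : EuclideanSpace ℝ (Fin n),
              q ≤ (ℬ'.filter (fun B =>
                (((fun w => w + z) '' (V : Set (EuclideanSpace ℝ (Fin n)))) ∩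
                  closedBall B.1 B.2).Nonempty)).card)) :
    ∀ᵐ x ∂μ, ENNReal.ofReal c <
      limsup (fun r : ℝ =>
        ⨅ (θ : sphere (0 : EuclideanSpace ℝ (Fin n)) 1)
          (V : Submodule ℝ (EuclideanSpace ℝ (Fin n)))
          (_ : Module.finrank ℝ V = n - m),
          μ ((closedBall x r ∩ coneX x V α) \ almostHalfSpace x θ α) / μ (closedBall x r))
        (nhdsWithin 0 (Set.Ioi 0)) := by
  have hrich : ∀ᵐ x ∂μ, ∀ R > (0 : ℝ), ∃ r : ℝ, 0 < r ∧ r < R ∧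
      ∃ ℬ, IsRichFamily (n - m) K q (Real.arcsin (1 / (2 * t))) x r ℬ ∧
        ∀ B ∈ ℬ, ENNReal.ofReal c * μ (closedBall x (3 * r)) < μ (closedBall B.1 B.2) := by
    filter_upwards [hμ] with x hx R hR
    obtain ⟨r, hr, hrR, ℬ, hsub, hdisj, hmass, hmeets⟩ := hx R hR
    exact ⟨r, hr, hrR, ℬ, ⟨fun B hB => (hsub B hB).1, fun B hB => (hsub B hB).2,
      fun B hB B' hB' hne => angularlySeparated_of_disjoint ht1 (hsub B hB).1 (hsub B' hB').1
        (hdisj B hB B' hB' hne), hmeets⟩, hmass⟩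
  obtain ⟨c', hc', hlimsup⟩ := exists_lt_ae_le_limsup_coneDensity (Nat.sub_pos_of_lt hm)
    (Nat.sub_le n m) hα0 hα1 ht1 ht hq hK hc hrich
  filter_upwards [hlimsup] with x hx
  exact ((ENNReal.ofReal_lt_ofReal_iff (hc.trans hc')).2 hc').trans_le hx
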